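/- arXiv:2307.05401 — 2 statements merged into one kernel-verified Lean document; each statement's English description precedes it below -/
import Mathlib

section
/- There exists ε_* ∈ (0,1), depending only on n and m, with the following property: for every ε ∈ (0, ε_*), every α ∈ (0, (n+2m)/(2m−n)], and every positive smooth function u on ℝⁿ such that for some c > 0 one has c^{−1}(1+|x|²)^{(2m−n)/2} ≤ u(x) ≤ c(1+|x|²)^{(2m−n)/2} for all x, and u(x) = γ ∫_{ℝⁿ} |x−y|^{2m−n} F_{ε,u}(y) dy for all x ∈ ℝⁿ, one has u(x) = (1−ε)^{−1/(α+1)} ((1+|x|²)/2)^{(2m−n)/2} for every x ∈ ℝⁿ. -/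
open MeasureTheory

/-- The nonlinearity `F_{ε,u}(x) := ε f(x)^{2m} u(x) +
f(x)^{(n+2m)/2 + α(n−2m)/2} u(x)^{−α}` with `f(x) = 2/(1+|x|²)`. -/
noncomputable def sphF (n m : ℕ) (ε α : ℝ) (u : EuclideanSpace ℝ (Fin n) → ℝ)
    (x : EuclideanSpace ℝ (Fin n)) : ℝ :=
  ε * (2 / (1 + ‖x‖ ^ 2)) ^ (2 * m) * u x +
    (2 / (1 + ‖x‖ ^ 2)) ^ (((n : ℝ) + 2 * m) / 2 + α * ((n : ℝ) - 2 * m) / 2) * u x ^ (-α)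

open MeasureTheory

namespace SphL

/-- conformal factor square root -/
noncomputable def sg {n : ℕ} (x : EuclideanSpace ℝ (Fin n)) : ℝ := √(2 / (1 + ‖x‖ ^ 2))

noncomputable def Gf (ε α t : ℝ) : ℝ := ε * t + t ^ (-α)

noncomputable def Ff (n p : ℕ) (ε α : ℝ) (u : EuclideanSpace ℝ (Fin n) → ℝ)
    (y : EuclideanSpace ℝ (Fin n)) : ℝ :=
  sg y ^ (2 * n + p) * Gf ε α (sg y ^ p * u y)

structure Sol (n p : ℕ) (γ ε α : ℝ) (u : EuclideanSpace ℝ (Fin n) → ℝ) : Prop where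
  cont : Continuous u
  bdd : ∃ c C : ℝ, 0 < c ∧ ∀ x, c ≤ sg x ^ p * u x ∧ sg x ^ p * u x ≤ C
  eq : ∀ x, u x = γ * ∫ y, ‖x - y‖ ^ p * Ff n p ε α u y

section kernel
variable {V : Type*} [NormedAddCommGroup V] [InnerProductSpace ℝ V]

noncomputable def kB (l : ℝ) (z Y : V) : ℝ := ‖l • z - Y‖
noncomputable def kA (l : ℝ) (z Y : V) : ℝ :=
  √(l ^ 2 - 2 * l * inner ℝ z Y + ‖z‖ ^ 2 * ‖Y‖ ^ 2)
noncomputable def kH (p : ℕ) (l : ℝ) (z Y : V) : ℝ :=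
  (‖Y‖ ^ 2 - l ^ 2) * ((∑ i ∈ Finset.range p, kB l z Y ^ i * kA l z Y ^ (p - 1 - i)) /
    (kA l z Y + kB l z Y))

lemma kB_nonneg (l : ℝ) (z Y : V) : 0 ≤ kB l z Y := norm_nonneg _
lemma kA_nonneg (l : ℝ) (z Y : V) : 0 ≤ kA l z Y := Real.sqrt_nonneg _

lemma kB_sq (l : ℝ) (z Y : V) :
    kB l z Y ^ 2 = l ^ 2 * ‖z‖ ^ 2 - 2 * l * inner ℝ z Y + ‖Y‖ ^ 2 := by
  unfold kB
  rw [@norm_sub_sq_real, norm_smul, real_inner_smul_left, mul_pow, Real.norm_eq_abs, sq_abs]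
  ring

lemma inner_bd (l : ℝ) (hl : 0 ≤ l) (z Y : V) : 2 * l * inner ℝ z Y ≤ 2 * l * (‖z‖ * ‖Y‖) :=
  mul_le_mul_of_nonneg_left (real_inner_le_norm z Y) (by positivity)

lemma inner_bd' (l : ℝ) (hl : 0 ≤ l) (z Y : V) : -(2 * l * (‖z‖ * ‖Y‖)) ≤ 2 * l * inner ℝ z Y := by
  have h := mul_le_mul_of_nonneg_left (neg_le_of_abs_le (abs_real_inner_le_norm z Y))
    (show 0 ≤ 2 * l by positivity)
  linarith

lemma kA_sq {l : ℝ} (hl : 0 ≤ l) (z Y : V) :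
    kA l z Y ^ 2 = l ^ 2 - 2 * l * inner ℝ z Y + ‖z‖ ^ 2 * ‖Y‖ ^ 2 := by
  unfold kA
  rw [Real.sq_sqrt]
  nlinarith [inner_bd l hl z Y, sq_nonneg (l - ‖z‖ * ‖Y‖)]

lemma kB_sq_sub {l : ℝ} (hl : 0 ≤ l) (z Y : V) :
    kB l z Y ^ 2 - kA l z Y ^ 2 = (1 - ‖z‖ ^ 2) * (‖Y‖ ^ 2 - l ^ 2) := by
  rw [kB_sq, kA_sq hl]; ring

lemma kH_mul (p : ℕ) {l : ℝ} (hl : 0 ≤ l) (z Y : V) :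
    kB l z Y ^ p - kA l z Y ^ p = (1 - ‖z‖ ^ 2) * kH p l z Y := by
  have hA := kA_nonneg l z Y
  have hB := kB_nonneg l z Y
  have h1 := kB_sq_sub hl z Y
  have h2 := (Commute.all (kB l z Y) (kA l z Y)).geom_sum₂_mul p
  unfold kH
  rw [← mul_assoc, ← h1, ← h2]
  set S := ∑ i ∈ Finset.range p, kB l z Y ^ i * kA l z Y ^ (p - 1 - i)
  rcases eq_or_ne (kA l z Y + kB l z Y) 0 with h | h
  · have : kA l z Y = 0 := by linarith
    have : kB l z Y = 0 := by linarith
    simp [*]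
  · field_simp; ring

lemma kB_le {l : ℝ} (hl : 0 ≤ l) {z : V} (hz : ‖z‖ ≤ 1) (Y : V) : kB l z Y ≤ l + ‖Y‖ := by
  unfold kB
  calc ‖l • z - Y‖ ≤ ‖l • z‖ + ‖Y‖ := norm_sub_le _ _
    _ ≤ _ := by
      rw [norm_smul, Real.norm_eq_abs, abs_of_nonneg hl]
      nlinarith

lemma kA_le {l : ℝ} (hl : 0 ≤ l) {z : V} (hz : ‖z‖ ≤ 1) (Y : V) : kA l z Y ≤ l + ‖Y‖ := by
  have h0 := norm_nonneg Y
  have h1 := norm_nonneg z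
  apply le_of_sq_le_sq _ (by positivity) |> fun h => h
  rw [kA_sq hl]
  have h3 : ‖z‖ * ‖Y‖ ≤ ‖Y‖ := by nlinarith
  have h4 : l * (‖z‖ * ‖Y‖) ≤ l * ‖Y‖ := mul_le_mul_of_nonneg_left h3 hl
  have h5 : (‖z‖ * ‖Y‖) ^ 2 ≤ ‖Y‖ ^ 2 := pow_le_pow_left₀ (by positivity) h3 2
  nlinarith [inner_bd' l hl z Y]

lemma kA_ge {l : ℝ} (hl : 0 ≤ l) (z Y : V) : l - ‖z‖ * ‖Y‖ ≤ kA l z Y := by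
  apply Real.le_sqrt_of_sq_le
  nlinarith [inner_bd l hl z Y]

lemma kB_ge {l : ℝ} (hl : 0 ≤ l) (z Y : V) : ‖Y‖ - l * ‖z‖ ≤ kB l z Y := by
  unfold kB
  have := norm_sub_norm_le Y (l • z)
  rw [norm_smul, Real.norm_eq_abs, abs_of_nonneg hl, norm_sub_rev] at this
  exact this

lemma kH_fac {l : ℝ} (hl : 0 ≤ l) {z : V} (hz : ‖z‖ ≤ 1) (Y : V) :
    |‖Y‖ ^ 2 - l ^ 2| ≤ (l + ‖Y‖) * (kA l z Y + kB l z Y) := by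
  have h0 := norm_nonneg Y
  have h1 := norm_nonneg z
  have hA := kA_nonneg l z Y
  have hB := kB_nonneg l z Y
  have e : ‖Y‖ ^ 2 - l ^ 2 = (l + ‖Y‖) * (‖Y‖ - l) := by ring
  rw [e, abs_mul, abs_of_nonneg (by positivity : 0 ≤ l + ‖Y‖)]
  apply mul_le_mul_of_nonneg_left _ (by positivity)
  have h3 := kA_ge hl z Y
  have h4 := kB_ge hl z Y
  rw [abs_le]; constructor <;> nlinarith

lemma kS_nonneg (p : ℕ) (l : ℝ) (z Y : V) :
    0 ≤ ∑ i ∈ Finset.range p, kB l z Y ^ i * kA l z Y ^ (p - 1 - i) :=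
  Finset.sum_nonneg fun _ _ => mul_nonneg (pow_nonneg (kB_nonneg _ _ _) _)
    (pow_nonneg (kA_nonneg _ _ _) _)

lemma kS_le (p : ℕ) {l : ℝ} (hl : 0 ≤ l) {z : V} (hz : ‖z‖ ≤ 1) (Y : V) :
    ∑ i ∈ Finset.range p, kB l z Y ^ i * kA l z Y ^ (p - 1 - i) ≤ p * (l + ‖Y‖) ^ (p - 1) := by
  have h0 := norm_nonneg Y
  have : ∀ i ∈ Finset.range p, kB l z Y ^ i * kA l z Y ^ (p - 1 - i) ≤ (l + ‖Y‖) ^ (p - 1) := by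
    intro i hi
    have hi' : i + (p - 1 - i) = p - 1 := by have := Finset.mem_range.1 hi; omega
    conv_rhs => rw [← hi', pow_add]
    exact mul_le_mul (pow_le_pow_left₀ (kB_nonneg _ _ _) (kB_le hl hz Y) _)
      (pow_le_pow_left₀ (kA_nonneg _ _ _) (kA_le hl hz Y) _)
      (pow_nonneg (kA_nonneg _ _ _) _) (by positivity)
  simpa using Finset.sum_le_sum this

lemma kH_abs_le {p : ℕ} (hp : 1 ≤ p) {l : ℝ} (hl : 0 ≤ l) {z : V} (hz : ‖z‖ ≤ 1) (Y : V) :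
    |kH p l z Y| ≤ p * (l + ‖Y‖) ^ p := by
  have h0 := norm_nonneg Y
  have hA := kA_nonneg l z Y
  have hB := kB_nonneg l z Y
  have hS := kS_nonneg p l z Y
  have hS2 := kS_le p hl hz Y
  have hf := kH_fac hl hz Y
  unfold kH
  rw [abs_mul, abs_div, abs_of_nonneg hS, abs_of_nonneg (add_nonneg hA hB)]
  rcases eq_or_lt_of_le (add_nonneg hA hB) with h | h
  · rw [← h]; simp; positivity
  · rw [← mul_div_assoc, div_le_iff₀ h]
    calc _ ≤ ((l + ‖Y‖) * (kA l z Y + kB l z Y)) * (p * (l + ‖Y‖) ^ (p - 1)) :=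
          mul_le_mul hf hS2 hS (by positivity)
      _ = p * ((l + ‖Y‖) ^ (p - 1) * (l + ‖Y‖)) * (kA l z Y + kB l z Y) := by ring
      _ = _ := by rw [← pow_succ, Nat.sub_add_cancel hp]

/-- positivity of the sum/quotient if A > 0 or B > 0 -/
lemma kT_pos {p : ℕ} (hp : 1 ≤ p) {l : ℝ} {z Y : V} (h : 0 < kA l z Y ∨ 0 < kB l z Y) :
    0 < (∑ i ∈ Finset.range p, kB l z Y ^ i * kA l z Y ^ (p - 1 - i)) /
      (kA l z Y + kB l z Y) := by
  have hA := kA_nonneg l z Y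
  have hB := kB_nonneg l z Y
  apply div_pos _ (by rcases h with h | h <;> linarith)
  have hnn : ∀ i ∈ Finset.range p, 0 ≤ kB l z Y ^ i * kA l z Y ^ (p - 1 - i) := fun i _ =>
    mul_nonneg (pow_nonneg hB _) (pow_nonneg hA _)
  rcases h with h | h
  · refine lt_of_lt_of_le ?_ (Finset.single_le_sum hnn (Finset.mem_range.2 (show 0 < p by omega)))
    simp; positivity
  · refine lt_of_lt_of_le ?_ (Finset.single_le_sum hnn (Finset.mem_range.2
      (show p - 1 < p by omega)))
    simp; positivity

lemma kH_neg {p : ℕ} (hp : 1 ≤ p) {l : ℝ} (hl : 0 ≤ l) {z Y : V} (hz : ‖z‖ ≤ 1) (hY : ‖Y‖ < l) :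
    kH p l z Y < 0 := by
  have h0 := norm_nonneg Y
  unfold kH
  apply mul_neg_of_neg_of_pos (by nlinarith)
  apply kT_pos hp
  left
  have := kA_ge hl z Y
  nlinarith

lemma kH_zero_pos {p : ℕ} (hp : 1 ≤ p) {z Y : V} (hY : Y ≠ 0) :
    0 < kH p 0 z Y := by
  have h0 := norm_pos_iff.2 hY
  unfold kH
  apply mul_pos (by nlinarith)
  apply kT_pos hp
  right
  simpa [kB] using hY

lemma kB_inv {l : ℝ} (hl : 0 ≤ l) (z : V) {Y : V} (hY : Y ≠ 0) :
    kB l z ((l / ‖Y‖) ^ 2 • Y) = (l / ‖Y‖) * kA l z Y := by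
  have h0 := norm_pos_iff.2 hY
  apply (sq_eq_sq₀ (kB_nonneg _ _ _) (mul_nonneg (by positivity) (kA_nonneg _ _ _))).1
  rw [kB_sq, mul_pow, kA_sq hl, norm_smul, real_inner_smul_right, Real.norm_eq_abs, abs_of_nonneg (by positivity)]
  field_simp
  ring

lemma kA_inv {l : ℝ} (hl : 0 ≤ l) (z : V) {Y : V} (hY : Y ≠ 0) :
    kA l z ((l / ‖Y‖) ^ 2 • Y) = (l / ‖Y‖) * kB l z Y := by
  have h0 := norm_pos_iff.2 hY
  apply (sq_eq_sq₀ (kA_nonneg _ _ _) (mul_nonneg (by positivity) (kB_nonneg _ _ _))).1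
  rw [kA_sq hl, mul_pow, kB_sq, norm_smul, real_inner_smul_right, Real.norm_eq_abs, abs_of_nonneg (by positivity)]
  field_simp
  ring

lemma kH_inv {p : ℕ} (hp : 1 ≤ p) {l : ℝ} (hl : 0 < l) (z : V) {Y : V} (hY : Y ≠ 0) :
    kH p l z ((l / ‖Y‖) ^ 2 • Y) = - ((l / ‖Y‖) ^ p * kH p l z Y) := by
  have h0 := norm_pos_iff.2 hY
  unfold kH
  rw [kB_inv hl.le z hY, kA_inv hl.le z hY]
  have hS : ∑ i ∈ Finset.range p, (l / ‖Y‖ * kA l z Y) ^ i * (l / ‖Y‖ * kB l z Y) ^ (p - 1 - i)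
      = (l / ‖Y‖) ^ (p - 1) * ∑ i ∈ Finset.range p, kB l z Y ^ i * kA l z Y ^ (p - 1 - i) := by
    rw [Finset.mul_sum, ← Finset.sum_range_reflect]
    apply Finset.sum_congr rfl
    intro i hi
    have hi := Finset.mem_range.1 hi
    have e : p - 1 - (p - 1 - i) = i := by omega
    rw [e, mul_pow, mul_pow]
    have e2 : (l / ‖Y‖) ^ (p - 1) = (l / ‖Y‖) ^ (p - 1 - i) * (l / ‖Y‖) ^ i := by
      rw [← pow_add]; congr 1; omega
    rw [e2]; ring
  rw [hS, norm_smul, Real.norm_eq_abs, abs_of_nonneg (by positivity)]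
  set S := ∑ i ∈ Finset.range p, kB l z Y ^ i * kA l z Y ^ (p - 1 - i)
  obtain ⟨k, rfl⟩ : ∃ k, p = k + 1 := ⟨p - 1, by omega⟩
  rcases eq_or_ne (kA l z Y + kB l z Y) 0 with h | h
  · rw [← mul_add, add_comm (kB l z Y), h]; simp
  · have h' : kB l z Y + kA l z Y ≠ 0 := by rwa [add_comm]
    rw [← mul_add]
    simp only [Nat.add_sub_cancel]
    rw [pow_succ (l / ‖Y‖) k]
    set t := (l / ‖Y‖) ^ k
    field_simp
    ring

lemma kH_continuousAt (p : ℕ) (q : ℝ × V) {Y : V} (hY : Y ≠ q.1 • q.2) :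
    ContinuousAt (fun q : ℝ × V => kH p q.1 q.2 Y) q := by
  have hB : 0 < kB q.1 q.2 Y := by
    unfold kB; rw [norm_pos_iff]; exact sub_ne_zero.2 hY.symm
  have hA := kA_nonneg q.1 q.2 Y
  have cA : Continuous (fun q : ℝ × V => kA q.1 q.2 Y) := by unfold kA; fun_prop
  have cB : Continuous (fun q : ℝ × V => kB q.1 q.2 Y) := by unfold kB; fun_prop
  unfold kH
  apply ContinuousAt.mul (by fun_prop)
  apply ContinuousAt.div
  · exact (continuous_finsetSum _ fun i _ => (cB.pow _).mul (cA.pow _)).continuousAt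
  · exact (cA.add cB).continuousAt
  · linarith

lemma kH_measurable [MeasurableSpace V] [BorelSpace V] (p : ℕ) (l : ℝ) (z c : V) :
    Measurable (fun y : V => kH p l z (y - c)) := by
  have cA : Continuous (fun y : V => kA l z (y - c)) := by unfold kA; fun_prop
  have cB : Continuous (fun y : V => kB l z (y - c)) := by unfold kB; fun_prop
  have cS : Continuous (fun y : V => ∑ i ∈ Finset.range p, kB l z (y - c) ^ i *
      kA l z (y - c) ^ (p - 1 - i)) :=
    continuous_finsetSum _ fun i _ => (cB.pow _).mul (cA.pow _)
  have c1 : Continuous (fun y : V => ‖y - c‖ ^ 2 - l ^ 2) := by fun_prop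
  unfold kH
  exact c1.measurable.mul (cS.measurable.div (cA.add cB).measurable)

end kernel
end SphL

open MeasureTheory
namespace SphL

section cv
open EuclideanGeometry
variable {n : ℕ}

lemma abs_det_inv (c y : EuclideanSpace ℝ (Fin n)) (R : ℝ) :
    |((R / dist y c) ^ 2 • (((ℝ ∙ (y - c))ᗮ.reflection : EuclideanSpace ℝ (Fin n) →L[ℝ] EuclideanSpace ℝ (Fin n)))).det|
      = (R / ‖y - c‖) ^ (2 * n) := by
  have h : ((ℝ ∙ (y - c))ᗮ.reflection : EuclideanSpace ℝ (Fin n) →L[ℝ] EuclideanSpace ℝ (Fin n)).det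
     = (-1) ^ Module.finrank ℝ (ℝ ∙ (y - c))ᗮᗮ := by
    have := Submodule.det_reflection (K := (ℝ ∙ (y - c))ᗮ)
    rw [← this]; rfl
  unfold ContinuousLinearMap.det at *
  rw [ContinuousLinearMap.toLinearMap_smul, LinearMap.det_smul, h, abs_mul, abs_pow, abs_pow, abs_pow, abs_neg, abs_one, one_pow, mul_one,
    finrank_euclideanSpace_fin, dist_eq_norm, ← pow_mul, ← abs_pow, abs_of_nonneg]
  rw [pow_mul]; positivity

lemma cv_set {c : EuclideanSpace ℝ (Fin n)} {R : ℝ} (hR : 0 < R) {s : Set (EuclideanSpace ℝ (Fin n))}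
    (hs : MeasurableSet s) (hc : c ∉ s) (g : EuclideanSpace ℝ (Fin n) → ℝ) :
    ∫ y in inversion c R '' s, g y = ∫ y in s, (R / ‖y - c‖) ^ (2 * n) * g (inversion c R y) := by
  rw [integral_image_eq_integral_abs_det_fderiv_smul volume hs
    (fun x hx => (hasFDerivAt_inversion (c := c) (R := R)
      (show x ≠ c from fun h => hc (h ▸ hx))).hasFDerivWithinAt)
    (inversion_injective c hR.ne').injOn]
  simp_rw [abs_det_inv, smul_eq_mul]

lemma cv_int {c : EuclideanSpace ℝ (Fin n)} {R : ℝ} (hR : 0 < R) {s : Set (EuclideanSpace ℝ (Fin n))}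
    (hs : MeasurableSet s) (hc : c ∉ s) (g : EuclideanSpace ℝ (Fin n) → ℝ) :
    IntegrableOn g (inversion c R '' s) ↔
     IntegrableOn (fun y => (R / ‖y - c‖) ^ (2 * n) * g (inversion c R y)) s := by
  rw [integrableOn_image_iff_integrableOn_abs_det_fderiv_smul volume hs
    (fun x hx => (hasFDerivAt_inversion (c := c) (R := R)
      (show x ≠ c from fun h => hc (h ▸ hx))).hasFDerivWithinAt)
    (inversion_injective c hR.ne').injOn]
  simp_rw [abs_det_inv, smul_eq_mul]

lemma inv_eq (c y : EuclideanSpace ℝ (Fin n)) (R : ℝ) :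
    inversion c R y = c + (R / ‖y - c‖) ^ 2 • (y - c) := by
  simp [inversion, dist_eq_norm, add_comm]

lemma inv_image_compl {c : EuclideanSpace ℝ (Fin n)} {R : ℝ} (hR : 0 < R) :
    inversion c R '' {c}ᶜ = {c}ᶜ := by
  ext y
  constructor
  · rintro ⟨x, hx, rfl⟩
    simp only [Set.mem_compl_iff, Set.mem_singleton_iff] at *
    rwa [inversion_eq_center hR.ne']
  · intro hy
    refine ⟨inversion c R y, ?_, inversion_inversion c hR.ne' y⟩
    simp only [Set.mem_compl_iff, Set.mem_singleton_iff] at *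
    rwa [inversion_eq_center hR.ne']

lemma inv_image_ball {c : EuclideanSpace ℝ (Fin n)} {R : ℝ} (hR : 0 < R) :
    inversion c R '' (Metric.ball c R \ {c}) = (Metric.closedBall c R)ᶜ := by
  ext y
  constructor
  · rintro ⟨x, ⟨hx, hxc⟩, rfl⟩
    simp only [Set.mem_compl_iff, Metric.mem_closedBall, Metric.mem_ball, Set.mem_singleton_iff, not_le] at *
    rw [dist_inversion_center, lt_div_iff₀ (dist_pos.2 hxc)]
    nlinarith
  · intro hy
    simp only [Set.mem_compl_iff, Metric.mem_closedBall, not_le] at hy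
    have h0 : 0 < dist y c := hR.trans hy
    refine ⟨inversion c R y, ⟨?_, ?_⟩, inversion_inversion c hR.ne' y⟩
    · rw [Metric.mem_ball, dist_inversion_center, div_lt_iff₀ h0]; nlinarith
    · rw [Set.mem_singleton_iff, inversion_eq_center hR.ne']; exact dist_pos.1 h0

end cv

section basic
variable {n : ℕ}

lemma sg_pos (x : EuclideanSpace ℝ (Fin n)) : 0 < sg x := by unfold sg; positivity

lemma sg_sq (x : EuclideanSpace ℝ (Fin n)) : sg x ^ 2 = 2 / (1 + ‖x‖ ^ 2) := by
  unfold sg; rw [Real.sq_sqrt (by positivity)]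

lemma sg_cont : Continuous (sg : EuclideanSpace ℝ (Fin n) → ℝ) := by
  unfold sg
  apply Real.continuous_sqrt.comp
  exact continuous_const.div (by fun_prop) (fun x => by positivity)

lemma sg_le (x : EuclideanSpace ℝ (Fin n)) : sg x ≤ 2 / (1 + ‖x‖) := by
  have := norm_nonneg x
  unfold sg
  apply Real.sqrt_le_iff.2 ⟨by positivity, ?_⟩
  rw [div_pow, div_le_div_iff₀ (by positivity) (by positivity)]
  nlinarith [sq_nonneg (‖x‖ - 1)]

lemma base_int (hn : 1 ≤ n) (p : ℕ) {a : ℝ} (ha : 0 ≤ a) (x0 : EuclideanSpace ℝ (Fin n)) :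
    Integrable (fun y : EuclideanSpace ℝ (Fin n) => (a + ‖y - x0‖) ^ p * sg y ^ (2 * n + p)) := by
  have h1 := integrable_one_add_norm (E := EuclideanSpace ℝ (Fin n)) (μ := volume) (r := (2 * n : ℕ))
    (by rw [finrank_euclideanSpace_fin]; norm_cast; omega)
  refine (h1.const_mul ((a + ‖x0‖ + 1) ^ p * 2 ^ (2 * n + p))).mono' ?_ ?_
  · have := sg_cont (n := n)
    exact Continuous.aestronglyMeasurable (by fun_prop)
  · refine Filter.Eventually.of_forall fun y => ?_
    have hs := sg_pos y
    have h2 := norm_nonneg y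
    have h3 := norm_nonneg x0
    rw [Real.norm_eq_abs, abs_of_nonneg (by positivity)]
    have hb : a + ‖y - x0‖ ≤ (a + ‖x0‖ + 1) * (1 + ‖y‖) := by
      have := norm_sub_le y x0
      nlinarith [mul_nonneg ha h2, mul_nonneg h3 h2]
    calc _ ≤ ((a + ‖x0‖ + 1) * (1 + ‖y‖)) ^ p * (2 / (1 + ‖y‖)) ^ (2 * n + p) := by
          gcongr
          exact sg_le y
      _ = _ := by
          rw [Real.rpow_neg (by positivity), Real.rpow_natCast, div_pow, mul_pow, pow_add (1 + ‖y‖)]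
          field_simp

end basic

namespace Sol
variable {n p : ℕ} {γ ε α : ℝ} {u : EuclideanSpace ℝ (Fin n) → ℝ}

lemma v_pos (h : Sol n p γ ε α u) (x) : 0 < sg x ^ p * u x := by
  obtain ⟨c, C, hc, hb⟩ := h.bdd
  exact hc.trans_le (hb x).1

lemma u_pos (h : Sol n p γ ε α u) (x) : 0 < u x :=
  pos_of_mul_pos_right (h.v_pos x) (pow_nonneg (sg_pos x).le _)

lemma v_cont (h : Sol n p γ ε α u) : Continuous (fun x => sg x ^ p * u x) :=
  (sg_cont.pow _).mul h.cont

lemma F_cont (h : Sol n p γ ε α u) : Continuous (Ff n p ε α u) := by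
  unfold Ff Gf
  apply (sg_cont.pow _).mul
  exact (continuous_const.mul h.v_cont).add (h.v_cont.rpow_const fun x => Or.inl (h.v_pos x).ne')

lemma F_pos (h : Sol n p γ ε α u) (hε : 0 ≤ ε) (x) : 0 < Ff n p ε α u x := by
  unfold Ff Gf
  have := h.v_pos x
  have := sg_pos x
  positivity

lemma F_le (h : Sol n p γ ε α u) (hε : 0 ≤ ε) (hα : 0 ≤ α) :
    ∃ K, 0 ≤ K ∧ ∀ y, Ff n p ε α u y ≤ K * sg y ^ (2 * n + p) := by
  obtain ⟨c, C, hc, hb⟩ := h.bdd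
  have hC : 0 < C := hc.trans_le ((hb 0).1.trans (hb 0).2)
  refine ⟨ε * C + c ^ (-α), by positivity, fun y => ?_⟩
  unfold Ff Gf
  rw [mul_comm]
  have := sg_pos y
  refine mul_le_mul_of_nonneg_right ?_ (by positivity)
  exact add_le_add (mul_le_mul_of_nonneg_left (hb y).2 hε)
    (Real.rpow_le_rpow_of_nonpos hc (hb y).1 (by linarith))

lemma int (h : Sol n p γ ε α u) (hn : 1 ≤ n) (hε : 0 ≤ ε) (hα : 0 ≤ α)
    {k : EuclideanSpace ℝ (Fin n) → ℝ} (hk : Measurable k) {C a : ℝ} (ha : 0 ≤ a)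
    (x0 : EuclideanSpace ℝ (Fin n)) (hb : ∀ y, |k y| ≤ C * (a + ‖y - x0‖) ^ p) :
    Integrable (fun y => k y * Ff n p ε α u y) := by
  obtain ⟨K, hK, hF⟩ := h.F_le hε hα
  refine ((base_int hn p ha x0).const_mul (C * K)).mono'
    (hk.mul h.F_cont.measurable).aestronglyMeasurable (Filter.Eventually.of_forall fun y => ?_)
  rw [Real.norm_eq_abs, abs_mul, abs_of_pos (h.F_pos hε y)]
  calc _ ≤ (C * (a + ‖y - x0‖) ^ p) * (K * sg y ^ (2 * n + p)) :=
        mul_le_mul (hb y) (hF y) (h.F_pos hε y).le ((abs_nonneg _).trans (hb y))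
    _ = _ := by ring

lemma Qcont (h : Sol n p γ ε α u) (hn : 1 ≤ n) (hp : 1 ≤ p) (hε : 0 ≤ ε) (hα : 0 ≤ α)
    (x0 : EuclideanSpace ℝ (Fin n)) :
    ContinuousOn (fun q : ℝ × EuclideanSpace ℝ (Fin n) =>
      ∫ y, kH p q.1 q.2 (y - x0) * Ff n p ε α u y) (Set.Ici 0 ×ˢ Metric.closedBall 0 1) := by
  have : Nonempty (Fin n) := ⟨⟨0, by omega⟩⟩
  rintro ⟨l0, z0⟩ ⟨hl0, hz0⟩
  simp only [Set.mem_Ici] at hl0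
  apply continuousWithinAt_of_dominated (bound := fun y => (p * (l0 + 1 + ‖y - x0‖) ^ p) * Ff n p ε α u y)
  · exact Filter.Eventually.of_forall fun q =>
      ((kH_measurable p q.1 q.2 x0).mul h.F_cont.measurable).aestronglyMeasurable
  · have h1 : ∀ᶠ q : ℝ × EuclideanSpace ℝ (Fin n) in nhdsWithin (l0, z0) (Set.Ici 0 ×ˢ Metric.closedBall 0 1),
        q.1 < l0 + 1 := by
      apply mem_nhdsWithin_of_mem_nhds
      exact continuous_fst.continuousAt.eventually_lt continuousAt_const (by simp)
    filter_upwards [h1, self_mem_nhdsWithin] with q hq hq2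
    refine Filter.Eventually.of_forall fun y => ?_
    obtain ⟨ha, hb⟩ := hq2
    simp only [Set.mem_Ici, mem_closedBall_zero_iff] at ha hb
    rw [Real.norm_eq_abs, abs_mul, abs_of_pos (h.F_pos hε y)]
    have := (h.F_pos hε y).le
    have := kH_abs_le hp ha hb (y - x0)
    gcongr
    refine this.trans ?_
    gcongr
  · exact h.int hn hε hα (by fun_prop) (by positivity : 0 ≤ l0 + 1) x0
      (fun y => (abs_of_nonneg (by positivity)).le)
  · have : ∀ᵐ y : EuclideanSpace ℝ (Fin n), y ≠ x0 + l0 • z0 := by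
      rw [ae_iff]; simp
    filter_upwards [this] with y hy
    have := kH_continuousAt p (l0, z0) (Y := y - x0) (by
      intro h; apply hy; rw [← h]; simp)
    exact (this.mul continuousAt_const).continuousWithinAt

lemma int_pow (h : Sol n p γ ε α u) (hn : 1 ≤ n) (hε : 0 ≤ ε) (hα : 0 ≤ α)
    (x : EuclideanSpace ℝ (Fin n)) :
    Integrable (fun y => ‖x - y‖ ^ p * Ff n p ε α u y) :=
  h.int hn hε hα (by fun_prop) le_rfl x (C := 1) (fun y => by
    rw [abs_of_nonneg (by positivity), norm_sub_rev]; simp)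

lemma int_kA (h : Sol n p γ ε α u) (hn : 1 ≤ n) (hε : 0 ≤ ε) (hα : 0 ≤ α)
    (x0 : EuclideanSpace ℝ (Fin n)) {l : ℝ} (hl : 0 ≤ l) {z : EuclideanSpace ℝ (Fin n)} (hz : ‖z‖ ≤ 1) :
    Integrable (fun y => kA l z (y - x0) ^ p * Ff n p ε α u y) := by
  have cA : Continuous (fun y => kA l z (y - x0)) := by unfold kA; fun_prop
  refine h.int hn hε hα (cA.pow _).measurable hl x0 (C := 1) (fun y => ?_)
  have := kA_nonneg l z (y - x0)
  rw [abs_of_nonneg (by positivity), one_mul]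
  exact pow_le_pow_left₀ this (kA_le hl hz _) _

/-- `w = (1-|z|^2) Q` -/
lemma rep (h : Sol n p γ ε α u) (hn : 1 ≤ n) (hε : 0 ≤ ε) (hα : 0 ≤ α)
    (x0 : EuclideanSpace ℝ (Fin n)) {l : ℝ} (hl : 0 ≤ l) {z : EuclideanSpace ℝ (Fin n)} (hz : ‖z‖ ≤ 1) :
    u (x0 + l • z) - γ * ∫ y, kA l z (y - x0) ^ p * Ff n p ε α u y =
      (1 - ‖z‖ ^ 2) * (γ * ∫ y, kH p l z (y - x0) * Ff n p ε α u y) := by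
  rw [h.eq, ← mul_sub, ← integral_sub (h.int_pow hn hε hα _) (h.int_kA hn hε hα x0 hl hz),
    mul_left_comm]
  congr 1
  rw [← integral_const_mul]
  apply integral_congr_ae
  refine Filter.Eventually.of_forall fun y => ?_
  have := kH_mul p hl z (y - x0)
  have e : kB l z (y - x0) = ‖x0 + l • z - y‖ := by unfold kB; congr 1; abel
  rw [e] at this
  simp only
  rw [← sub_mul, this]; ring

/-- The reflected value. -/
lemma refl (h : Sol n p γ ε α u) (x0 : EuclideanSpace ℝ (Fin n)) {l : ℝ} (hl : 0 ≤ l)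
    {z : EuclideanSpace ℝ (Fin n)} (hz : z ≠ 0) :
    γ * ∫ y, kA l z (y - x0) ^ p * Ff n p ε α u y = ‖z‖ ^ p * u (x0 + (l / ‖z‖ ^ 2) • z) := by
  have h0 := norm_pos_iff.2 hz
  rw [h.eq, mul_left_comm]
  congr 1
  rw [← integral_const_mul]
  apply integral_congr_ae
  refine Filter.Eventually.of_forall fun y => ?_
  simp only
  rw [← mul_assoc, ← mul_pow]
  congr 2
  apply (sq_eq_sq₀ (kA_nonneg _ _ _) (by positivity)).1
  rw [kA_sq hl]
  have e : x0 + (l / ‖z‖ ^ 2) • z - y = (l / ‖z‖ ^ 2) • z - (y - x0) := by abel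
  rw [e, mul_pow, norm_sub_sq_real ((l / ‖z‖ ^ 2) • z) (y - x0), norm_smul, real_inner_smul_left, Real.norm_eq_abs,
    abs_of_nonneg (by positivity)]
  field_simp

end Sol
end SphL

open MeasureTheory
namespace SphL

lemma rpow_tangent {α r : ℝ} (hα : 0 < α) (hr : 0 < r) : 1 + α * (1 - r) ≤ r ^ (-α) := by
  rw [Real.rpow_def_of_pos hr]
  have h1 := Real.add_one_le_exp (Real.log r * -α)
  have h2 := Real.log_le_sub_one_of_pos hr
  nlinarith

lemma Gf_anti {ε α t t' : ℝ} (hα : 0 < α) (ht' : 0 < t') (htt : t' ≤ t)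
    (hd : ε ≤ α * t ^ (-α - 1)) : Gf ε α t ≤ Gf ε α t' := by
  have ht : 0 < t := ht'.trans_le htt
  unfold Gf
  have h1 := rpow_tangent hα (div_pos ht' ht)
  rw [Real.div_rpow ht'.le ht.le, le_div_iff₀ (by positivity)] at h1
  have h2 : t ^ (-α) = t * t ^ (-α - 1) := by
    rw [Real.rpow_sub_one ht.ne']; field_simp
  have h3 : (1 + α * (1 - t' / t)) * t ^ (-α) = t ^ (-α) + α * t ^ (-α - 1) * (t - t') := by
    have : (1 + α * (1 - t' / t)) * t ^ (-α) = t ^ (-α) + α * (1 - t' / t) * (t * t ^ (-α - 1)) := by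
      rw [← h2]; ring
    rw [this]; field_simp
  rw [h3] at h1
  nlinarith

lemma cmp {n p : ℕ} (hp : 1 ≤ p) {ε α a b t t' : ℝ} (hε : 0 < ε) (hα : 0 < α)
    (hαp : α * p ≤ 2 * n + p) (ha : 0 < a) (hab : a < b) (ht' : 0 < t') (htt : t' ≤ t)
    (hd : ε ≤ α * (a ^ p * t) ^ (-α - 1)) :
    a ^ (2 * n + p) * Gf ε α (a ^ p * t) < b ^ (2 * n + p) * Gf ε α (b ^ p * t') := by
  have hb : 0 < b := ha.trans hab
  have h1 : Gf ε α (a ^ p * t) ≤ Gf ε α (a ^ p * t') :=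
    Gf_anti hα (by positivity) (by gcongr) hd
  refine lt_of_le_of_lt (mul_le_mul_of_nonneg_left h1 (by positivity)) ?_
  unfold Gf
  have key : ∀ c : ℝ, 0 < c → c ^ (2 * n + p) * (ε * (c ^ p * t') + (c ^ p * t') ^ (-α)) =
      ε * t' * (c ^ (2 * n + p) * c ^ p) + c ^ ((2 * n + p : ℝ) - α * p) * t' ^ (-α) := by
    intro c hc
    rw [Real.mul_rpow (by positivity) ht'.le, ← Real.rpow_natCast c p, ← Real.rpow_mul hc.le,
      mul_add, ← mul_assoc (c ^ (2 * n + p)) (c ^ _) (t' ^ (-α)), ← Real.rpow_natCast c (2 * n + p),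
      ← Real.rpow_add hc]
    push_cast
    have : (2 * n + p : ℝ) + p * -α = (2 * n + p : ℝ) - α * p := by ring
    rw [this]; ring
  rw [key a ha, key b hb]
  apply add_lt_add_of_lt_of_le
  · have h1 : a ^ p < b ^ p := pow_lt_pow_left₀ hab ha.le (by omega)
    have h2 : a ^ (2 * n + p) < b ^ (2 * n + p) := pow_lt_pow_left₀ hab ha.le (by omega)
    have := mul_lt_mul'' h2 h1 (by positivity) (by positivity)
    exact mul_lt_mul_of_pos_left this (by positivity)
  · exact mul_le_mul_of_nonneg_right (Real.rpow_le_rpow ha.le hab.le (by linarith)) (by positivity)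

lemma sg_lt {n : ℕ} {x0 y : EuclideanSpace ℝ (Fin n)} {l : ℝ} (hl : 0 < l) (hl2 : l ^ 2 < 1 + ‖x0‖ ^ 2)
    (hy : y ≠ x0) (hyl : ‖y - x0‖ < l) :
    sg y < (l / ‖y - x0‖) * sg (x0 + (l / ‖y - x0‖) ^ 2 • (y - x0)) := by
  obtain ⟨Y, rfl⟩ : ∃ Y, y = x0 + Y := ⟨y - x0, by abel⟩
  have hY : Y ≠ 0 := by intro h; apply hy; simp [h]
  have h0 := norm_pos_iff.2 hY
  simp only [add_sub_cancel_left] at *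
  apply lt_of_pow_lt_pow_left₀ 2 (mul_pos (by positivity) (sg_pos _)).le
  rw [mul_pow, sg_sq, sg_sq, ← mul_div_assoc, div_lt_div_iff₀ (by positivity) (by positivity),
    @norm_add_sq_real, @norm_add_sq_real, real_inner_smul_right, norm_smul, Real.norm_eq_abs,
    abs_of_nonneg (by positivity)]
  set i : ℝ := inner ℝ x0 Y
  have : (l / ‖Y‖) ^ 2 * 2 * (1 + (‖x0‖ ^ 2 + 2 * i + ‖Y‖ ^ 2)) -
     2 * (1 + (‖x0‖ ^ 2 + 2 * ((l / ‖Y‖) ^ 2 * i) + ((l / ‖Y‖) ^ 2 * ‖Y‖) ^ 2)) =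
     2 * ((l ^ 2 - ‖Y‖ ^ 2) * (1 + ‖x0‖ ^ 2 - l ^ 2)) / ‖Y‖ ^ 2 := by
    field_simp; ring
  have h2 : 0 < 2 * ((l ^ 2 - ‖Y‖ ^ 2) * (1 + ‖x0‖ ^ 2 - l ^ 2)) / ‖Y‖ ^ 2 := by
    have : 0 < l ^ 2 - ‖Y‖ ^ 2 := by nlinarith
    have : 0 < 1 + ‖x0‖ ^ 2 - l ^ 2 := by linarith
    positivity
  linarith

namespace Sol
variable {n p : ℕ} {γ ε α : ℝ} {u : EuclideanSpace ℝ (Fin n) → ℝ}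

lemma int_kH (h : Sol n p γ ε α u) (hn : 1 ≤ n) (hp : 1 ≤ p) (hε : 0 ≤ ε) (hα : 0 ≤ α)
    (x0 : EuclideanSpace ℝ (Fin n)) {l : ℝ} (hl : 0 ≤ l) {z : EuclideanSpace ℝ (Fin n)} (hz : ‖z‖ ≤ 1) :
    Integrable (fun y => kH p l z (y - x0) * Ff n p ε α u y) :=
  h.int hn hε hα (kH_measurable p l z x0) hl x0 (fun y => kH_abs_le hp hl hz (y - x0))

lemma F_refl_lt (h : Sol n p γ ε α u) (hn : 1 ≤ n) (hp : 1 ≤ p) (hγ : 0 < γ) (hε : 0 < ε) (hα : 0 < α)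
    (hαp : α * p ≤ 2 * n + p)
    (x0 : EuclideanSpace ℝ (Fin n)) {l : ℝ} (hl : 0 < l) (hl2 : l ^ 2 < 1 + ‖x0‖ ^ 2)
    (hQ : ∀ z : EuclideanSpace ℝ (Fin n), ‖z‖ ≤ 1 → 0 ≤ ∫ y, kH p l z (y - x0) * Ff n p ε α u y)
    {y : EuclideanSpace ℝ (Fin n)} (hy : y ≠ x0) (hyl : ‖y - x0‖ < l)
    (hd : ε ≤ α * (sg y ^ p * u y) ^ (-α - 1)) :
    Ff n p ε α u y < (l / ‖y - x0‖) ^ (2 * n + p) *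
      Ff n p ε α u (x0 + (l / ‖y - x0‖) ^ 2 • (y - x0)) := by
  have h0 : 0 < ‖y - x0‖ := norm_pos_iff.2 (sub_ne_zero.2 hy)
  set z : EuclideanSpace ℝ (Fin n) := l⁻¹ • (y - x0) with hz
  have hzn : ‖z‖ = ‖y - x0‖ / l := by
    rw [hz, norm_smul, norm_inv, Real.norm_eq_abs, abs_of_pos hl]; field_simp
  have hz1 : ‖z‖ < 1 := by rw [hzn, div_lt_one hl]; exact hyl
  have hz0 : 0 < ‖z‖ := by rw [hzn]; positivity
  have e1 : x0 + l • z = y := by rw [hz, smul_smul, mul_inv_cancel₀ hl.ne']; simp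
  have e2 : x0 + (l / ‖z‖ ^ 2) • z = x0 + (l / ‖y - x0‖) ^ 2 • (y - x0) := by
    rw [hzn, hz, smul_smul]; congr 2; field_simp
  have hw := h.rep hn hε.le hα.le x0 hl.le hz1.le
  rw [h.refl x0 hl.le (norm_pos_iff.1 hz0), e1, e2] at hw
  have hw2 : 0 ≤ (1 - ‖z‖ ^ 2) * (γ * ∫ y, kH p l z (y - x0) * Ff n p ε α u y) := by
    have := hQ z hz1.le
    have : 0 ≤ 1 - ‖z‖ ^ 2 := by nlinarith
    positivity
  set y' := x0 + (l / ‖y - x0‖) ^ 2 • (y - x0) with hy'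
  have hs : sg y < (l / ‖y - x0‖) * sg y' := sg_lt hl hl2 hy hyl
  have hle : ‖z‖ ^ p * u y' ≤ u y := by linarith
  have hu' := h.u_pos y'
  have := cmp (n := n) hp hε hα hαp (sg_pos y) hs (by positivity) hle hd
  unfold Ff
  refine this.trans_eq ?_
  rw [mul_pow, mul_pow, mul_assoc]
  have e3 : (l / ‖y - x0‖) ^ p * sg y' ^ p * (‖z‖ ^ p * u y') = sg y' ^ p * u y' := by
    have : (l / ‖y - x0‖) ^ p * ‖z‖ ^ p = 1 := by
      rw [← mul_pow, hzn]; field_simp; simp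
    calc _ = ((l / ‖y - x0‖) ^ p * ‖z‖ ^ p) * (sg y' ^ p * u y') := by ring
      _ = _ := by rw [this, one_mul]
  rw [e3]

lemma Qpos (h : Sol n p γ ε α u) (hn : 1 ≤ n) (hp : 1 ≤ p) (hγ : 0 < γ) (hε : 0 < ε) (hα : 0 < α)
    (hαp : α * p ≤ 2 * n + p)
    (x0 : EuclideanSpace ℝ (Fin n)) {l : ℝ} (hl : 0 < l) (hl2 : l ^ 2 < 1 + ‖x0‖ ^ 2)
    (hd : ∀ y, ‖y - x0‖ < l → ε ≤ α * (sg y ^ p * u y) ^ (-α - 1))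
    (hQ : ∀ z : EuclideanSpace ℝ (Fin n), ‖z‖ ≤ 1 → 0 ≤ ∫ y, kH p l z (y - x0) * Ff n p ε α u y)
    {z : EuclideanSpace ℝ (Fin n)} (hz : ‖z‖ ≤ 1) :
    0 < ∫ y, kH p l z (y - x0) * Ff n p ε α u y := by
  have : Nonempty (Fin n) := ⟨⟨0, by omega⟩⟩
  set g : EuclideanSpace ℝ (Fin n) → ℝ := fun y => kH p l z (y - x0) * Ff n p ε α u y with hg
  have hgi : Integrable g := h.int_kH hn hp hε.le hα.le x0 hl.le hz
  set s : Set (EuclideanSpace ℝ (Fin n)) := Metric.ball x0 l \ {x0} with hs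
  have hsm : MeasurableSet s := Metric.isOpen_ball.measurableSet.diff (measurableSet_singleton _)
  have hcs : x0 ∉ s := by simp [hs]
  have hae : (Metric.closedBall x0 l : Set (EuclideanSpace ℝ (Fin n))) =ᵐ[volume] s := by
    have h1 : ∀ᵐ y : EuclideanSpace ℝ (Fin n), y ≠ x0 := by rw [ae_iff]; simp
    have h2 : ∀ᵐ y : EuclideanSpace ℝ (Fin n), y ∉ Metric.sphere x0 l := by
      rw [ae_iff]; simp only [not_not, Set.ofPred_mem_eq]; exact Measure.addHaar_sphere _ _ _
    filter_upwards [h1, h2] with y hy1 hy2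
    apply propext
    change y ∈ Metric.closedBall x0 l ↔ y ∈ s
    simp only [hs, Set.mem_sdiff, Metric.mem_ball, Metric.mem_closedBall, Metric.mem_sphere,
      Set.mem_singleton_iff] at *
    exact ⟨fun h => ⟨lt_of_le_of_ne h hy2, hy1⟩, fun h => h.1.le⟩
  have hio : IntegrableOn g (EuclideanGeometry.inversion x0 l '' s) := hgi.integrableOn
  rw [cv_int hl hsm hcs] at hio
  have hsplit : ∫ y, g y = ∫ y in s, (g y + (l / ‖y - x0‖) ^ (2 * n) * g (EuclideanGeometry.inversion x0 l y)) := by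
    rw [integral_add hgi.integrableOn hio, ← cv_set hl hsm hcs, inv_image_ball hl,
      ← setIntegral_congr_set hae, integral_add_compl Metric.isClosed_closedBall.measurableSet hgi]
  rw [hsplit]
  have hposs : ∀ y ∈ s, 0 < g y + (l / ‖y - x0‖) ^ (2 * n) * g (EuclideanGeometry.inversion x0 l y) := by
    intro y hy
    simp only [hs, Set.mem_sdiff, Metric.mem_ball, Set.mem_singleton_iff, dist_eq_norm] at hy
    have hF := h.F_refl_lt hn hp hγ hε hα hαp x0 hl hl2 hQ hy.2 hy.1 (hd y hy.1)
    have hneg := kH_neg hp hl.le hz hy.1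
    simp only [hg]
    rw [inv_eq, add_sub_cancel_left, kH_inv hp hl z (sub_ne_zero.2 hy.2)]
    rw [pow_add] at hF
    set t := l / ‖y - x0‖
    nlinarith
  rw [setIntegral_pos_iff_support_of_nonneg_ae]
  · refine lt_of_lt_of_le ?_ (measure_mono (s := s) fun y hy => ⟨(hposs y hy).ne', hy⟩)
    rw [hs, measure_sdiff_null (by simp)]
    exact Metric.measure_ball_pos _ _ hl
  · exact (ae_restrict_iff' hsm).2 (Filter.Eventually.of_forall fun y hy => (hposs y hy).le)
  · exact hgi.integrableOn.add hio

lemma Qpos_zero (h : Sol n p γ ε α u) (hn : 1 ≤ n) (hp : 1 ≤ p) (hε : 0 < ε) (hα : 0 < α)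
    (x0 : EuclideanSpace ℝ (Fin n)) {z : EuclideanSpace ℝ (Fin n)} (hz : ‖z‖ ≤ 1) :
    0 < ∫ y, kH p 0 z (y - x0) * Ff n p ε α u y := by
  have : Nonempty (Fin n) := ⟨⟨0, by omega⟩⟩
  have hpos : ∀ y, y ≠ x0 → 0 < kH p 0 z (y - x0) * Ff n p ε α u y := fun y hy =>
    mul_pos (kH_zero_pos hp (sub_ne_zero.2 hy)) (h.F_pos hε.le y)
  have hae : ∀ᵐ y : EuclideanSpace ℝ (Fin n), y ≠ x0 := by rw [ae_iff]; simp
  rw [integral_pos_iff_support_of_nonneg_ae _ (h.int_kH hn hp hε.le hα.le x0 le_rfl hz)]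
  · refine lt_of_lt_of_le ?_ (measure_mono (s := {x0}ᶜ) fun y hy => (hpos y hy).ne')
    rw [measure_compl (by simp) (by simp)]
    simp
  · filter_upwards [hae] with y hy using (hpos y hy).le

/-- moving spheres -/
theorem MS (h : Sol n p γ ε α u) (hn : 1 ≤ n) (hp : 1 ≤ p) (hγ : 0 < γ) (hε : 0 < ε) (hα : 0 < α)
    (hαp : α * p ≤ 2 * n + p)
    (x0 : EuclideanSpace ℝ (Fin n)) {L : ℝ} (hL : 0 ≤ L) (hL2 : L ^ 2 ≤ 1 + ‖x0‖ ^ 2)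
    (hd : ∀ y, ‖y - x0‖ < L → ε ≤ α * (sg y ^ p * u y) ^ (-α - 1))
    {z : EuclideanSpace ℝ (Fin n)} (hz : ‖z‖ ≤ 1) :
    0 ≤ ∫ y, kH p L z (y - x0) * Ff n p ε α u y := by
  have hQc := h.Qcont hn hp hε.le hα.le x0
  set Q : ℝ × EuclideanSpace ℝ (Fin n) → ℝ := fun q => ∫ y, kH p q.1 q.2 (y - x0) * Ff n p ε α u y with hQdef
  set S : Set ℝ := {l | ∀ z : EuclideanSpace ℝ (Fin n), ‖z‖ ≤ 1 → 0 ≤ Q (l, z)} with hS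
  suffices hsub : Set.Icc 0 L ⊆ S from hsub ⟨hL, le_rfl⟩ z hz
  apply IsClosed.Icc_subset_of_forall_mem_nhdsWithin
  · have : S ∩ Set.Icc 0 L = Set.Icc 0 L ∩ ⋂ z : {z : EuclideanSpace ℝ (Fin n) // ‖z‖ ≤ 1},
        (Set.Icc 0 L ∩ (fun l => Q (l, z.1)) ⁻¹' Set.Ici 0) := by
      ext l
      simp only [hS, Set.mem_inter_iff, Set.mem_ofPred_eq, Set.mem_iInter, Set.mem_preimage,
        Set.mem_Ici, Subtype.forall]
      constructor
      · rintro ⟨h1, h2⟩; exact ⟨h2, fun z hz => ⟨h2, h1 z hz⟩⟩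
      · rintro ⟨h1, h2⟩; exact ⟨fun z hz => (h2 z hz).2, h1⟩
    rw [this]
    refine isClosed_Icc.inter (isClosed_iInter fun z => ?_)
    refine ContinuousOn.preimage_isClosed_of_isClosed ?_ isClosed_Icc isClosed_Ici
    refine hQc.comp (f := fun l : ℝ => (l, z.1)) (by fun_prop) ?_
    intro l hl
    exact ⟨hl.1, by simpa using z.2⟩
  · intro z hz
    exact (h.Qpos_zero hn hp hε hα x0 hz).le
  · rintro l ⟨hlS, hl0, hlL⟩
    have hpos : ∀ z : EuclideanSpace ℝ (Fin n), ‖z‖ ≤ 1 → 0 < Q (l, z) := by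
      intro z hz
      rcases hl0.eq_or_lt with rfl | hl0
      · exact h.Qpos_zero hn hp hε hα x0 hz
      · exact h.Qpos hn hp hγ hε hα hαp x0 hl0 (by nlinarith) (fun y hy => hd y (hy.trans hlL)) hlS hz
    -- compactness via a retraction to the domain
    have hev : ∀ᶠ l' in nhdsWithin l (Set.Ici 0), ∀ z ∈ Metric.closedBall (0 : EuclideanSpace ℝ (Fin n)) 1, 0 < Q (l', z) := by
      have hK := isCompact_closedBall (0 : EuclideanSpace ℝ (Fin n)) 1
      have hc2 : ContinuousOn (fun q : (Set.Ici (0:ℝ)) × (Metric.closedBall (0 : EuclideanSpace ℝ (Fin n)) 1) => Q (q.1.1, q.2.1)) Set.univ := by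
        refine hQc.comp (f := fun q : (Set.Ici (0:ℝ)) × (Metric.closedBall (0 : EuclideanSpace ℝ (Fin n)) 1) => (q.1.1, q.2.1)) (by fun_prop) ?_
        intro q _
        exact ⟨q.1.2, q.2.2⟩
      rw [continuousOn_univ] at hc2
      have : CompactSpace (Metric.closedBall (0 : EuclideanSpace ℝ (Fin n)) 1) := isCompact_iff_compactSpace.1 hK
      have h3 := isCompact_univ.eventually_forall_of_forall_eventually (x₀ := (⟨l, hl0⟩ : Set.Ici (0:ℝ)))
        (K := (Set.univ : Set (Metric.closedBall (0 : EuclideanSpace ℝ (Fin n)) 1)))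
        (P := fun a b => 0 < Q (a.1, b.1)) (fun b _ => by
          refine continuousAt_const.eventually_lt hc2.continuousAt ?_
          exact hpos b.1 (mem_closedBall_zero_iff.1 b.2))
      rw [← map_nhds_subtype_val (⟨l, hl0⟩ : Set.Ici (0:ℝ)), Filter.eventually_map]
      filter_upwards [h3] with a ha z hz
      exact ha ⟨z, hz⟩ trivial
    have hmono : nhdsWithin l (Set.Ioi l) ≤ nhdsWithin l (Set.Ici 0) :=
      nhdsWithin_mono _ fun x hx => hl0.trans (le_of_lt hx)
    filter_upwards [hmono hev] with l' hl' z hz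
    exact (hl' z (by simpa using hz)).le

/-- center consequence -/
lemma MS_center (h : Sol n p γ ε α u) (hn : 1 ≤ n) (hp : 1 ≤ p) (hγ : 0 < γ) (hε : 0 < ε) (hα : 0 < α)
    (hαp : α * p ≤ 2 * n + p)
    (x0 : EuclideanSpace ℝ (Fin n)) {L : ℝ} (hL : 0 ≤ L) (hL2 : L ^ 2 ≤ 1 + ‖x0‖ ^ 2)
    (hd : ∀ y, ‖y - x0‖ < L → ε ≤ α * (sg y ^ p * u y) ^ (-α - 1)) :
    L ^ p * (γ * ∫ y, Ff n p ε α u y) ≤ u x0 := by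
  have h1 := h.MS hn hp hγ hε hα hαp x0 hL hL2 hd (z := 0) (by simp)
  have h2 := h.rep hn hε.le hα.le x0 hL (z := 0) (by simp)
  have e : ∀ Y : EuclideanSpace ℝ (Fin n), kA L 0 Y = L := by
    intro Y; unfold kA; simp [Real.sqrt_sq hL]
  simp only [e] at h2
  rw [integral_const_mul] at h2
  simp at h2
  have := mul_nonneg hγ.le h1
  linarith

lemma MS_refl (h : Sol n p γ ε α u) (hn : 1 ≤ n) (hp : 1 ≤ p) (hγ : 0 < γ) (hε : 0 < ε) (hα : 0 < α)
    (hαp : α * p ≤ 2 * n + p)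
    (x0 : EuclideanSpace ℝ (Fin n)) {L : ℝ} (hL : 0 ≤ L) (hL2 : L ^ 2 ≤ 1 + ‖x0‖ ^ 2)
    (hd : ∀ y, ‖y - x0‖ < L → ε ≤ α * (sg y ^ p * u y) ^ (-α - 1))
    {z : EuclideanSpace ℝ (Fin n)} (hz : ‖z‖ ≤ 1) (hz0 : z ≠ 0) :
    ‖z‖ ^ p * u (x0 + (L / ‖z‖ ^ 2) • z) ≤ u (x0 + L • z) := by
  have h1 := h.MS hn hp hγ hε hα hαp x0 hL hL2 hd hz
  have h2 := h.rep hn hε.le hα.le x0 hL hz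
  rw [h.refl x0 hL hz0] at h2
  have h0 := norm_nonneg z
  have : 0 ≤ (1 - ‖z‖ ^ 2) * (γ * ∫ y, kH p L z (y - x0) * Ff n p ε α u y) := by
    have : 0 ≤ 1 - ‖z‖ ^ 2 := by nlinarith
    positivity
  linarith

end Sol
end SphL

open MeasureTheory
namespace SphL

lemma sg_inv {n : ℕ} {x : EuclideanSpace ℝ (Fin n)} (hx : x ≠ 0) :
    sg (EuclideanGeometry.inversion 0 1 x) = ‖x‖ * sg x := by
  have h0 := norm_pos_iff.2 hx
  apply (sq_eq_sq₀ (sg_pos _).le (mul_pos h0 (sg_pos _)).le).1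
  rw [mul_pow, sg_sq, sg_sq, inv_eq]
  simp only [sub_zero, zero_add, norm_smul, norm_pow, norm_div, norm_one, norm_norm]
  field_simp
  ring

namespace Sol
variable {n p : ℕ} {γ ε α : ℝ} {u : EuclideanSpace ℝ (Fin n) → ℝ}

lemma kelvin (h : Sol n p γ ε α u) (hn : 1 ≤ n) (hε : 0 ≤ ε) (hα : 0 ≤ α) :
    ∃ ut : EuclideanSpace ℝ (Fin n) → ℝ, Sol n p γ ε α ut ∧
      ∀ x, x ≠ 0 → sg x ^ p * ut x = sg (EuclideanGeometry.inversion 0 1 x) ^ p *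
        u (EuclideanGeometry.inversion 0 1 x) := by
  have : Nonempty (Fin n) := ⟨⟨0, by omega⟩⟩
  set ι : EuclideanSpace ℝ (Fin n) → EuclideanSpace ℝ (Fin n) := EuclideanGeometry.inversion 0 1 with hι
  set Ft : EuclideanSpace ℝ (Fin n) → ℝ := fun y => (1 / ‖y‖) ^ (2 * n + p) * Ff n p ε α u (ι y) with hFt
  set ut : EuclideanSpace ℝ (Fin n) → ℝ := fun x => γ * ∫ y, ‖x - y‖ ^ p * Ft y with hut
  have hae : ∀ᵐ y : EuclideanSpace ℝ (Fin n), y ≠ 0 := by rw [ae_iff]; simp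
  have hFt2 : ∀ y, y ≠ 0 → Ft y = sg y ^ (2 * n + p) * Gf ε α (sg (ι y) ^ p * u (ι y)) := by
    intro y hy
    have h0 := norm_pos_iff.2 hy
    simp only [hFt, Ff]
    rw [← mul_assoc, ← mul_pow, hι, sg_inv hy]
    congr 2; field_simp
  have hutx : ∀ x, x ≠ 0 → ut x = ‖x‖ ^ p * u (ι x) := by
    intro x hx
    have hx0 := norm_pos_iff.2 hx
    have e0 : ∀ g : EuclideanSpace ℝ (Fin n) → ℝ, ∫ y, g y = ∫ y in {0}ᶜ, g y := by
      intro g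
      rw [Measure.restrict_eq_self_of_ae_mem (by filter_upwards [hae] with y hy using hy)]
    have e1 : u (ι x) = γ * ∫ y in {0}ᶜ, (1 / ‖y - 0‖) ^ (2 * n) * (‖ι x - ι y‖ ^ p * Ff n p ε α u (ι y)) := by
      rw [h.eq, e0]
      congr 1
      have := cv_set (n := n) (c := 0) (R := 1) one_pos (s := {0}ᶜ) (measurableSet_singleton _).compl (by simp)
        (fun y => ‖ι x - y‖ ^ p * Ff n p ε α u y)
      rw [inv_image_compl one_pos] at this
      exact this
    rw [e1, hut]
    simp only
    rw [e0, mul_left_comm]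
    congr 1
    rw [← integral_const_mul]
    apply setIntegral_congr_fun (measurableSet_singleton _).compl
    intro y hy
    have hy : y ≠ 0 := hy
    have hy0 := norm_pos_iff.2 hy
    have hd := EuclideanGeometry.dist_inversion_inversion hx hy 1
    simp only [dist_eq_norm, sub_zero] at hd
    simp only [hFt, sub_zero]
    rw [hι, hd]
    simp only [one_pow, div_pow, mul_pow, pow_add]
    field_simp
  have hV : ∀ x, x ≠ 0 → sg x ^ p * ut x = sg (ι x) ^ p * u (ι x) := by
    intro x hx
    rw [hutx x hx, hι, sg_inv hx, mul_pow]; ring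
  obtain ⟨c, C, hc, hb⟩ := h.bdd
  have hC : 0 < C := hc.trans_le ((hb 0).1.trans (hb 0).2)
  have hFtnn : ∀ y, 0 ≤ Ft y := fun y => mul_nonneg (by positivity) (h.F_pos hε _).le
  have hFtm : Measurable Ft := by
    have : Measurable ι := by
      have : ι = fun y => (0 : EuclideanSpace ℝ (Fin n)) + (1 / ‖y - 0‖) ^ 2 • (y - 0) := by
        funext y; exact inv_eq _ _ _
      rw [this]
      fun_prop
    exact (by fun_prop : Measurable fun y : EuclideanSpace ℝ (Fin n) => (1 / ‖y‖) ^ (2 * n + p)).mul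
      (h.F_cont.measurable.comp this)
  have hFtle : ∀ y, y ≠ 0 → Ft y ≤ (ε * C + c ^ (-α)) * sg y ^ (2 * n + p) := by
    intro y hy
    rw [hFt2 y hy, mul_comm]
    have := sg_pos y
    refine mul_le_mul_of_nonneg_right ?_ (by positivity)
    exact add_le_add (mul_le_mul_of_nonneg_left (hb _).2 hε)
      (Real.rpow_le_rpow_of_nonpos hc (hb _).1 (by linarith))
  have hcont : Continuous ut := by
    rw [hut]
    refine continuous_const.mul ?_
    rw [continuous_iff_continuousAt]
    intro x0
    apply continuousAt_of_dominated (bound := fun y => (ε * C + c ^ (-α)) * ((1 + ‖y - x0‖) ^ p * sg y ^ (2 * n + p)))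
    · exact Filter.Eventually.of_forall fun x =>
        ((by fun_prop : Measurable fun y => ‖x - y‖ ^ p).mul hFtm).aestronglyMeasurable
    · filter_upwards [Metric.ball_mem_nhds x0 one_pos] with x hx
      filter_upwards [hae] with y hy
      rw [Real.norm_eq_abs, abs_of_nonneg (mul_nonneg (by positivity) (hFtnn y))]
      have h1 : ‖x - y‖ ≤ 1 + ‖y - x0‖ := by
        rw [Metric.mem_ball, dist_eq_norm] at hx
        have := norm_sub_le (x - x0) (y - x0)
        rw [sub_sub_sub_cancel_right] at this
        linarith
      calc _ ≤ (1 + ‖y - x0‖) ^ p * ((ε * C + c ^ (-α)) * sg y ^ (2 * n + p)) := by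
            apply mul_le_mul _ (hFtle y hy) (hFtnn y) (by positivity)
            gcongr
        _ = _ := by ring
    · exact (base_int hn p zero_le_one x0).const_mul _
    · exact Filter.Eventually.of_forall fun y => by fun_prop
  refine ⟨ut, ⟨hcont, ⟨c, C, hc, ?_⟩, ?_⟩, hV⟩
  · have hcl : IsClosed {x | c ≤ sg x ^ p * ut x ∧ sg x ^ p * ut x ≤ C} := by
      have hv : Continuous fun x => sg x ^ p * ut x := (sg_cont.pow _).mul hcont
      exact (isClosed_le continuous_const hv).inter (isClosed_le hv continuous_const)
    have hd : Dense ({0}ᶜ : Set (EuclideanSpace ℝ (Fin n))) := dense_compl_singleton 0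
    have hsub : ({0}ᶜ : Set (EuclideanSpace ℝ (Fin n))) ⊆ {x | c ≤ sg x ^ p * ut x ∧ sg x ^ p * ut x ≤ C} := by
      intro x hx
      change c ≤ sg x ^ p * ut x ∧ sg x ^ p * ut x ≤ C
      rw [hV x hx]; exact hb _
    intro x
    have := hcl.closure_subset_iff.2 hsub (hd x)
    exact this
  · intro x
    rw [hut]
    simp only
    congr 1
    apply integral_congr_ae
    filter_upwards [hae] with y hy
    rw [hFt2 y hy]
    unfold Ff
    rw [show sg y ^ p * (γ * ∫ y_1, ‖y - y_1‖ ^ p * Ft y_1) = sg y ^ p * ut y from rfl, hV y hy]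

/-- Comparison with the normalisation. -/
lemma v_le (h : Sol n p γ ε α u) (hn : 1 ≤ n) (hγ : 0 < γ) (hε : 0 ≤ ε) (hα : 0 ≤ α)
    (hnorm : ∀ x : EuclideanSpace ℝ (Fin n), sg x ^ p * (γ * ∫ y, ‖x - y‖ ^ p * sg y ^ (2 * n + p)) = 1)
    {K : ℝ} (hK : ∀ y, Gf ε α (sg y ^ p * u y) ≤ K) (x) : sg x ^ p * u x ≤ K := by
  have hb := (base_int hn p le_rfl x).const_mul K
  have hs := sg_pos x
  have h1 : ∫ y, ‖x - y‖ ^ p * Ff n p ε α u y ≤ ∫ y, K * ((0 + ‖y - x‖) ^ p * sg y ^ (2 * n + p)) := by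
    apply integral_mono (h.int_pow hn hε hα x) hb
    intro y
    have := sg_pos y
    simp only [zero_add, Ff]
    rw [norm_sub_rev x y, mul_left_comm]
    rw [← mul_assoc, mul_comm K]
    calc _ = ‖y - x‖ ^ p * sg y ^ (2 * n + p) * Gf ε α (sg y ^ p * u y) := by ring
      _ ≤ _ := mul_le_mul_of_nonneg_left (hK y) (by positivity)
  rw [integral_const_mul] at h1
  simp only [zero_add, fun y => norm_sub_rev y x] at h1
  rw [h.eq]
  calc _ ≤ sg x ^ p * (γ * (K * ∫ y, ‖x - y‖ ^ p * sg y ^ (2 * n + p))) := by gcongr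
    _ = K * (sg x ^ p * (γ * ∫ y, ‖x - y‖ ^ p * sg y ^ (2 * n + p))) := by ring
    _ = K := by rw [hnorm, mul_one]

lemma v_ge (h : Sol n p γ ε α u) (hn : 1 ≤ n) (hγ : 0 < γ) (hε : 0 ≤ ε) (hα : 0 ≤ α)
    (hnorm : ∀ x : EuclideanSpace ℝ (Fin n), sg x ^ p * (γ * ∫ y, ‖x - y‖ ^ p * sg y ^ (2 * n + p)) = 1)
    {K : ℝ} (hK : ∀ y, K ≤ Gf ε α (sg y ^ p * u y)) (x) : K ≤ sg x ^ p * u x := by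
  have hb := (base_int hn p le_rfl x).const_mul K
  have hs := sg_pos x
  have h1 : ∫ y, K * ((0 + ‖y - x‖) ^ p * sg y ^ (2 * n + p)) ≤ ∫ y, ‖x - y‖ ^ p * Ff n p ε α u y := by
    apply integral_mono hb (h.int_pow hn hε hα x)
    intro y
    have := sg_pos y
    simp only [zero_add, Ff]
    rw [norm_sub_rev x y, mul_left_comm (‖y - x‖ ^ p)]
    rw [← mul_assoc, mul_comm K]
    calc _ = ‖y - x‖ ^ p * sg y ^ (2 * n + p) * K := by ring
      _ ≤ ‖y - x‖ ^ p * sg y ^ (2 * n + p) * Gf ε α (sg y ^ p * u y) :=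
        mul_le_mul_of_nonneg_left (hK y) (by positivity)
      _ = _ := by ring
  rw [integral_const_mul] at h1
  simp only [zero_add, fun y => norm_sub_rev y x] at h1
  rw [h.eq]
  calc K = K * (sg x ^ p * (γ * ∫ y, ‖x - y‖ ^ p * sg y ^ (2 * n + p))) := by rw [hnorm, mul_one]
    _ = sg x ^ p * (γ * (K * ∫ y, ‖x - y‖ ^ p * sg y ^ (2 * n + p))) := by ring
    _ ≤ _ := by gcongr

lemma bddAbove (h : Sol n p γ ε α u) : BddAbove (Set.range fun x => sg x ^ p * u x) := by
  obtain ⟨c, C, hc, hb⟩ := h.bdd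
  exact ⟨C, by rintro _ ⟨x, rfl⟩; exact (hb x).2⟩

lemma bddBelow (h : Sol n p γ ε α u) : BddBelow (Set.range fun x => sg x ^ p * u x) := by
  obtain ⟨c, C, hc, hb⟩ := h.bdd
  exact ⟨c, by rintro _ ⟨x, rfl⟩; exact (hb x).1⟩

/-- value of a constant solution -/
lemma const_val {κ : ℝ} (hκ : 0 < κ) (hε1 : ε < 1) (hα : 0 < α) (he : κ = Gf ε α κ) :
    κ = (1 - ε) ^ (-1 / (α + 1)) := by
  unfold Gf at he
  have h1 : (1 - ε) = κ ^ (-(α + 1)) := by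
    have h2 : κ ^ (-(α + 1)) = κ ^ (-α) / κ := by
      rw [← Real.rpow_sub_one hκ.ne']; congr 1; ring
    rw [h2, eq_div_iff hκ.ne']; linarith
  rw [h1, ← Real.rpow_mul hκ.le]
  have : -(α + 1) * (-1 / (α + 1)) = 1 := by field_simp
  rw [this, Real.rpow_one]

lemma of_const (h : Sol n p γ ε α u) (hn : 1 ≤ n) (hγ : 0 < γ) (hε : 0 < ε) (hε1 : ε < 1) (hα : 0 < α)
    (hnorm : ∀ x : EuclideanSpace ℝ (Fin n), sg x ^ p * (γ * ∫ y, ‖x - y‖ ^ p * sg y ^ (2 * n + p)) = 1)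
    {κ : ℝ} (hκ : ∀ x, sg x ^ p * u x = κ) : κ = (1 - ε) ^ (-1 / (α + 1)) := by
  have hp : 0 < κ := hκ 0 ▸ h.v_pos 0
  apply const_val hp hε1 hα
  apply le_antisymm
  · rw [← hκ 0]; exact h.v_le hn hγ hε.le hα.le hnorm (fun y => by rw [hκ, hκ]) 0
  · conv_rhs => rw [← hκ 0]
    exact h.v_ge hn hγ hε.le hα.le hnorm (fun y => by rw [hκ]) 0

/-- The case `α < 1`. -/
lemma small_alpha (h : Sol n p γ ε α u) (hn : 1 ≤ n) (hγ : 0 < γ) (hε : 0 < ε) (hε1 : ε < 1) (hα : 0 < α)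
    (hα1 : α < 1)
    (hnorm : ∀ x : EuclideanSpace ℝ (Fin n), sg x ^ p * (γ * ∫ y, ‖x - y‖ ^ p * sg y ^ (2 * n + p)) = 1) :
    ∃ κ, ∀ x, sg x ^ p * u x = κ := by
  obtain ⟨c, C, hc, hb⟩ := h.bdd
  set v : EuclideanSpace ℝ (Fin n) → ℝ := fun x => sg x ^ p * u x with hv
  set M := ⨆ x, v x with hM
  set μ := ⨅ x, v x with hμ
  have hvM : ∀ x, v x ≤ M := fun x => le_ciSup h.bddAbove x
  have hvμ : ∀ x, μ ≤ v x := fun x => ciInf_le h.bddBelow x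
  have hμ0 : 0 < μ := hc.trans_le (le_ciInf fun x => (hb x).1)
  have hM0 : 0 < M := hμ0.trans_le ((hvμ 0).trans (hvM 0))
  have h1 : M ≤ ε * M + μ ^ (-α) := by
    apply ciSup_le
    refine h.v_le hn hγ hε.le hα.le hnorm fun y => ?_
    exact add_le_add (mul_le_mul_of_nonneg_left (hvM y) hε.le)
      (Real.rpow_le_rpow_of_nonpos hμ0 (hvμ y) (by linarith))
  have h2 : ε * μ + M ^ (-α) ≤ μ := by
    apply le_ciInf
    refine h.v_ge hn hγ hε.le hα.le hnorm fun y => ?_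
    exact add_le_add (mul_le_mul_of_nonneg_left (hvμ y) hε.le)
      (Real.rpow_le_rpow_of_nonpos (h.v_pos y) (hvM y) (by linarith))
  have e0 : 0 < 1 - ε := by linarith
  have h3 : Real.log ((1 - ε) * M) ≤ Real.log (μ ^ (-α)) :=
    Real.log_le_log (by positivity) (by linarith)
  have h4 : Real.log (M ^ (-α)) ≤ Real.log ((1 - ε) * μ) :=
    Real.log_le_log (by positivity) (by linarith)
  rw [Real.log_mul e0.ne' hM0.ne', Real.log_rpow hμ0] at h3
  rw [Real.log_mul e0.ne' hμ0.ne', Real.log_rpow hM0] at h4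
  have h5 : Real.log M ≤ Real.log μ := by nlinarith
  have h6 : M ≤ μ := (Real.log_le_log_iff hM0 hμ0).1 h5
  exact ⟨M, fun x => le_antisymm (hvM x) (h6.trans (hvμ x))⟩

lemma exists_small (h : Sol n p γ ε α u) (hn : 1 ≤ n) (hγ : 0 < γ) (hε : 0 < ε) (hε1 : ε ≤ 1 / 2) (hα : 0 < α)
    (hnorm : ∀ x : EuclideanSpace ℝ (Fin n), sg x ^ p * (γ * ∫ y, ‖x - y‖ ^ p * sg y ^ (2 * n + p)) = 1) :
    ∃ x, x ≠ 0 ∧ sg x ^ p * u x ≤ 4 := by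
  have : Nonempty (Fin n) := ⟨⟨0, by omega⟩⟩
  by_contra! hcon
  have hcon' : ∀ x, 4 ≤ sg x ^ p * u x := by
    have hcl : IsClosed {x | 4 ≤ sg x ^ p * u x} := isClosed_le continuous_const h.v_cont
    have hd : Dense ({0}ᶜ : Set (EuclideanSpace ℝ (Fin n))) := dense_compl_singleton 0
    have hsub : ({0}ᶜ : Set (EuclideanSpace ℝ (Fin n))) ⊆ {x | 4 ≤ sg x ^ p * u x} := by
      intro x hx
      exact (hcon x hx).le
    exact fun x => hcl.closure_subset_iff.2 hsub (hd x)
  have hvM : ∀ x, sg x ^ p * u x ≤ ⨆ x, sg x ^ p * u x := fun x => le_ciSup h.bddAbove x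
  set M := ⨆ x, sg x ^ p * u x
  have h1 : M ≤ ε * M + 1 := by
    apply ciSup_le
    refine h.v_le hn hγ hε.le hα.le hnorm fun y => ?_
    refine add_le_add (mul_le_mul_of_nonneg_left (hvM y) hε.le) ?_
    exact Real.rpow_le_one_of_one_le_of_nonpos (by linarith [hcon' y]) (by linarith)
  have := hvM 0
  have := hcon' 0
  nlinarith

set_option maxHeartbeats 1000000 in
lemma harnack (h : Sol n p γ ε α u) (hn : 1 ≤ n) (hp : 1 ≤ p) (hγ : 0 < γ) (hε : 0 < ε) (hα : 0 < α)
    (hαp : α * p ≤ 2 * n + p) {T : ℝ} (hT : (8 : ℝ) * 4 ^ p < T)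
    (hd : ∀ t, 0 < t → t ≤ T → ε ≤ α * t ^ (-α - 1))
    {x0 : EuclideanSpace ℝ (Fin n)} (hx0 : ‖x0‖ ≤ 1) (hv0 : sg x0 ^ p * u x0 ≤ 4) (x) :
    sg x ^ p * u x ≤ 8 * 4 ^ p := by
  obtain ⟨I, hI⟩ : ∃ I, I = γ * ∫ y, Ff n p ε α u y := ⟨_, rfl⟩
  have hFi : Integrable (fun y => Ff n p ε α u y) := by
    have := h.int hn hε.le hα.le (k := fun _ => 1) measurable_const (C := 1) (a := 1) zero_le_one 0
      (fun y => by
        rw [one_mul, abs_one]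
        exact one_le_pow₀ (by have := norm_nonneg (y - 0); linarith))
    simpa using this
  have hI0 : 0 ≤ I := hI ▸ mul_nonneg hγ.le (integral_nonneg fun y => (h.F_pos hε.le y).le)
  have hs1 : 1 ≤ sg x0 := by
    unfold sg
    rw [Real.one_le_sqrt, le_div_iff₀ (by positivity)]
    have := norm_nonneg x0
    nlinarith
  have hu0 : u x0 ≤ 4 := by
    have h1 : 1 ≤ sg x0 ^ p := one_le_pow₀ hs1
    have := h.u_pos x0
    nlinarith
  have hsg2 : ∀ x : EuclideanSpace ℝ (Fin n), sg x ≤ 2 := fun x => (sg_le x).trans (by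
    rw [div_le_iff₀ (by positivity)]
    have := norm_nonneg x
    linarith)
  have hshape : ∀ x, sg x ^ p * u x ≤ 2 ^ p * ((sg x * ‖x - x0‖) ^ p * I + 2 ^ p * 4) := by
    intro x
    have hs := sg_pos x
    have h1 : u x ≤ 2 ^ p * (‖x - x0‖ ^ p * I + u x0) := by
      have e : 2 ^ p * (‖x - x0‖ ^ p * I + u x0) = γ * ∫ y, 2 ^ p *
          (‖x - x0‖ ^ p * Ff n p ε α u y + ‖x0 - y‖ ^ p * Ff n p ε α u y) := by
        rw [integral_const_mul, integral_add (hFi.const_mul _) (h.int_pow hn hε.le hα.le x0),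
          integral_const_mul, h.eq x0, hI]
        ring
      rw [e, h.eq x]
      refine mul_le_mul_of_nonneg_left ?_ hγ.le
      apply integral_mono (h.int_pow hn hε.le hα.le x)
      · exact ((hFi.const_mul _).add (h.int_pow hn hε.le hα.le x0)).const_mul _
      intro y
      have hF := (h.F_pos hε.le y).le
      simp only
      rw [← add_mul, ← mul_assoc]
      refine mul_le_mul_of_nonneg_right ?_ hF
      have h2 : ‖x - y‖ ≤ ‖x - x0‖ + ‖x0 - y‖ := norm_sub_le_norm_sub_add_norm_sub x x0 y
      calc ‖x - y‖ ^ p ≤ (‖x - x0‖ + ‖x0 - y‖) ^ p := by gcongr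
        _ ≤ 2 ^ (p - 1) * (‖x - x0‖ ^ p + ‖x0 - y‖ ^ p) :=
          add_pow_le (norm_nonneg _) (norm_nonneg _) p
        _ ≤ _ := by
          gcongr
          · norm_num
          · omega
    have h3 : sg x ^ p ≤ 2 ^ p := pow_le_pow_left₀ hs.le (hsg2 x) p
    calc sg x ^ p * u x ≤ sg x ^ p * (2 ^ p * (‖x - x0‖ ^ p * I + u x0)) := by gcongr
      _ = 2 ^ p * ((sg x * ‖x - x0‖) ^ p * I + sg x ^ p * u x0) := by rw [mul_pow]; ring
      _ ≤ _ := by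
        have := (h.u_pos x0).le
        gcongr
  have e4 : (4 : ℝ) ^ p = 2 ^ p * 2 ^ p := by rw [← mul_pow]; norm_num
  have hball : ∀ y, ‖y - x0‖ ≤ 1 → sg y ^ p * u y < T := by
    by_contra! hcon
    obtain ⟨y0, hy0, hy0T⟩ := hcon
    have hcl : IsClosed {y | T ≤ sg y ^ p * u y} := isClosed_le continuous_const h.v_cont
    have hcomp : IsCompact (Metric.closedBall x0 1 ∩ {y | T ≤ sg y ^ p * u y}) :=
      (isCompact_closedBall x0 1).inter_right hcl
    obtain ⟨x1, ⟨hx1, hx1T⟩, hmin⟩ := hcomp.exists_isMinOn ⟨y0, by simpa [dist_eq_norm] using hy0, hy0T⟩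
      (f := fun y => ‖y - x0‖) (by fun_prop)
    rw [Metric.mem_closedBall, dist_eq_norm] at hx1
    have hx1T : T ≤ sg x1 ^ p * u x1 := hx1T
    have hms := h.MS_center hn hp hγ hε hα hαp x0 (norm_nonneg (x1 - x0))
      (by nlinarith [norm_nonneg (x1 - x0), norm_nonneg x0]) (by
        intro y hy
        refine hd _ (h.v_pos y) ?_
        by_contra! hyT
        have := hmin (a := y) ⟨by rw [Metric.mem_closedBall, dist_eq_norm]; linarith, hyT.le⟩
        simp only [Set.mem_ofPred_eq] at this
        linarith)
    rw [← hI] at hms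
    have h5 := hshape x1
    have hs := sg_pos x1
    have h6 : (sg x1 * ‖x1 - x0‖) ^ p * I ≤ 2 ^ p * 4 := by
      rw [mul_pow, mul_assoc]
      have := pow_le_pow_left₀ hs.le (hsg2 x1) p
      have h7 : ‖x1 - x0‖ ^ p * I ≤ 4 := hms.trans hu0
      exact mul_le_mul this h7 (mul_nonneg (by positivity) hI0) (by positivity)
    have h8 : 2 ^ p * ((sg x1 * ‖x1 - x0‖) ^ p * I + 2 ^ p * 4) ≤ 2 ^ p * (2 ^ p * 4 + 2 ^ p * 4) := by
      gcongr
    rw [e4] at hT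
    linarith
  have hms := h.MS_center hn hp hγ hε hα hαp x0 zero_le_one
      (by nlinarith [norm_nonneg x0]) (fun y hy => hd _ (h.v_pos y) (hball y hy.le).le)
  rw [one_pow, one_mul, ← hI] at hms
  have h5 := hshape x
  have hs := sg_pos x
  have h6 : sg x * ‖x - x0‖ ≤ 2 := by
    have h1 := sg_le x
    have h2 := norm_sub_le x x0
    have h3 := norm_nonneg x
    rw [le_div_iff₀ (by positivity)] at h1
    nlinarith
  have h7 : (sg x * ‖x - x0‖) ^ p * I ≤ 2 ^ p * 4 :=
    mul_le_mul (pow_le_pow_left₀ (by positivity) h6 p) (hms.trans hu0) hI0 (by positivity)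
  have h8 : 2 ^ p * ((sg x * ‖x - x0‖) ^ p * I + 2 ^ p * 4) ≤ 2 ^ p * (2 ^ p * 4 + 2 ^ p * 4) := by
    gcongr
  rw [e4]
  linarith

lemma mono (h : Sol n p γ ε α u) (hn : 1 ≤ n) (hp : 1 ≤ p) (hγ : 0 < γ) (hε : 0 < ε) (hα : 0 < α)
    (hαp : α * p ≤ 2 * n + p) (hd : ∀ y, ε ≤ α * (sg y ^ p * u y) ^ (-α - 1))
    {x y : EuclideanSpace ℝ (Fin n)} (hxy : ‖x‖ < ‖y‖) : sg y ^ p * u y ≤ sg x ^ p * u x := by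
  have hx := norm_nonneg x
  have hD : 0 < ‖y‖ ^ 2 - ‖x‖ ^ 2 := by nlinarith
  set t := (1 + ‖x‖ ^ 2) / (‖y‖ ^ 2 - ‖x‖ ^ 2) with ht
  have ht0 : 0 < t := by positivity
  have hne : y - x ≠ 0 := by
    intro h; rw [sub_eq_zero] at h; rw [h] at hxy; exact lt_irrefl _ hxy
  have hd0 : 0 < ‖y - x‖ := norm_pos_iff.2 hne
  set x0 := x - t • (y - x) with hx0
  have hL2 : 1 + ‖x0‖ ^ 2 = t * (t + 1) * ‖y - x‖ ^ 2 := by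
    rw [hx0, norm_sub_sq_real x (t • (y - x)), real_inner_smul_right, norm_smul, Real.norm_eq_abs,
      abs_of_pos ht0, inner_sub_right, real_inner_self_eq_norm_sq, mul_pow, norm_sub_sq_real y x,
      real_inner_comm]
    set i : ℝ := inner ℝ y x
    have : t * (‖y‖ ^ 2 - ‖x‖ ^ 2) = 1 + ‖x‖ ^ 2 := by rw [ht]; field_simp
    linear_combination -this
  set L := √(1 + ‖x0‖ ^ 2) with hLdef
  have hL : 0 < L := by rw [hLdef]; positivity
  have hLL : L ^ 2 = 1 + ‖x0‖ ^ 2 := Real.sq_sqrt (by positivity)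
  set z := (t / L) • (y - x) with hz
  have hzn : ‖z‖ = t / L * ‖y - x‖ := by
    rw [hz, norm_smul, Real.norm_eq_abs, abs_of_pos (by positivity)]
  have hz2 : ‖z‖ ^ 2 = t / (t + 1) := by
    rw [hzn, mul_pow, div_pow, hLL, hL2]; field_simp
  have hz1 : ‖z‖ ≤ 1 := by
    apply le_of_sq_le_sq (b := 1) _ zero_le_one |> fun h => h
    rw [hz2, one_pow, div_le_one (by positivity)]; linarith
  have hz0 : z ≠ 0 := by
    rw [← norm_pos_iff, hzn]; positivity
  have e1 : x0 + L • z = x := by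
    rw [hz, smul_smul, mul_div_cancel₀ _ hL.ne', hx0]; abel
  have e2 : x0 + (L / ‖z‖ ^ 2) • z = y := by
    rw [hz2, hz, smul_smul]
    have : L / (t / (t + 1)) * (t / L) = t + 1 := by field_simp
    rw [this, hx0, add_smul, one_smul]; abel
  have key := h.MS_refl hn hp hγ hε hα hαp x0 hL.le hLL.le (fun y _ => hd y) hz1 hz0
  rw [e1, e2] at key
  have hs : sg y = sg x * ‖z‖ := by
    apply (sq_eq_sq₀ (sg_pos _).le (mul_nonneg (sg_pos _).le (norm_nonneg _))).1
    rw [mul_pow, sg_sq, sg_sq, hz2, ht]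
    field_simp
    ring
  rw [hs, mul_pow, mul_assoc]
  exact mul_le_mul_of_nonneg_left key (pow_nonneg (sg_pos x).le p)

lemma const_of (h : Sol n p γ ε α u) (hn : 1 ≤ n) (hp : 1 ≤ p) (hγ : 0 < γ) (hε : 0 < ε) (hε1 : ε ≤ 1 / 2)
    (hα : 0 < α) (hαp : α * p ≤ 2 * n + p) {T : ℝ} (hT : (8 : ℝ) * 4 ^ p < T)
    (hd : ∀ t, 0 < t → t ≤ T → ε ≤ α * t ^ (-α - 1))
    (hnorm : ∀ x : EuclideanSpace ℝ (Fin n), sg x ^ p * (γ * ∫ y, ‖x - y‖ ^ p * sg y ^ (2 * n + p)) = 1) :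
    ∃ κ, ∀ x, sg x ^ p * u x = κ := by
  have : Nonempty (Fin n) := ⟨⟨0, by omega⟩⟩
  obtain ⟨ut, hut, hV⟩ := h.kelvin hn hε.le hα.le
  set ι : EuclideanSpace ℝ (Fin n) → EuclideanSpace ℝ (Fin n) := EuclideanGeometry.inversion 0 1 with hι
  have hιn : ∀ x, ‖ι x‖ = 1 / ‖x‖ := by
    intro x
    have := EuclideanGeometry.dist_inversion_center (0 : EuclideanSpace ℝ (Fin n)) x 1
    simpa [dist_eq_norm] using this
  have hι0 : ∀ x, x ≠ 0 → ι x ≠ 0 := fun x hx => by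
    rw [hι]; exact (EuclideanGeometry.inversion_eq_center one_ne_zero).not.2 hx
  have hιι : ∀ x, ι (ι x) = x := fun x => EuclideanGeometry.inversion_inversion 0 one_ne_zero x
  have hdense : Dense ({0}ᶜ : Set (EuclideanSpace ℝ (Fin n))) := dense_compl_singleton 0
  have hV' : ∀ x, x ≠ 0 → sg (ι x) ^ p * ut (ι x) = sg x ^ p * u x := by
    intro x hx
    rw [hV _ (hι0 x hx), hιι]
  have ext : ∀ w w' : EuclideanSpace ℝ (Fin n) → ℝ, Sol n p γ ε α w → (∀ x, sg x ^ p * w x ≤ 8 * 4 ^ p) →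
      Sol n p γ ε α w' → (∀ x, x ≠ 0 → sg x ^ p * w' x = sg (ι x) ^ p * w (ι x)) → 
      (∀ x, sg x ^ p * w' x ≤ 8 * 4 ^ p) := by
    intro w w' _ hb hw' he
    have hcl : IsClosed {x | sg x ^ p * w' x ≤ 8 * 4 ^ p} := isClosed_le hw'.v_cont continuous_const
    have hsub : ({0}ᶜ : Set (EuclideanSpace ℝ (Fin n))) ⊆ {x | sg x ^ p * w' x ≤ 8 * 4 ^ p} := by
      intro x hx
      change sg x ^ p * w' x ≤ 8 * 4 ^ p
      rw [he x hx]; exact hb _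
    exact fun x => hcl.closure_subset_iff.2 hsub (hdense x)
  have hbu : (∀ x, sg x ^ p * u x ≤ 8 * 4 ^ p) ∧ (∀ x, sg x ^ p * ut x ≤ 8 * 4 ^ p) := by
    obtain ⟨x0, hx00, hx0⟩ := h.exists_small hn hγ hε hε1 hα hnorm
    rcases le_total ‖x0‖ 1 with h1 | h1
    · have := h.harnack hn hp hγ hε hα hαp hT hd h1 hx0
      exact ⟨this, ext u ut h this hut hV⟩
    · have := hut.harnack hn hp hγ hε hα hαp hT hd (x0 := ι x0)
        (by rw [hιn]; exact (div_le_one (by linarith)).2 h1) (by rw [hV' _ hx00]; exact hx0)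
      exact ⟨ext ut u hut this h (fun x hx => (hV' x hx).symm), this⟩
  have hdu : ∀ y, ε ≤ α * (sg y ^ p * u y) ^ (-α - 1) := fun y =>
    hd _ (h.v_pos y) ((hbu.1 y).trans hT.le)
  have hdut : ∀ y, ε ≤ α * (sg y ^ p * ut y) ^ (-α - 1) := fun y =>
    hd _ (hut.v_pos y) ((hbu.2 y).trans hT.le)
  have heq : ∀ x y : EuclideanSpace ℝ (Fin n), x ≠ 0 → ‖x‖ < ‖y‖ → sg x ^ p * u x = sg y ^ p * u y := by
    intro x y hx hxy
    have hx0 := norm_pos_iff.2 hx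
    have hy : y ≠ 0 := norm_pos_iff.1 (hx0.trans hxy)
    apply le_antisymm
    · rw [← hV' x hx, ← hV' y hy]
      apply hut.mono hn hp hγ hε hα hαp hdut
      rw [hιn, hιn]
      exact one_div_lt_one_div_of_lt hx0 hxy
    · exact h.mono hn hp hγ hε hα hαp hdu hxy
  obtain ⟨e, he⟩ := exists_ne (0 : EuclideanSpace ℝ (Fin n))
  have he0 := norm_pos_iff.2 he
  refine ⟨sg e ^ p * u e, ?_⟩
  have hcl : IsClosed {x | sg x ^ p * u x = sg e ^ p * u e} := isClosed_eq h.v_cont continuous_const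
  have hsub : ({0}ᶜ : Set (EuclideanSpace ℝ (Fin n))) ⊆ {x | sg x ^ p * u x = sg e ^ p * u e} := by
    intro x hx
    change sg x ^ p * u x = sg e ^ p * u e
    have hw : ‖((1 + ‖x‖ + ‖e‖) / ‖e‖) • e‖ = 1 + ‖x‖ + ‖e‖ := by
      rw [norm_smul, Real.norm_eq_abs, abs_of_pos (by positivity)]; field_simp
    rw [heq x (((1 + ‖x‖ + ‖e‖) / ‖e‖) • e) hx (by rw [hw]; linarith),
      heq e (((1 + ‖x‖ + ‖e‖) / ‖e‖) • e) he (by rw [hw]; linarith [norm_nonneg x])]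
  exact fun x => hcl.closure_subset_iff.2 hsub (hdense x)

end Sol
end SphL

namespace SphL

lemma sg_rpow {n : ℕ} (x : EuclideanSpace ℝ (Fin n)) (r : ℝ) :
    (2 / (1 + ‖x‖ ^ 2)) ^ r = sg x ^ (2 * r) := by
  rw [← sg_sq, ← Real.rpow_natCast, ← Real.rpow_mul (sg_pos x).le]; norm_num

lemma sg_inv_rpow {n p : ℕ} (x : EuclideanSpace ℝ (Fin n)) :
    ((1 + ‖x‖ ^ 2) / 2) ^ ((p : ℝ) / 2) = (sg x ^ p)⁻¹ := by
  have h : (1 + ‖x‖ ^ 2) / 2 = (2 / (1 + ‖x‖ ^ 2))⁻¹ := by rw [inv_div]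
  rw [h, Real.inv_rpow (by positivity), sg_rpow, ← Real.rpow_natCast]
  congr 2; ring

lemma sphF_eq {n m p : ℕ} (hp : n + p = 2 * m) (ε α : ℝ) {u : EuclideanSpace ℝ (Fin n) → ℝ}
    (y : EuclideanSpace ℝ (Fin n)) (hu : 0 < u y) : sphF n m ε α u y = Ff n p ε α u y := by
  have hs := sg_pos y
  have hp' : (2 * m : ℝ) = n + p := by exact_mod_cast hp.symm
  unfold sphF Ff Gf
  rw [sg_rpow, ← sg_sq, ← pow_mul, Real.mul_rpow (by positivity) hu.le, ← Real.rpow_natCast (sg y) p,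
    ← Real.rpow_mul hs.le, mul_add (sg y ^ (2 * n + p))]
  congr 1
  · rw [Real.rpow_natCast, ← hp]; ring
  · rw [← Real.rpow_natCast, ← mul_assoc, ← Real.rpow_add hs]
    congr 2
    push_cast
    rw [hp']; ring

end SphL

/-- Liouville result: there is `ε_* ∈ (0,1)`, depending only on `n` and `m`, such that
for `ε ∈ (0, ε_*)` and `α ∈ (0, (n+2m)/(2m−n)]`, any positive smooth solution of
`u(x) = γ ∫ |x−y|^{2m−n} F_{ε,u}(y) dy` with growth `u ≍ (1+|x|²)^{(2m−n)/2}` equals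
`(1−ε)^{−1/(α+1)} ((1+|x|²)/2)^{(2m−n)/2}`. -/
theorem stmt13 (n m : ℕ) (hn : 3 ≤ n) (hodd : Odd n) (hmn : n < 2 * m)
    (γ : ℝ) (hγ : 0 < γ)
    (hγeq : ∀ x : EuclideanSpace ℝ (Fin n),
      ((1 + ‖x‖ ^ 2) / 2) ^ ((2 * (m : ℝ) - n) / 2) =
        γ * ∫ y, ‖x - y‖ ^ (2 * m - n) * (2 / (1 + ‖y‖ ^ 2)) ^ (((n : ℝ) + 2 * m) / 2)) :
    ∃ εs : ℝ, 0 < εs ∧ εs < 1 ∧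
      ∀ ε : ℝ, 0 < ε → ε < εs →
      ∀ α : ℝ, 0 < α → α ≤ ((n : ℝ) + 2 * m) / (2 * (m : ℝ) - n) →
      ∀ u : EuclideanSpace ℝ (Fin n) → ℝ, ContDiff ℝ (⊤ : ℕ∞) u → (∀ x, 0 < u x) →
      (∃ c : ℝ, 0 < c ∧ ∀ x,
        c⁻¹ * (1 + ‖x‖ ^ 2) ^ ((2 * (m : ℝ) - n) / 2) ≤ u x ∧
          u x ≤ c * (1 + ‖x‖ ^ 2) ^ ((2 * (m : ℝ) - n) / 2)) →
      (∀ x, u x = γ * ∫ y, ‖x - y‖ ^ (2 * m - n) * sphF n m ε α u y) →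
      ∀ x : EuclideanSpace ℝ (Fin n),
        u x = (1 - ε) ^ (-1 / (α + 1)) * ((1 + ‖x‖ ^ 2) / 2) ^ ((2 * (m : ℝ) - n) / 2) := by
  obtain ⟨p, hp⟩ : ∃ p, n + p = 2 * m := ⟨2 * m - n, by omega⟩
  have hpm : 2 * m - n = p := by omega
  have hp1 : 1 ≤ p := by omega
  have hpR : (2 * (m : ℝ) - n) = p := by
    have : ((n + p : ℕ) : ℝ) = ((2 * m : ℕ) : ℝ) := by rw [hp]
    push_cast at this; linarith
  have hnR : (n : ℝ) + 2 * m = 2 * n + p := by linarith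
  have hpp : (0 : ℝ) < p := by exact_mod_cast hp1
  have hn1 : 1 ≤ n := by omega
  simp only [hpm, hpR, hnR] at hγeq ⊢
  have hnorm : ∀ x : EuclideanSpace ℝ (Fin n),
      SphL.sg x ^ p * (γ * ∫ y, ‖x - y‖ ^ p * SphL.sg y ^ (2 * n + p)) = 1 := by
    intro x
    have h1 := hγeq x
    have h2 : ∀ y : EuclideanSpace ℝ (Fin n),
        (2 / (1 + ‖y‖ ^ 2)) ^ ((2 * (n : ℝ) + p) / 2) = SphL.sg y ^ (2 * n + p) := by
      intro y
      rw [SphL.sg_rpow, ← Real.rpow_natCast]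
      congr 1; push_cast; ring
    simp only [h2] at h1
    rw [← h1, SphL.sg_inv_rpow]
    exact mul_inv_cancel₀ (pow_pos (SphL.sg_pos x) p).ne'
  set αc : ℝ := (2 * (n : ℝ) + p) / p with hαc
  have hT1 : (1 : ℝ) ≤ 8 * 4 ^ p + 1 := by
    have : (0 : ℝ) ≤ 4 ^ p := by positivity
    linarith
  have hT : (8 : ℝ) * 4 ^ p < 8 * 4 ^ p + 1 := by linarith
  generalize (8 : ℝ) * 4 ^ p + 1 = T at hT1 hT
  have hT0 : 0 < T := by linarith
  refine ⟨min (1 / 2) (T ^ (-(αc + 1))), lt_min (by norm_num) (by positivity),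
    (min_le_left _ _).trans_lt (by norm_num), ?_⟩
  intro ε hε hεs α hα hααc u hu hupos hbd heq
  have hε2 : ε ≤ 1 / 2 := (hεs.trans_le (min_le_left _ _)).le
  have hε3 : ε ≤ T ^ (-(αc + 1)) := (hεs.trans_le (min_le_right _ _)).le
  have hS : SphL.Sol n p γ ε α u := by
    refine ⟨hu.continuous, ?_, ?_⟩
    · obtain ⟨c, hc, hb⟩ := hbd
      refine ⟨c⁻¹ * 2 ^ ((p : ℝ) / 2), c * 2 ^ ((p : ℝ) / 2), by positivity, fun x => ?_⟩
      have hs := pow_pos (SphL.sg_pos x) p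
      have e : (1 + ‖x‖ ^ 2) ^ ((p : ℝ) / 2) = 2 ^ ((p : ℝ) / 2) * (SphL.sg x ^ p)⁻¹ := by
        rw [← SphL.sg_inv_rpow, ← Real.mul_rpow (by norm_num) (by positivity)]
        congr 1; ring
      have := hb x
      rw [e] at this
      constructor
      · calc _ = SphL.sg x ^ p * (c⁻¹ * (2 ^ ((p : ℝ) / 2) * (SphL.sg x ^ p)⁻¹)) := by field_simp
          _ ≤ _ := mul_le_mul_of_nonneg_left this.1 hs.le
      · calc _ ≤ SphL.sg x ^ p * (c * (2 ^ ((p : ℝ) / 2) * (SphL.sg x ^ p)⁻¹)) :=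
            mul_le_mul_of_nonneg_left this.2 hs.le
          _ = _ := by field_simp
    · intro x
      rw [heq x]
      congr 2
      funext y
      rw [SphL.sphF_eq hp ε α y (hupos y)]
  have hconst : ∃ κ, ∀ x, SphL.sg x ^ p * u x = κ := by
    rcases lt_or_ge α 1 with h1 | h1
    · exact hS.small_alpha hn1 hγ hε (by linarith) hα h1 hnorm
    · refine hS.const_of hn1 hp1 hγ hε hε2 hα ?_ hT ?_ hnorm
      · rwa [hαc, le_div_iff₀ hpp] at hααc
      · intro t ht htT
        have h2 : T ^ (-(αc + 1)) ≤ t ^ (-α - 1) :=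
          calc T ^ (-(αc + 1)) ≤ T ^ (-α - 1) := Real.rpow_le_rpow_of_exponent_le hT1 (by linarith)
            _ ≤ t ^ (-α - 1) := Real.rpow_le_rpow_of_nonpos ht htT (by linarith)
        have h3 : 0 < t ^ (-α - 1) := Real.rpow_pos_of_pos ht _
        nlinarith
  obtain ⟨κ, hκ⟩ := hconst
  have hk := hS.of_const hn1 hγ hε (by linarith) hα hnorm hκ
  intro x
  have hs := pow_pos (SphL.sg_pos x) p
  rw [SphL.sg_inv_rpow, ← hk, ← hκ x]
  field_simp
end

section
/- Let ε^* ∈ (0,1) and α ∈ (0, (2m+n)/(2m−n)] be fixed. Then there exists a constant C > 0, depending only on n, m, ε^* and α, such that: for every ε ∈ (0, ε^*) and every positive smooth function u on ℝⁿ satisfying u(x) = γ ∫_{ℝⁿ} |x−y|^{2m−n} F_{ε,u}(y) dy for all x and admitting some constant c > 0 with c^{−1}(1+|x|²)^{(2m−n)/2} ≤ u(x) ≤ c(1+|x|²)^{(2m−n)/2} for all x, one has the uniform bounds C^{−1}(1+|x|²)^{(2m−n)/2} ≤ u(x) ≤ C(1+|x|²)^{(2m−n)/2} for all x ∈ ℝⁿ.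 Moreover, if α < (2m+n)/(2m−n), the same conclusion holds for every ε ∈ [0, ε^*). -/
open MeasureTheory

namespace Sph14

abbrev EE (n : ℕ) := EuclideanSpace ℝ (Fin n)

variable {n : ℕ}

/-- square root of the conformal factor -/
noncomputable def rho (x : EE n) : ℝ := √(2 / (1 + ‖x‖ ^ 2))

/-- chordal distance -/
noncomputable def cd (x y : EE n) : ℝ := ‖x - y‖ * rho x * rho y

/-- linear function on the sphere in direction `(a, b)` -/
noncomputable def zet (a : EE n) (b : ℝ) (x : EE n) : ℝ :=
  inner ℝ a x * rho x ^ 2 + b * (rho x ^ 2 - 1)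

/-- conformal vector field -/
noncomputable def XX (a : EE n) (b : ℝ) (x : EE n) : EE n :=
  ((1 + ‖x‖ ^ 2) / 2) • a - (inner ℝ a x + b) • x

lemma rho_pos (x : EE n) : 0 < rho x := by
  unfold rho; positivity

lemma rho_sq (x : EE n) : rho x ^ 2 = 2 / (1 + ‖x‖ ^ 2) := by
  unfold rho; exact Real.sq_sqrt (by positivity)

lemma rho_sq_mul (x : EE n) : rho x ^ 2 * (1 + ‖x‖ ^ 2) = 2 := by
  rw [rho_sq]; field_simp

lemma rho_le (x : EE n) : rho x ≤ 2 := by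
  have h := rho_sq_mul x
  have h1 := rho_pos x
  nlinarith [sq_nonneg (rho x * ‖x‖), sq_nonneg (rho x)]

lemma norm_mul_rho_le (x : EE n) : ‖x‖ * rho x ≤ 2 := by
  have h := rho_sq_mul x
  have h1 := rho_pos x
  nlinarith [sq_nonneg (rho x * ‖x‖ - 1), sq_nonneg (rho x)]

lemma rho_cont : Continuous (rho : EE n → ℝ) := by
  unfold rho
  refine Real.continuous_sqrt.comp ?_
  refine Continuous.div (by fun_prop) (by fun_prop) ?_
  intro x; positivity

lemma rho_hasFDerivAt (x : EE n) :
    HasFDerivAt (rho : EE n → ℝ) ((-(rho x ^ 3 / 2)) • innerSL ℝ x) x := by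
  have h1 : HasFDerivAt (fun y : EE n => ‖y‖ ^ 2) (2 • innerSL ℝ x) x :=
    (hasStrictFDerivAt_norm_sq x).hasFDerivAt
  have h3 : HasDerivAt (fun t : ℝ => √(2 / (1 + t)))
      (-(rho x ^ 3 / 4)) (‖x‖ ^ 2) := by
    have hp : (1 + ‖x‖ ^ 2) ≠ 0 := by positivity
    have h4 : HasDerivAt (fun t : ℝ => 2 / (1 + t)) (-2 / (1 + ‖x‖ ^ 2) ^ 2) (‖x‖ ^ 2) := by
      have := (hasDerivAt_const (‖x‖ ^ 2) (2 : ℝ)).div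
        ((hasDerivAt_id (‖x‖ ^ 2)).const_add 1) hp
      refine this.congr_deriv ?_
      simp
    have h5 := h4.sqrt (by positivity)
    convert h5 using 1
    have h6 : √(2 / (1 + ‖x‖ ^ 2)) = rho x := rfl
    rw [h6]
    have h7 : -2 / (1 + ‖x‖ ^ 2) ^ 2 = - (rho x ^ 2) ^ 2 / 2 := by
      rw [rho_sq]; field_simp
    rw [h7]
    have := (rho_pos x).ne'
    field_simp
    norm_num
  have := h3.comp_hasFDerivAt x h1
  refine this.congr_fderiv ?_
  ext h
  simp
  ring

lemma rho_pow_hasFDerivAt (k : ℕ) (x : EE n) :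
    HasFDerivAt (fun y : EE n => rho y ^ k)
      ((-((k : ℝ) / 2 * rho x ^ (k + 2))) • innerSL ℝ x) x := by
  have := (rho_hasFDerivAt x).pow k
  refine this.congr_fderiv ?_
  rcases k with _ | k
  · simp
  · ext h
    simp
    ring

lemma rho_pow_integrable {j : ℕ} (hj : n < j) :
    Integrable (fun x : EE n => rho x ^ j) := by
  have h := integrable_rpow_neg_one_add_norm_sq (E := EE n) (μ := volume) (r := j)
    (by simpa using hj)
  have h2 := h.const_mul (√2 ^ j)
  convert h2 using 2 with x
  unfold rho
  rw [Real.sqrt_div (by norm_num), div_pow, div_eq_mul_inv]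
  congr 1
  rw [Real.sqrt_eq_rpow, ← Real.rpow_natCast, ← Real.rpow_mul (by positivity),
    ← Real.rpow_neg (by positivity)]
  congr 1; ring

lemma integrable_of_bound {j : ℕ} (hj : n < j) {F : EE n → ℝ}
    (hF : AEStronglyMeasurable F volume) (C : ℝ)
    (h : ∀ x, |F x| ≤ C * rho x ^ j) : Integrable F :=
  ((rho_pow_integrable hj).const_mul C).mono' hF (Filter.Eventually.of_forall h)

lemma cd_symm (x y : EE n) : cd x y = cd y x := by
  unfold cd; rw [norm_sub_rev]; ring

lemma cd_nonneg (x y : EE n) : 0 ≤ cd x y := by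
  have := rho_pos x; have := rho_pos y
  unfold cd; positivity

/-- embedding in the unit sphere -/
noncomputable def emb (x : EE n) : WithLp 2 (EE n × ℝ) :=
  WithLp.toLp 2 ((rho x ^ 2) • x, rho x ^ 2 - 1)

lemma cd_sq (x y : EE n) : cd x y ^ 2 = ‖x - y‖ ^ 2 * rho x ^ 2 * rho y ^ 2 := by
  unfold cd; ring

lemma cd_eq (x y : EE n) : cd x y = ‖emb x - emb y‖ := by
  rw [← sq_eq_sq₀ (cd_nonneg x y) (norm_nonneg _), WithLp.prod_norm_sq_eq_of_L2, cd_sq]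
  simp only [WithLp.sub_fst, WithLp.sub_snd]
  change _ = ‖(rho x ^ 2) • x - (rho y ^ 2) • y‖ ^ 2 +
    ‖(rho x ^ 2 - 1) - (rho y ^ 2 - 1)‖ ^ 2
  rw [norm_sub_sq_real, norm_sub_sq_real, norm_smul, norm_smul, inner_smul_left,
    inner_smul_right]
  simp only [Real.norm_eq_abs, sq_abs, mul_pow, conj_trivial]
  have hx := rho_sq_mul x
  have hy := rho_sq_mul y
  set A := rho x ^ 2
  set B := rho y ^ 2
  set p := ‖x‖ ^ 2
  set q := ‖y‖ ^ 2
  have ex : A * p = 2 - A := by linarith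
  have ey : B * q = 2 - B := by linarith
  linear_combination (B - A) * ex + (A - B) * ey

lemma emb_norm (x : EE n) : ‖emb x‖ = 1 := by
  have : ‖emb x‖ ^ 2 = 1 := by
    rw [WithLp.prod_norm_sq_eq_of_L2]
    change ‖(rho x ^ 2) • x‖ ^ 2 + ‖(rho x ^ 2 - 1)‖ ^ 2 = 1
    rw [norm_smul]
    simp only [Real.norm_eq_abs, sq_abs, mul_pow]
    have hx := rho_sq_mul x
    linear_combination (rho x ^ 2) * hx
  nlinarith [norm_nonneg (emb x)]

lemma cd_le_two (x y : EE n) : cd x y ≤ 2 := by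
  rw [cd_eq]
  refine (norm_sub_le _ _).trans ?_
  rw [emb_norm, emb_norm]; norm_num

lemma cd_tri (x y z : EE n) : |cd x y - cd x z| ≤ cd z y := by
  rw [cd_eq, cd_eq, cd_eq]
  refine (abs_norm_sub_norm_le _ _).trans (le_of_eq ?_)
  congr 1; abel

lemma cd_cont (x : EE n) : Continuous (cd x) := by
  unfold cd
  have := rho_cont (n := n)
  fun_prop

lemma zet_eq_cd (x0 x : EE n) :
    zet (rho x0 ^ 2 • x0) (rho x0 ^ 2 - 1) x = 1 - cd x x0 ^ 2 / 2 := by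
  rw [cd_sq, norm_sub_sq_real]
  unfold zet
  rw [inner_smul_left, real_inner_comm]
  simp only [conj_trivial]
  have hx := rho_sq_mul x
  have hy := rho_sq_mul x0
  linear_combination (rho x0 ^ 2 / 2) * hx + (rho x ^ 2 / 2) * hy - hx - hy + hx + hy

lemma norm_pow_le (x y : EE n) (j : ℕ) :
    ‖x - y‖ ^ j * rho x ^ j * rho y ^ j ≤ 2 ^ j := by
  rw [← mul_pow, ← mul_pow]
  exact pow_le_pow_left₀ (cd_nonneg x y) (cd_le_two x y) j

lemma XX_sq (a : EE n) (b : ℝ) (x : EE n) :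
    (rho x ^ 2) ^ 2 * ‖XX a b x‖ ^ 2 = ‖a‖ ^ 2 + b ^ 2 - zet a b x ^ 2 := by
  unfold XX zet
  rw [norm_sub_sq_real, norm_smul, norm_smul, inner_smul_left, inner_smul_right]
  simp only [Real.norm_eq_abs, sq_abs, mul_pow, conj_trivial]
  have hx := rho_sq_mul x
  set A := rho x ^ 2
  set p := ‖x‖ ^ 2
  set t : ℝ := inner ℝ a x
  have ex : A * p = 2 - A := by linarith
  have e2 : p * A = 2 - A := by linarith
  have e3 : ‖a‖ ^ 2 * A^2 * (1+p)^2 /4 = ‖a‖ ^ 2 := by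
    have : A^2 * (1+p)^2 = 4 := by rw [← mul_pow, hx]; norm_num
    linear_combination ‖a‖ ^ 2 / 4 * this
  linear_combination e3 + (A * (t+b)^2) * ex - A * t * (t + b) * hx

lemma kernel_id (a : EE n) (b : ℝ) (x y : EE n) :
    inner ℝ (x - y) (XX a b x) + inner ℝ (y - x) (XX a b y) =
      -(1/2) * ‖x - y‖ ^ 2 * ((inner ℝ a x + b) + (inner ℝ a y + b)) := by
  unfold XX
  simp only [inner_sub_left, inner_sub_right, inner_smul_right, norm_sub_sq_real,
    real_inner_self_eq_norm_sq]
  rw [real_inner_comm a x, real_inner_comm a y, real_inner_comm x y]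
  ring

lemma zet_eq (a : EE n) (b : ℝ) (x : EE n) :
    (inner ℝ a x + b) + rho x ^ 2 * inner ℝ x (XX a b x) = zet a b x := by
  unfold XX zet
  simp only [inner_sub_right, inner_smul_right, real_inner_self_eq_norm_sq]
  rw [real_inner_comm a x]
  have hx := rho_sq_mul x
  linear_combination (-(inner ℝ a x)/2 - b) * hx

end Sph14
namespace Sph14
variable {n : ℕ}

lemma coord_le (x : EE n) (i : Fin n) : |x i| ≤ ‖x‖ := PiLp.norm_apply_le x i

lemma le_of_sq_le_sq {a b : ℝ} (h : a ^ 2 ≤ b ^ 2) (hb : 0 ≤ b) : a ≤ b :=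
  (le_abs_self a).trans (by rw [← abs_of_nonneg hb]; exact sq_le_sq.mp h)

lemma XX_bound (a : EE n) (b : ℝ) (x : EE n) : rho x ^ 2 * ‖XX a b x‖ ≤ ‖a‖ + |b| := by
  have h := XX_sq a b x
  refine le_of_sq_le_sq ?_ (by positivity)
  rw [mul_pow, h]
  have := sq_abs b
  nlinarith [sq_nonneg (zet a b x), norm_nonneg a, abs_nonneg b,
    mul_nonneg (norm_nonneg a) (abs_nonneg b)]

lemma XX_cont (a : EE n) (b : ℝ) : Continuous (XX a b) := by
  unfold XX; fun_prop

lemma zet_cont (a : EE n) (b : ℝ) : Continuous (zet a b) := by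
  have := rho_cont (n := n)
  unfold zet; fun_prop

lemma zet_bound (a : EE n) (b : ℝ) (x : EE n) : |zet a b x| ≤ ‖a‖ + |b| := by
  have h := XX_sq a b x
  rw [← abs_of_nonneg (by positivity : 0 ≤ ‖a‖ + |b|)]
  rw [← sq_le_sq]
  have := sq_abs b
  nlinarith [sq_nonneg ((rho x ^ 2) * ‖XX a b x‖), norm_nonneg a, abs_nonneg b,
    mul_nonneg (norm_nonneg a) (abs_nonneg b)]

lemma omega_bound (a : EE n) (b : ℝ) (x : EE n) :
    |inner ℝ a x + b| * rho x ≤ 2 * ‖a‖ + 2 * |b| := by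
  have h1 := norm_mul_rho_le x
  have h2 := rho_le x
  have h3 := rho_pos x
  have h4 : |inner ℝ a x + b| ≤ ‖a‖ * ‖x‖ + |b| :=
    (abs_add_le _ _).trans (by gcongr; exact abs_real_inner_le_norm a x)
  calc |inner ℝ a x + b| * rho x ≤ (‖a‖ * ‖x‖ + |b|) * rho x := by gcongr
    _ = ‖a‖ * (‖x‖ * rho x) + |b| * rho x := by ring
    _ ≤ ‖a‖ * 2 + |b| * 2 := by gcongr
    _ = _ := by ring

lemma W_hasFDerivAt (hn : 3 ≤ n) (a : EE n) (b : ℝ) (i : Fin n) (x : EE n) :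
    ∃ L : EE n →L[ℝ] ℝ, HasFDerivAt (fun y : EE n => rho y ^ (2 * n) * XX a b y i) L x ∧
      L (EuclideanSpace.single i 1) =
        rho x ^ (2 * n) * (-(n : ℝ) * a i * x i - (inner ℝ a x + b) *
          (1 - n * rho x ^ 2 * x i ^ 2)) := by
  obtain ⟨N, rfl⟩ : ∃ N, n = N + 1 := ⟨n - 1, by omega⟩
  have h1 := rho_pow_hasFDerivAt (2 * N) x
  have h2 := rho_pow_hasFDerivAt (2 * (N + 1)) x
  have h3 : HasFDerivAt (fun y : EE (N + 1) => inner ℝ a y + b) (innerSL ℝ a) x :=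
    ((innerSL ℝ a).hasFDerivAt).add_const b
  have h4 : HasFDerivAt (fun y : EE (N + 1) => y i)
      (EuclideanSpace.proj i : EE (N+1) →L[ℝ] ℝ) x :=
    (EuclideanSpace.proj i : EE (N+1) →L[ℝ] ℝ).hasFDerivAt
  have h5 := (h1.mul_const (a i)).sub ((h3.mul h2).mul h4)
  refine ⟨_, h5.congr_of_eventuallyEq (Filter.Eventually.of_forall fun y => ?_), ?_⟩
  · have := rho_sq_mul y
    simp only [XX, PiLp.sub_apply, PiLp.smul_apply, smul_eq_mul, Pi.mul_apply, Pi.sub_apply]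
    rw [mul_add, pow_add]
    linear_combination rho y ^ (2 * N) * a i / 2 * this
  · simp [inner]
    ring

lemma ibp (hn : 3 ≤ n) (a : EE n) (b : ℝ) (H : EE n → ℝ) (hH : ContDiff ℝ 1 H) (C : ℝ)
    (hb : ∀ x, |H x| ≤ C) (hd : ∀ x, ‖fderiv ℝ H x‖ ≤ C * rho x) :
    ∫ x, rho x ^ (2 * n) * fderiv ℝ H x (XX a b x) =
      n * ∫ x, zet a b x * rho x ^ (2 * n) * H x := by
  have hC : 0 ≤ C := (abs_nonneg _).trans (hb 0)
  choose L hL hLe using fun i x => W_hasFDerivAt hn a b i x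
  set W : Fin n → EE n → ℝ := fun i y => rho y ^ (2 * n) * XX a b y i with hW
  set e : Fin n → EE n := fun i => EuclideanSpace.single i 1 with he
  have hρ := rho_cont (n := n)
  have hX := XX_cont a b
  have hfc : ∀ i, Continuous fun x => fderiv ℝ H x (e i) := fun i =>
    (hH.continuous_fderiv (by norm_num)).clm_apply continuous_const
  have hHc := hH.continuous
  have hWc : ∀ i, Continuous (W i) := fun i => by
    have : Continuous fun y => XX a b y i :=
      (EuclideanSpace.proj i : EE n →L[ℝ] ℝ).continuous.comp hX
    simp only [hW]; fun_prop
  have hfd : ∀ i x, fderiv ℝ (W i) x (e i) =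
      rho x ^ (2 * n) * (-(n : ℝ) * a i * x i - (inner ℝ a x + b) *
          (1 - n * rho x ^ 2 * x i ^ 2)) := fun i x => by
    rw [(hL i x).fderiv]; exact hLe i x
  have hWb : ∀ i x, |W i x| ≤ (‖a‖ + |b|) * rho x ^ (2 * n - 2) := fun i x => by
    have h1 := XX_bound a b x
    have h2 : |XX a b x i| ≤ ‖XX a b x‖ := coord_le _ i
    have h3 := rho_pos x
    have h4 : rho x ^ (2 * n) = rho x ^ (2 * n - 2) * rho x ^ 2 := by
      rw [← pow_add]; congr 1; omega
    simp only [hW]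
    rw [abs_mul, abs_of_pos (by positivity), h4]
    calc _ ≤ rho x ^ (2 * n - 2) * rho x ^ 2 * ‖XX a b x‖ := by gcongr
      _ = rho x ^ (2 * n - 2) * (rho x ^ 2 * ‖XX a b x‖) := by ring
      _ ≤ rho x ^ (2 * n - 2) * (‖a‖ + |b|) := by gcongr
      _ = _ := by ring
  have hdb : ∀ i x, |fderiv ℝ (W i) x (e i)| ≤
      (2 * n * ‖a‖ + (2 * ‖a‖ + 2 * |b|) * (1 + 4 * n)) * rho x ^ (2 * n - 1) := fun i x => by
    have h1 := omega_bound a b x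
    have h2 : |x i| ≤ ‖x‖ := coord_le _ i
    have h2' : |a i| ≤ ‖a‖ := coord_le _ i
    have h3 := rho_pos x
    have h4 : rho x ^ (2 * n) = rho x ^ (2 * n - 1) * rho x := by
      rw [← pow_succ]; congr 1; omega
    have h5 : |x i| * rho x ≤ 2 := (by gcongr : _ ≤ ‖x‖ * rho x).trans (norm_mul_rho_le x)
    rw [hfd, h4]
    have h6 : rho x ^ (2 * n - 1) * rho x * (-(n : ℝ) * a i * x i - (inner ℝ a x + b) *
          (1 - n * rho x ^ 2 * x i ^ 2)) = rho x ^ (2 * n - 1) *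
          (-(n * a i * (x i * rho x)) - ((inner ℝ a x + b) * rho x) *
          (1 - n * (x i * rho x) ^ 2)) := by ring
    rw [h6, abs_mul, abs_of_pos (by positivity : 0 < rho x ^ (2 * n - 1)), mul_comm]
    gcongr
    refine (abs_sub _ _).trans ?_
    rw [abs_neg, abs_mul, abs_mul, abs_mul, abs_mul, abs_mul, abs_of_pos h3, Nat.abs_cast]
    have h7 : |1 - n * (x i * rho x) ^ 2| ≤ 1 + 4 * (n : ℝ) := by
      have h8 : (x i * rho x) ^ 2 ≤ 4 := by
        rw [← sq_abs, abs_mul, abs_of_pos h3]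
        nlinarith [mul_nonneg (abs_nonneg (x i)) h3.le]
      have h9 : (n : ℝ) * (x i * rho x) ^ 2 ≤ n * 4 := by gcongr
      have h10 : 0 ≤ (n : ℝ) * (x i * rho x) ^ 2 := by positivity
      rw [abs_le]; constructor <;> linarith
    calc _ ≤ n * ‖a‖ * 2 + (2 * ‖a‖ + 2 * |b|) * (1 + 4 * n) := by gcongr
      _ = _ := by ring
  have hDc : ∀ i, Continuous fun x => fderiv ℝ (W i) x (e i) := fun i => by
    simp only [hfd]
    have : Continuous fun y : EE n => y i :=
      (EuclideanSpace.proj i : EE n →L[ℝ] ℝ).continuous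
    fun_prop
  have i1 : ∀ i, Integrable fun x => fderiv ℝ (W i) x (e i) * H x := fun i => by
    refine integrable_of_bound (j := 2 * n - 1) (by omega)
      ((hDc i).mul hHc).aestronglyMeasurable
      ((2 * n * ‖a‖ + (2 * ‖a‖ + 2 * |b|) * (1 + 4 * n)) * C) fun x => ?_
    rw [abs_mul, mul_right_comm]
    have := rho_pos x
    exact mul_le_mul (hdb i x) (hb x) (abs_nonneg _) (by positivity)
  have i2 : ∀ i, Integrable fun x => W i x * fderiv ℝ H x (e i) := fun i => by
    refine integrable_of_bound (j := 2 * n - 1) (by omega)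
      ((hWc i).mul (hfc i)).aestronglyMeasurable ((‖a‖ + |b|) * C) fun x => ?_
    rw [abs_mul]
    have h3 := rho_pos x
    have h4 : rho x ^ (2 * n - 1) = rho x ^ (2 * n - 2) * rho x := by
      rw [← pow_succ]; congr 1; omega
    have h5 : |fderiv ℝ H x (e i)| ≤ C * rho x := by
      refine ((fderiv ℝ H x).le_opNorm _).trans ?_
      simp only [he, PiLp.norm_single, norm_one, mul_one]
      exact hd x
    calc _ ≤ ((‖a‖ + |b|) * rho x ^ (2 * n - 2)) * (C * rho x) :=
          mul_le_mul (hWb i x) h5 (abs_nonneg _) (by positivity)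
      _ = _ := by rw [h4]; ring
  have i3 : ∀ i, Integrable fun x => W i x * H x := fun i => by
    refine integrable_of_bound (j := 2 * n - 2) (by omega)
      ((hWc i).mul hHc).aestronglyMeasurable ((‖a‖ + |b|) * C) fun x => ?_
    rw [abs_mul, mul_right_comm]
    have := rho_pos x
    exact mul_le_mul (hWb i x) (hb x) (abs_nonneg _) (by positivity)
  have key : ∀ i, ∫ x, W i x * fderiv ℝ H x (e i) = - ∫ x, fderiv ℝ (W i) x (e i) * H x :=
    fun i => integral_mul_fderiv_eq_neg_fderiv_mul_of_integrable (i1 i) (i2 i) (i3 i)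
      (fun x _ => (hL i x).differentiableAt)
      (fun x _ => (hH.differentiable (by norm_num)).differentiableAt)
  have l1 : ∀ x, rho x ^ (2 * n) * fderiv ℝ H x (XX a b x) =
      ∑ i, W i x * fderiv ℝ H x (e i) := fun x => by
    have : XX a b x = ∑ i, XX a b x i • e i := by
      have := ((EuclideanSpace.basisFun (Fin n) ℝ).sum_repr (XX a b x)).symm
      simpa using this
    conv_lhs => rw [this]
    rw [map_sum, Finset.mul_sum]
    refine Finset.sum_congr rfl fun i _ => ?_
    simp only [hW, map_smul, smul_eq_mul]; ring
  have l2 : ∀ x, ∑ i, fderiv ℝ (W i) x (e i) = - (n * (zet a b x * rho x ^ (2 * n))) :=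
    fun x => by
    simp only [hfd]
    rw [← Finset.mul_sum, Finset.sum_sub_distrib, ← Finset.mul_sum, Finset.sum_sub_distrib,
      ← Finset.mul_sum]
    have s1 : ∑ i, x i ^ 2 = ‖x‖ ^ 2 := by
      rw [EuclideanSpace.norm_sq_eq]; simp
    have s2 : ∑ i, -(n : ℝ) * a i * x i = -n * inner ℝ a x := by
      rw [PiLp.inner_apply, Finset.mul_sum]
      refine Finset.sum_congr rfl fun i _ => ?_
      simp; ring
    rw [s1, s2]
    simp only [Finset.sum_const, Finset.card_univ, Fintype.card_fin, nsmul_eq_mul, mul_one]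
    have := rho_sq_mul x
    unfold zet
    linear_combination rho x ^ (2 * n) * n * (inner ℝ a x + b) * this
  simp only [l1]
  rw [integral_finsetSum _ (fun i _ => i2 i)]
  simp only [key]
  rw [Finset.sum_neg_distrib, ← integral_finsetSum _ (fun i _ => i1 i), ← integral_neg,
    ← integral_const_mul]
  congr 1; ext x
  rw [← Finset.sum_mul, l2]; ring

end Sph14
namespace Sph14
variable {n : ℕ}

/-- derivative of the kernel -/
noncomputable def TT (k : ℕ) (x h y : EE n) : ℝ :=
  k * ‖x - y‖ ^ (k - 1) * (‖x - y‖⁻¹ * inner ℝ (x - y) h)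

lemma TT_bound (k : ℕ) (x h y : EE n) : |TT k x h y| ≤ k * ‖x - y‖ ^ (k - 1) * ‖h‖ := by
  unfold TT
  rw [abs_mul, abs_of_nonneg (by positivity : 0 ≤ (k : ℝ) * ‖x - y‖ ^ (k - 1))]
  gcongr
  rw [abs_mul, abs_of_nonneg (by positivity)]
  rcases eq_or_ne ‖x - y‖ 0 with h0 | h0
  · rw [h0]; simp
  · calc ‖x - y‖⁻¹ * |inner ℝ (x - y) h| ≤ ‖x - y‖⁻¹ * (‖x - y‖ * ‖h‖) := by
          gcongr; exact abs_real_inner_le_norm _ _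
      _ = ‖h‖ := by field_simp

lemma TT_deriv (k : ℕ) (x h y : EE n) (hxy : y ≠ x) :
    HasDerivAt (fun t : ℝ => ‖x + t • h - y‖ ^ k) (TT k x h y) 0 := by
  have h1 : HasDerivAt (fun t : ℝ => x + t • h - y) h 0 := by
    have := (((hasDerivAt_id (0 : ℝ)).smul_const h).const_add x).sub_const y
    simpa using this
  have h2 := h1.norm_sq
  have hne : ‖x - y‖ ≠ 0 := norm_ne_zero_iff.mpr (sub_ne_zero.mpr hxy.symm)
  have h3 := h2.sqrt (by simpa [sub_eq_zero] using hxy.symm)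
  have h4 := h3.pow k
  have h5 : (fun t : ℝ => ‖x + t • h - y‖ ^ k) = (fun t : ℝ => √(‖x + t • h - y‖ ^ 2)) ^ k := by
    ext t
    simp [Real.sqrt_sq]
  rw [h5]
  refine h4.congr_deriv ?_
  simp only [zero_smul, add_zero, Real.sqrt_sq (norm_nonneg _)]
  unfold TT
  field_simp

lemma ae_ne' (hn : 3 ≤ n) (x : EE n) : ∀ᵐ y : EE n, y ≠ x := by
  have : Nonempty (Fin n) := ⟨⟨0, by omega⟩⟩
  exact compl_mem_ae_iff.mpr (measure_singleton x)

lemma norm_pow_F_bound (k : ℕ) (F : EE n → ℝ) (C : ℝ) (hF : ∀ y, |F y| ≤ C * rho y ^ (2 * n + k))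
    (R : ℝ) (hR : 0 ≤ R) (y : EE n) (j : ℕ) (hj : j ≤ k) :
    (R + ‖y‖) ^ j * |F y| ≤ (2 * R + 2) ^ j * C * rho y ^ (2 * n + (k - j)) := by
  have h1 := rho_pos y
  have h2 := rho_le y
  have h3 := norm_mul_rho_le y
  have h4 : rho y ^ (2 * n + k) = rho y ^ j * rho y ^ (2 * n + (k - j)) := by
    rw [← pow_add]; congr 1; omega
  have hC : 0 ≤ C := by
    have := (abs_nonneg _).trans (hF y)
    by_contra hc
    push Not at hc
    have := mul_neg_of_neg_of_pos hc (pow_pos h1 (2 * n + k))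
    linarith
  calc (R + ‖y‖) ^ j * |F y| ≤ (R + ‖y‖) ^ j * (C * rho y ^ (2 * n + k)) := by
        gcongr; exact hF y
    _ = (R * rho y + ‖y‖ * rho y) ^ j * C * rho y ^ (2 * n + (k - j)) := by
        rw [h4, ← add_mul, mul_pow]; ring
    _ ≤ (R * 2 + 2) ^ j * C * rho y ^ (2 * n + (k - j)) := by gcongr
    _ = _ := by ring

lemma TT_meas (k : ℕ) (a : EE n) (b : ℝ) :
    Measurable fun z : EE n × EE n => TT k z.1 (XX a b z.1) z.2 := by
  unfold TT
  have hX := XX_cont a b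
  have h1 : Measurable fun z : EE n × EE n => ‖z.1 - z.2‖ :=
    (continuous_norm.comp (continuous_fst.sub continuous_snd)).measurable
  have h2 : Measurable fun z : EE n × EE n => inner ℝ (z.1 - z.2) (XX a b z.1) := by
    refine Continuous.measurable ?_
    fun_prop
  exact ((h1.pow_const _).const_mul _).mul (h1.inv.mul h2)

lemma TT_meas' (k : ℕ) (x h : EE n) : Measurable fun y : EE n => TT k x h y := by
  unfold TT
  have h1 : Measurable fun z : EE n => ‖x - z‖ := by fun_prop
  have h2 : Measurable fun z : EE n => inner ℝ (x - z) h := by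
    refine Continuous.measurable ?_
    fun_prop
  exact ((h1.pow_const _).const_mul _).mul (h1.inv.mul h2)

lemma kerF_integrable (hn : 3 ≤ n) (k : ℕ) (F : EE n → ℝ) (hFc : Continuous F)
    (C : ℝ) (hF : ∀ y, |F y| ≤ C * rho y ^ (2 * n + k)) (x : EE n) :
    Integrable fun y => ‖x - y‖ ^ k * F y := by
  refine integrable_of_bound (j := 2 * n + (k - k)) (by omega)
    (by fun_prop) ((2 * ‖x‖ + 2) ^ k * C) fun y => ?_
  refine le_trans ?_ (norm_pow_F_bound k F C hF ‖x‖ (norm_nonneg _) y k le_rfl)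
  rw [abs_mul, abs_of_nonneg (by positivity)]
  gcongr
  exact norm_sub_le x y

lemma u_deriv (hn : 3 ≤ n) (k : ℕ) (hk : 1 ≤ k) (γ : ℝ) (F : EE n → ℝ) (hFc : Continuous F)
    (C : ℝ) (hF : ∀ y, |F y| ≤ C * rho y ^ (2 * n + k)) (u : EE n → ℝ)
    (hu : ∀ x, u x = γ * ∫ y, ‖x - y‖ ^ k * F y) (hud : Differentiable ℝ u) (x h : EE n) :
    Integrable (fun y => TT k x h y * F y) ∧
    fderiv ℝ u x h = γ * ∫ y, TT k x h y * F y := by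
  have key := hasDerivAt_integral_of_dominated_loc_of_lip (μ := (volume : Measure (EE n)))
    (𝕜 := ℝ)
    (F := fun (t : ℝ) (y : EE n) => ‖x + t • h - y‖ ^ k * F y) (x₀ := (0 : ℝ))
    (s := Metric.ball 0 1)
    (bound := fun y => k * ‖h‖ * ((‖x‖ + ‖h‖ + ‖y‖) ^ (k - 1) * |F y|))
    (F' := fun y => TT k x h y * F y)
    (Metric.ball_mem_nhds _ one_pos)
    (Filter.Eventually.of_forall fun t => (by fun_prop))
    (by simpa using kerF_integrable hn k F hFc C hF x)
    ((TT_meas' k x h).mul hFc.measurable).aestronglyMeasurable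
    (Filter.Eventually.of_forall fun y => ?_) ?_ ?_
  · refine ⟨key.1, ?_⟩
    have h1 := (key.2.const_mul γ)
    have h2 : HasDerivAt (fun t : ℝ => u (x + t • h)) (fderiv ℝ u x h) 0 := by
      have h3 : HasDerivAt (fun t : ℝ => x + t • h) h 0 := by
        simpa using ((hasDerivAt_id (0 : ℝ)).smul_const h).const_add x
      have h4 : HasFDerivAt u (fderiv ℝ u x) (x + (0 : ℝ) • h) := by
        simpa using (hud x).hasFDerivAt
      exact h4.comp_hasDerivAt (0 : ℝ) h3
    refine h2.unique ?_
    simpa only [hu] using h1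
  · refine LipschitzOnWith.of_dist_le_mul fun s hs t ht => ?_
    have b0 : 0 ≤ k * ‖h‖ * ((‖x‖ + ‖h‖ + ‖y‖) ^ (k - 1) * |F y|) := by positivity
    rw [Real.coe_nnabs, abs_of_nonneg b0, Real.dist_eq, Real.dist_eq, ← sub_mul, abs_mul]
    have hb : ∀ r : ℝ, r ∈ Metric.ball (0 : ℝ) 1 → ‖x + r • h - y‖ ≤ ‖x‖ + ‖h‖ + ‖y‖ := by
      intro r hr
      have hr1 : |r| ≤ 1 := by simpa using (Metric.mem_ball.mp hr).le
      calc ‖x + r • h - y‖ ≤ ‖x‖ + ‖r • h‖ + ‖y‖ :=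
            (norm_sub_le _ _).trans (by gcongr; exact norm_add_le _ _)
        _ ≤ ‖x‖ + ‖h‖ + ‖y‖ := by
            rw [norm_smul, Real.norm_eq_abs]
            gcongr
            exact mul_le_of_le_one_left (norm_nonneg _) hr1
    have h1 := abs_pow_sub_pow_le ‖x + s • h - y‖ ‖x + t • h - y‖ k
    have h2 : |‖x + s • h - y‖ - ‖x + t • h - y‖| ≤ |s - t| * ‖h‖ := by
      refine (abs_norm_sub_norm_le _ _).trans ?_
      rw [← Real.norm_eq_abs, ← norm_smul]
      refine le_of_eq ?_
      congr 1; rw [sub_smul]; abel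
    have h3 : max |‖x + s • h - y‖| |‖x + t • h - y‖| ≤ ‖x‖ + ‖h‖ + ‖y‖ := by
      rw [abs_norm, abs_norm]
      exact max_le (hb s hs) (hb t ht)
    calc _ ≤ (|s - t| * ‖h‖) * k * (‖x‖ + ‖h‖ + ‖y‖) ^ (k - 1) * |F y| := by
          gcongr
          refine h1.trans ?_
          gcongr
      _ = _ := by ring
  · refine Integrable.const_mul ?_ _
    refine integrable_of_bound (j := 2 * n + (k - (k - 1))) (by omega)
      (by fun_prop) ((2 * (‖x‖ + ‖h‖) + 2) ^ (k - 1) * C) fun y => ?_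
    rw [abs_of_nonneg (by positivity)]
    exact norm_pow_F_bound k F C hF _ (by positivity) y (k - 1) (by omega)
  · filter_upwards [ae_ne' hn x] with y hy
    exact (TT_deriv k x h y hy).mul_const (F y)

lemma rho_bound (k : ℕ) (hk : 1 ≤ k) (F : EE n → ℝ)
    (C : ℝ) (hF : ∀ y, |F y| ≤ C * rho y ^ (2 * n + k)) (j : ℕ) (hj : j ≤ k) (x y : EE n) :
    rho x ^ j * (‖x - y‖ ^ j * |F y|) ≤ 2 ^ j * C * rho y ^ (2 * n + (k - j)) := by
  have h1 := rho_pos y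
  have h0 := rho_pos x
  have h4 : rho y ^ (2 * n + k) = rho y ^ j * rho y ^ (2 * n + (k - j)) := by
    rw [← pow_add]; congr 1; omega
  have hC : 0 ≤ C := by
    have := (abs_nonneg _).trans (hF y)
    by_contra hc
    push Not at hc
    have := mul_neg_of_neg_of_pos hc (pow_pos h1 (2 * n + k))
    linarith
  calc _ ≤ rho x ^ j * (‖x - y‖ ^ j * (C * rho y ^ (2 * n + k))) := by
        gcongr; exact hF y
    _ = (‖x - y‖ ^ j * rho x ^ j * rho y ^ j) * C * rho y ^ (2 * n + (k - j)) := by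
        rw [h4]; ring
    _ ≤ _ := by gcongr; exact norm_pow_le x y j

lemma u_deriv_bound (hn : 3 ≤ n) (k : ℕ) (hk : 1 ≤ k) (γ : ℝ) (F : EE n → ℝ)
    (hFc : Continuous F)
    (C : ℝ) (hF : ∀ y, |F y| ≤ C * rho y ^ (2 * n + k)) (u : EE n → ℝ)
    (hu : ∀ x, u x = γ * ∫ y, ‖x - y‖ ^ k * F y) (hud : Differentiable ℝ u) :
    ∃ D, ∀ x, rho x ^ (k - 1) * ‖fderiv ℝ u x‖ ≤ D := by
  have hi : Integrable fun y : EE n => k * (2 ^ (k - 1) * C * rho y ^ (2 * n + (k - (k - 1)))) :=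
    ((rho_pow_integrable (by omega)).const_mul _).const_mul _
  set D := |γ| * ∫ y : EE n, k * (2 ^ (k - 1) * C * rho y ^ (2 * n + (k - (k - 1)))) with hD
  have hpt : ∀ x h y, |rho x ^ (k - 1) * (TT k x h y * F y)| ≤
      ‖h‖ * (k * (2 ^ (k - 1) * C * rho y ^ (2 * n + (k - (k - 1))))) := by
    intro x h y
    have h0 := rho_pos x
    rw [abs_mul, abs_mul, abs_of_pos (by positivity)]
    calc _ ≤ rho x ^ (k - 1) * ((k * ‖x - y‖ ^ (k - 1) * ‖h‖) * |F y|) := by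
          gcongr; exact TT_bound k x h y
      _ = ‖h‖ * (k * (rho x ^ (k - 1) * (‖x - y‖ ^ (k - 1) * |F y|))) := by ring
      _ ≤ _ := mul_le_mul_of_nonneg_left (mul_le_mul_of_nonneg_left
          (rho_bound k hk F C hF (k - 1) (by omega) x y) (by positivity)) (by positivity)
  have hmain : ∀ x h, |rho x ^ (k - 1) * fderiv ℝ u x h| ≤ D * ‖h‖ := by
    intro x h
    rw [(u_deriv hn k hk γ F hFc C hF u hu hud x h).2]
    rw [mul_left_comm, ← integral_const_mul, abs_mul, hD, mul_assoc]
    gcongr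
    rw [mul_comm, ← integral_const_mul]
    refine (abs_integral_le_integral_abs).trans ?_
    refine integral_mono ?_ (hi.const_mul _) (fun y => hpt x h y)
    exact ((u_deriv hn k hk γ F hFc C hF u hu hud x h).1.const_mul _).abs
  have hD0 : 0 ≤ D := by
    rw [hD]
    refine mul_nonneg (abs_nonneg _) (integral_nonneg fun y => ?_)
    have := rho_pos y
    have h2 := (abs_nonneg _).trans (hF y)
    have hC : 0 ≤ C := by
      by_contra hc
      push Not at hc
      have := mul_neg_of_neg_of_pos hc (pow_pos this (2 * n + k))
      linarith
    positivity
  refine ⟨D, fun x => ?_⟩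
  have h0 : 0 < rho x ^ (k - 1) := pow_pos (rho_pos x) _
  have : ‖fderiv ℝ u x‖ ≤ D / rho x ^ (k - 1) := by
    refine ContinuousLinearMap.opNorm_le_bound _ (by positivity) fun h => ?_
    have := hmain x h
    rw [abs_mul, abs_of_pos h0] at this
    rw [Real.norm_eq_abs, div_mul_eq_mul_div, le_div_iff₀ h0]
    linarith
  rw [le_div_iff₀ h0] at this
  linarith

lemma pohozaev (hn : 3 ≤ n) (k : ℕ) (hk : 1 ≤ k) (γ : ℝ) (F : EE n → ℝ)
    (hFc : Continuous F)
    (C : ℝ) (hF : ∀ y, |F y| ≤ C * rho y ^ (2 * n + k)) (u : EE n → ℝ)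
    (hu : ∀ x, u x = γ * ∫ y, ‖x - y‖ ^ k * F y) (hud : Differentiable ℝ u)
    (a : EE n) (b : ℝ) :
    ∫ x, F x * (fderiv ℝ u x (XX a b x) + k / 2 * (inner ℝ a x + b) * u x) = 0 := by
  set S : EE n → EE n → ℝ := fun x y =>
    (TT k x (XX a b x) y + k / 2 * ‖x - y‖ ^ k * (inner ℝ a x + b)) * F x * F y with hS
  have hC : 0 ≤ C := by
    have h1 := rho_pos (0 : EE n)
    have h2 := (abs_nonneg _).trans (hF 0)
    by_contra hc
    push Not at hc
    have := mul_neg_of_neg_of_pos hc (pow_pos h1 (2 * n + k))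
    linarith
  have hSi : Integrable (Function.uncurry S) (volume.prod volume) := by
    have hB : Integrable (fun z : EE n × EE n => (C * (k * (2 ^ (k - 1) * C * (‖a‖ + |b|)) * 2 +
        k / 2 * (2 ^ k * C) * (2 * ‖a‖ + 2 * |b|))) * (rho z.1 ^ (2 * n - 1) * rho z.2 ^ (2 * n)))
        (volume.prod volume) :=
      ((rho_pow_integrable (by omega)).mul_prod (rho_pow_integrable (by omega))).const_mul _
    refine hB.mono' ?_ (Filter.Eventually.of_forall ?_)
    · refine Measurable.aestronglyMeasurable ?_
      have h1 : Measurable fun z : EE n × EE n => k / 2 * ‖z.1 - z.2‖ ^ k * (inner ℝ a z.1 + b) := by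
        refine Continuous.measurable ?_
        fun_prop
      have h2 : Measurable fun z : EE n × EE n => F z.1 := by fun_prop
      have h3 : Measurable fun z : EE n × EE n => F z.2 := by fun_prop
      exact (((TT_meas k a b).add h1).mul h2).mul h3
    · rintro ⟨x, y⟩
      simp only [Function.uncurry, hS, Real.norm_eq_abs]
      have hx := rho_pos x
      have hy := rho_pos y
      have h1 := TT_bound k x (XX a b x) y
      have e1 : rho x ^ (2 * n + k) = rho x ^ (k - 1) * (rho x ^ (2 * n - 1) * rho x ^ 2) := by
        rw [← pow_add, ← pow_add]; congr 1; omega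
      have e2 : rho x ^ (2 * n + k) = rho x ^ k * (rho x ^ (2 * n - 1) * rho x) := by
        rw [← pow_succ, ← pow_add]; congr 1; omega
      have b1 := rho_bound k hk F C hF (k - 1) (by omega) x y
      have b2 := rho_bound k hk F C hF k le_rfl x y
      have b3 := XX_bound a b x
      have b4 := omega_bound a b x
      have e3 : rho y ^ (2 * n + (k - (k - 1))) ≤ rho y ^ (2 * n) * 2 := by
        rw [show 2 * n + (k - (k - 1)) = 2 * n + 1 by omega, pow_succ]
        gcongr; exact rho_le y
      rw [abs_mul, abs_mul]
      calc _ ≤ (k * ‖x - y‖ ^ (k - 1) * ‖XX a b x‖ + k / 2 * ‖x - y‖ ^ k * |inner ℝ a x + b|) *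
            (C * rho x ^ (2 * n + k)) * |F y| := by
              gcongr
              · refine (abs_add_le _ _).trans ?_
                gcongr
                rw [abs_mul, abs_of_nonneg (by positivity)]
              · exact hF x
        _ = C * (k * ((rho x ^ (k - 1) * (‖x - y‖ ^ (k - 1) * |F y|)) * (rho x ^ 2 * ‖XX a b x‖)
            * rho x ^ (2 * n - 1)) + k / 2 * ((rho x ^ k * (‖x - y‖ ^ k * |F y|)) *
              (|inner ℝ a x + b| * rho x) * rho x ^ (2 * n - 1))) := by
              rw [add_mul, add_mul]
              nth_rewrite 1 [e1]
              rw [e2]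
              ring
        _ ≤ C * (k * ((2 ^ (k - 1) * C * (rho y ^ (2 * n) * 2)) * (‖a‖ + |b|)
            * rho x ^ (2 * n - 1)) + k / 2 * ((2 ^ k * C * rho y ^ (2 * n)) *
              (2 * ‖a‖ + 2 * |b|) * rho x ^ (2 * n - 1))) := by
              have b1' : rho x ^ (k - 1) * (‖x - y‖ ^ (k - 1) * |F y|) ≤
                  2 ^ (k - 1) * C * (rho y ^ (2 * n) * 2) := b1.trans (by gcongr)
              have b2' : rho x ^ k * (‖x - y‖ ^ k * |F y|) ≤ 2 ^ k * C * rho y ^ (2 * n) := by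
                simpa using b2
              have p1 : 0 ≤ rho x ^ (k - 1) * (‖x - y‖ ^ (k - 1) * |F y|) := by positivity
              have p2 : 0 ≤ rho x ^ k * (‖x - y‖ ^ k * |F y|) := by positivity
              have p3 : 0 ≤ rho x ^ 2 * ‖XX a b x‖ := by positivity
              have p4 : 0 ≤ |inner ℝ a x + b| * rho x := by positivity
              generalize rho x ^ (k - 1) * (‖x - y‖ ^ (k - 1) * |F y|) = q1 at *
              generalize rho x ^ k * (‖x - y‖ ^ k * |F y|) = q2 at *
              generalize rho x ^ 2 * ‖XX a b x‖ = q3 at *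
              generalize |inner ℝ a x + b| * rho x = q4 at *
              gcongr
        _ = _ := by ring
  have hanti : ∀ x y, S x y = - S y x := by
    intro x y
    have h1 := kernel_id a b x y
    have h2 : TT k x (XX a b x) y + TT k y (XX a b y) x =
        - (k / 2 * ‖x - y‖ ^ k * ((inner ℝ a x + b) + (inner ℝ a y + b))) := by
      unfold TT
      rw [norm_sub_rev y x]
      rw [← mul_add, ← mul_add, h1]
      have h3 : ‖x - y‖ ^ k = ‖x - y‖ ^ (k - 1) * (‖x - y‖⁻¹ * ‖x - y‖ ^ 2) := by
        rcases eq_or_ne ‖x - y‖ 0 with h0 | h0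
        · rw [h0]; simp; omega
        · obtain ⟨j, rfl⟩ : ∃ j, k = j + 1 := ⟨k - 1, by omega⟩
          field_simp
          simp [pow_succ]
      rw [h3]; ring
    simp only [hS]
    rw [norm_sub_rev y x]
    linear_combination F x * F y * h2
  have hz : ∫ x, ∫ y, S x y = 0 := by
    have h1 : ∫ x, ∫ y, S x y = ∫ y, ∫ x, S x y := integral_integral_swap hSi
    have h2 : ∫ y, ∫ x, S x y = - ∫ y, ∫ x, S y x := by
      rw [← integral_neg]
      congr 1; ext y
      rw [← integral_neg]
      congr 1; ext x
      exact hanti x y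
    linarith
  have hin : ∀ x, γ * ∫ y, S x y =
      F x * (fderiv ℝ u x (XX a b x) + k / 2 * (inner ℝ a x + b) * u x) := by
    intro x
    obtain ⟨i1, h1⟩ := u_deriv hn k hk γ F hFc C hF u hu hud x (XX a b x)
    have i2 := kerF_integrable hn k F hFc C hF x
    have h2 : ∀ y, S x y = F x * (TT k x (XX a b x) y * F y) +
        (F x * (k / 2) * (inner ℝ a x + b)) * (‖x - y‖ ^ k * F y) := by
      intro y; simp only [hS]; ring
    simp only [h2]
    rw [integral_add (i1.const_mul _) (i2.const_mul _), integral_const_mul, integral_const_mul,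
      h1, hu x]
    ring
  simp only [← hin]
  rw [integral_const_mul, hz, mul_zero]

end Sph14
namespace Sph14
variable {n : ℕ}

lemma zet_hasFDerivAt (a : EE n) (b : ℝ) (x : EE n) :
    HasFDerivAt (zet a b) ((rho x ^ 4) • innerSL ℝ (XX a b x)) x := by
  have h2 := rho_pow_hasFDerivAt 2 x
  have h3 : HasFDerivAt (fun y : EE n => inner ℝ a y) (innerSL ℝ a) x :=
    (innerSL ℝ a).hasFDerivAt
  have h4 := (h3.mul h2).add ((h2.sub_const 1).const_mul b)
  refine (h4.congr_fderiv ?_)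
  ext h
  have := rho_sq_mul x
  simp only [XX, ContinuousLinearMap.add_apply, ContinuousLinearMap.smul_apply,
    innerSL_apply_apply, smul_eq_mul, inner_sub_left, inner_smul_left, conj_trivial]
  push_cast
  linear_combination (-(inner ℝ a h) * rho x ^ 2 / 2) * this

lemma rho_contDiff : ContDiff ℝ 1 (rho : EE n → ℝ) := by
  unfold rho
  refine ContDiff.sqrt (ContDiff.div contDiff_const (contDiff_const.add (contDiff_norm_sq ℝ)) ?_) ?_
  · intro x; positivity
  · intro x; positivity

lemma zet_integral (hn : 3 ≤ n) (a : EE n) (b : ℝ) :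
    ∫ x, zet a b x * rho x ^ (2 * n) = 0 := by
  have h := ibp hn a b (fun _ => 1) contDiff_const 1 (by simp)
    (fun x => by simpa using (rho_pos x).le)
  simp only [mul_one] at h
  simp at h
  rcases h with h | h
  · omega
  · exact h

lemma zet_sq_integral (hn : 3 ≤ n) (a : EE n) (b : ℝ) (hab : ‖a‖ ^ 2 + b ^ 2 = 1) :
    (n + 1) * ∫ x, rho x ^ (2 * n) * zet a b x ^ 2 = ∫ x : EE n, rho x ^ (2 * n) := by
  have hc : ContDiff ℝ 1 (zet a b) := by
    have h1 := rho_contDiff (n := n)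
    have h2 : ContDiff ℝ 1 fun x : EE n => inner ℝ a x := (innerSL ℝ a).contDiff
    exact (h2.mul (h1.pow 2)).add (contDiff_const.mul ((h1.pow 2).sub contDiff_const))
  have hA : 0 ≤ ‖a‖ + |b| := by positivity
  have h := ibp hn a b (zet a b) hc (4 * (‖a‖ + |b|)) (fun x => by
      have := zet_bound a b x
      linarith) (fun x => by
      rw [(zet_hasFDerivAt a b x).fderiv, norm_smul, innerSL_apply_norm, Real.norm_eq_abs]
      have h0 := rho_pos x
      have h1 := XX_bound a b x
      have h2 := rho_le x
      rw [abs_of_pos (by positivity)]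
      calc rho x ^ 4 * ‖XX a b x‖ = rho x * rho x * (rho x ^ 2 * ‖XX a b x‖) := by ring
        _ ≤ 2 * rho x * (‖a‖ + |b|) := by gcongr
        _ ≤ 4 * (‖a‖ + |b|) * rho x := by nlinarith [mul_nonneg hA h0.le])
  have e1 : ∀ x, fderiv ℝ (zet a b) x (XX a b x) = 1 - zet a b x ^ 2 := fun x => by
    rw [(zet_hasFDerivAt a b x).fderiv]
    have := XX_sq a b x
    simp only [ContinuousLinearMap.smul_apply, innerSL_apply_apply, smul_eq_mul,
      real_inner_self_eq_norm_sq]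
    rw [hab] at this
    linear_combination this
  have hρ := rho_cont (n := n)
  have hζ := zet_cont a b
  have i1 : Integrable fun x : EE n => rho x ^ (2 * n) := rho_pow_integrable (by omega)
  have i2 : Integrable fun x : EE n => rho x ^ (2 * n) * zet a b x ^ 2 := by
    refine integrable_of_bound (j := 2 * n) (by omega) (by fun_prop) ((‖a‖ + |b|) ^ 2) fun x => ?_
    have h0 := rho_pos x
    have := zet_bound a b x
    rw [abs_mul, abs_of_pos (by positivity), abs_pow, mul_comm]
    gcongr
  simp only [e1, mul_sub, mul_one] at h
  rw [integral_sub i1 i2] at h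
  have e2 : ∫ x, zet a b x * rho x ^ (2 * n) * zet a b x =
      ∫ x, rho x ^ (2 * n) * zet a b x ^ 2 := by
    congr 1; ext x; ring
  rw [e2] at h
  linarith

lemma pohozaev_v (hn : 3 ≤ n) (k : ℕ) (hk : 1 ≤ k) (γ : ℝ) (g G : ℝ → ℝ)
    (hg : ContinuousOn g (Set.Ioi 0)) (hG : ∀ t, 0 < t → HasDerivAt G (g t) t)
    (u : EE n → ℝ) (hud : ContDiff ℝ 1 u) (lo hi : ℝ) (hlo : 0 < lo)
    (hb : ∀ x, lo ≤ rho x ^ k * u x ∧ rho x ^ k * u x ≤ hi)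
    (hu : ∀ x, u x = γ * ∫ y, ‖x - y‖ ^ k * (rho y ^ (2 * n + k) * g (rho y ^ k * u y)))
    (a : EE n) (b : ℝ) :
    ∫ x, zet a b x * rho x ^ (2 * n) *
      (n * G (rho x ^ k * u x) + k / 2 * (rho x ^ k * u x) * g (rho x ^ k * u x)) = 0 := by
  set v : EE n → ℝ := fun x => rho x ^ k * u x with hv
  have hv0 : ∀ x, v x ∈ Set.Ioi (0 : ℝ) := fun x => hlo.trans_le (hb x).1
  have hvI : ∀ x, v x ∈ Set.Icc lo hi := fun x => hb x
  have hsub : Set.Icc lo hi ⊆ Set.Ioi 0 := fun t ht => hlo.trans_le ht.1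
  have hρ := rho_cont (n := n)
  have hvc : Continuous v := by
    have := hud.continuous
    simp only [hv]; fun_prop
  have hGc : ContinuousOn G (Set.Ioi 0) := fun t ht => (hG t ht).continuousAt.continuousWithinAt
  have hgv : Continuous fun x => g (v x) := hg.comp_continuous hvc hv0
  have hGv : Continuous fun x => G (v x) := hGc.comp_continuous hvc hv0
  obtain ⟨Cg, hCg⟩ := isCompact_Icc.exists_bound_of_continuousOn (hg.mono hsub)
  obtain ⟨CG, hCG⟩ := isCompact_Icc.exists_bound_of_continuousOn (hGc.mono hsub)
  have hCg0 : 0 ≤ Cg := (norm_nonneg _).trans (hCg _ (hvI 0))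
  have hCG0 : 0 ≤ CG := (norm_nonneg _).trans (hCG _ (hvI 0))
  set F : EE n → ℝ := fun y => rho y ^ (2 * n + k) * g (v y) with hF
  have hFc : Continuous F := by exact (hρ.pow _).mul hgv
  have hFb : ∀ y, |F y| ≤ Cg * rho y ^ (2 * n + k) := fun y => by
    have := rho_pos y
    simp only [hF]
    rw [abs_mul, abs_of_pos (by positivity), mul_comm]
    gcongr
    exact hCg _ (hvI y)
  have hdiff := hud.differentiable (by norm_num)
  have P := pohozaev hn k hk γ F hFc Cg hFb u hu hdiff a b
  obtain ⟨D, hD⟩ := u_deriv_bound hn k hk γ F hFc Cg hFb u hu hdiff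
  have hD0 : 0 ≤ D := le_trans (mul_nonneg (pow_nonneg (rho_pos 0).le _) (norm_nonneg _)) (hD 0)
  have hvd : ∀ x, HasFDerivAt v (rho x ^ k • fderiv ℝ u x +
      u x • ((-((k : ℝ) / 2 * rho x ^ (k + 2))) • innerSL ℝ x)) x := fun x =>
    (rho_pow_hasFDerivAt k x).mul (hdiff x).hasFDerivAt
  have hvC : ContDiff ℝ 1 v := by
    have := rho_contDiff (n := n)
    simp only [hv]; fun_prop
  have hvb : ∀ x, ‖fderiv ℝ v x‖ ≤ (D + k * (2 * hi)) * rho x := fun x => by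
    have h0 := rho_pos x
    rw [(hvd x).fderiv]
    refine (norm_add_le _ _).trans ?_
    rw [norm_smul, norm_smul, norm_smul, innerSL_apply_norm, add_mul]
    have hk1 : rho x ^ k = rho x ^ (k - 1) * rho x := by
      rw [← pow_succ]; congr 1; omega
    refine add_le_add ?_ ?_
    · rw [Real.norm_eq_abs, abs_of_pos (by positivity), hk1]
      calc _ = (rho x ^ (k - 1) * ‖fderiv ℝ u x‖) * rho x := by ring
        _ ≤ _ := by gcongr; exact hD x
    · have hup : 0 < u x := by
        have := hv0 x
        exact pos_of_mul_pos_right this (by positivity)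
      rw [Real.norm_eq_abs, abs_of_pos hup, norm_neg, Real.norm_eq_abs,
        abs_of_nonneg (by positivity)]
      have h1 := norm_mul_rho_le x
      have h2 := (hb x).2
      have hhi0 : 0 ≤ hi := (hlo.le.trans (hb x).1).trans h2
      have hvx : 0 ≤ rho x ^ k * u x := by positivity
      calc u x * (k / 2 * rho x ^ (k + 2) * ‖x‖) =
          k / 2 * (rho x ^ k * u x) * (‖x‖ * rho x) * rho x := by ring
        _ ≤ k / 2 * hi * 2 * rho x := by gcongr
        _ ≤ _ := by
          have : 0 ≤ (k : ℝ) * hi * rho x := by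
            have : 0 ≤ hi := (hlo.le.trans (hb x).1).trans h2
            positivity
          linarith
  have hHd : ∀ x, HasFDerivAt (fun x => G (v x)) (g (v x) • fderiv ℝ v x) x := fun x =>
    (hG _ (hv0 x)).comp_hasFDerivAt x (hvC.differentiable (by norm_num) x).hasFDerivAt
  have hHC : ContDiff ℝ 1 fun x => G (v x) := by
    rw [contDiff_one_iff_fderiv]
    refine ⟨fun x => (hHd x).differentiableAt, ?_⟩
    have : fderiv ℝ (fun x => G (v x)) = fun x => g (v x) • fderiv ℝ v x := by
      ext1 x; exact (hHd x).fderiv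
    rw [this]
    exact hgv.smul (hvC.continuous_fderiv (by norm_num))
  have hhi : 0 ≤ hi := (hlo.le.trans (hb 0).1).trans (hb 0).2
  have I := ibp hn a b (fun x => G (v x)) hHC (CG + Cg * (D + k * (2 * hi))) (fun x => by
      have := hCG _ (hvI x)
      rw [Real.norm_eq_abs] at this
      have h2 : 0 ≤ Cg * (D + k * (2 * hi)) := by positivity
      linarith) (fun x => by
      have h0 := rho_pos x
      rw [(hHd x).fderiv, norm_smul]
      calc _ ≤ Cg * ((D + k * (2 * hi)) * rho x) := by
            gcongr
            · exact hCg _ (hvI x)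
            · exact hvb x
        _ ≤ _ := by
            have : 0 ≤ CG * rho x := by positivity
            linarith)
  have hfd : ∀ x, fderiv ℝ (fun x => G (v x)) x (XX a b x) = g (v x) * fderiv ℝ v x (XX a b x) :=
    fun x => by rw [(hHd x).fderiv]; simp
  simp only [hfd] at I
  have hX := XX_cont a b
  have hζ := zet_cont a b
  have i1 : Integrable fun x => rho x ^ (2 * n) * (g (v x) * fderiv ℝ v x (XX a b x)) := by
    have hc : Continuous fun x => fderiv ℝ v x (XX a b x) :=
      (hvC.continuous_fderiv (by norm_num)).clm_apply hX
    refine integrable_of_bound (j := 2 * n - 1) (by omega)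
      ((hρ.pow _).mul (hgv.mul hc)).aestronglyMeasurable
      (Cg * (D + k * (2 * hi)) * (‖a‖ + |b|)) fun x => ?_
    have h0 := rho_pos x
    have h4 : rho x ^ (2 * n) * rho x = rho x ^ (2 * n - 1) * rho x ^ 2 := by
      rw [← pow_succ, ← pow_add]; congr 1; omega
    rw [abs_mul, abs_mul, abs_of_pos (by positivity)]
    calc _ ≤ rho x ^ (2 * n) * (Cg * (((D + k * (2 * hi)) * rho x) * ‖XX a b x‖)) := by
          gcongr
          · exact hCg _ (hvI x)
          · refine ((fderiv ℝ v x).le_opNorm _).trans ?_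
            gcongr
            exact hvb x
      _ = (rho x ^ (2 * n) * rho x) * (Cg * ((D + k * (2 * hi)) * ‖XX a b x‖)) := by ring
      _ = Cg * (D + k * (2 * hi)) * (rho x ^ 2 * ‖XX a b x‖) * rho x ^ (2 * n - 1) := by
          rw [h4]; ring
      _ ≤ _ := by gcongr; exact XX_bound a b x
  have i2 : Integrable fun x => zet a b x * rho x ^ (2 * n) * (k / 2 * v x * g (v x)) := by
    refine integrable_of_bound (j := 2 * n) (by omega)
      ((hζ.mul (hρ.pow _)).mul ((continuous_const.mul hvc).mul hgv)).aestronglyMeasurable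
      ((‖a‖ + |b|) * (k / 2 * hi * Cg)) fun x => ?_
    have h0 := rho_pos x
    rw [abs_mul, abs_mul, abs_mul, abs_mul, abs_of_pos (by positivity : 0 < rho x ^ (2 * n)),
      abs_of_pos (show 0 < v x from hv0 x), abs_of_nonneg (by positivity : 0 ≤ (k : ℝ) / 2)]
    calc _ ≤ (‖a‖ + |b|) * rho x ^ (2 * n) * (k / 2 * hi * Cg) := by
          gcongr
          · exact mul_nonneg (mul_nonneg (by positivity) (show 0 < v x from hv0 x).le) (abs_nonneg _)
          · exact zet_bound a b x
          · exact (hb x).2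
          · exact hCg _ (hvI x)
      _ = _ := by ring
  have i3 : Integrable fun x => zet a b x * rho x ^ (2 * n) * G (v x) := by
    refine integrable_of_bound (j := 2 * n) (by omega)
      ((hζ.mul (hρ.pow _)).mul hGv).aestronglyMeasurable
      ((‖a‖ + |b|) * CG) fun x => ?_
    have h0 := rho_pos x
    rw [abs_mul, abs_mul, abs_of_pos (by positivity : 0 < rho x ^ (2 * n))]
    calc _ ≤ (‖a‖ + |b|) * rho x ^ (2 * n) * CG := by
          gcongr
          · exact zet_bound a b x
          · exact hCG _ (hvI x)
      _ = _ := by ring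
  have hP : ∀ x, F x * (fderiv ℝ u x (XX a b x) + k / 2 * (inner ℝ a x + b) * u x) =
      rho x ^ (2 * n) * (g (v x) * fderiv ℝ v x (XX a b x)) +
        zet a b x * rho x ^ (2 * n) * (k / 2 * v x * g (v x)) := fun x => by
    rw [(hvd x).fderiv, ← zet_eq a b x]
    simp only [hF, ContinuousLinearMap.add_apply, ContinuousLinearMap.smul_apply, smul_eq_mul,
      innerSL_apply_apply, hv]
    ring
  simp only [hP] at P
  rw [integral_add i1 i2, I, ← integral_const_mul, ← integral_add (i3.const_mul _) i2] at P
  rw [← P]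
  congr 1; ext x; ring

end Sph14
namespace Sph14
variable {n : ℕ}

lemma exists_prim (α : ℝ) : ∃ Φ : ℝ → ℝ, ∀ t, 0 < t → HasDerivAt Φ (t ^ (-α)) t := by
  by_cases h : α = 1
  · subst h
    refine ⟨Real.log, fun t ht => ?_⟩
    rw [Real.rpow_neg_one]
    exact Real.hasDerivAt_log ht.ne'
  · refine ⟨fun t => t ^ (1 - α) / (1 - α), fun t ht => ?_⟩
    have h1 : 1 - α ≠ 0 := fun h2 => h (by linarith)
    have h2 := (Real.hasDerivAt_rpow_const (x := t) (p := 1 - α) (Or.inl ht.ne')).div_const (1 - α)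
    have h3 : (1 - α) * t ^ (1 - α - 1) / (1 - α) = t ^ (-α) := by
      rw [mul_div_cancel_left₀ _ h1]
      congr 1; ring
    rw [h3] at h2
    exact h2

lemma H_lower (H : ℝ → ℝ) (P Q α K : ℝ) (hQ : 0 ≤ Q) (hα : 0 < α) (hP : 0 ≤ P)
    (hH : ∀ s, 0 < s → HasDerivAt H (P * s + Q * s ^ (-α)) s) (s t : ℝ) (hs : 0 < s) (hst : s ≤ t)
    (htK : t ≤ K) (h1 : 1 ≤ s + t) :
    (P / 2 + Q * K ^ (-α)) * (t - s) ≤ H t - H s := by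
  have hd : ∀ x, 0 < x → HasDerivAt (fun x => H x - (P / 2 * x ^ 2 + Q * K ^ (-α) * x))
      ((P * x + Q * x ^ (-α)) - (P * x + Q * K ^ (-α))) x := fun x hx => by
    refine (hH x hx).sub ?_
    have := ((hasDerivAt_pow 2 x).const_mul (P / 2)).add
      ((hasDerivAt_id x).const_mul (Q * K ^ (-α)))
    have h3 : P / 2 * (((2 : ℕ) : ℝ) * x ^ (2 - 1)) + Q * K ^ (-α) * 1 = P * x + Q * K ^ (-α) := by
      norm_num; ring
    rw [h3] at this
    exact this
  have hm : MonotoneOn (fun x => H x - (P / 2 * x ^ 2 + Q * K ^ (-α) * x)) (Set.Icc s t) := by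
    refine monotoneOn_of_deriv_nonneg (convex_Icc s t) ?_ ?_ ?_
    · exact fun x hx => (hd x (hs.trans_le hx.1)).continuousAt.continuousWithinAt
    · intro x hx
      rw [interior_Icc] at hx
      exact (hd x (hs.trans hx.1)).differentiableAt.differentiableWithinAt
    · intro x hx
      rw [interior_Icc] at hx
      have hx0 := hs.trans hx.1
      rw [(hd x hx0).deriv]
      have : K ^ (-α) ≤ x ^ (-α) :=
        Real.rpow_le_rpow_of_nonpos hx0 (hx.2.le.trans htK) (by linarith)
      nlinarith
  have := hm (Set.left_mem_Icc.2 hst) (Set.right_mem_Icc.2 hst) hst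
  simp only at this
  have h3 : 0 ≤ P / 2 * ((t - s) * (s + t - 1)) := by
    have : 0 ≤ (t - s) * (s + t - 1) := mul_nonneg (by linarith) (by linarith)
    positivity
  nlinarith

lemma H_upper (H : ℝ → ℝ) (P Q α K : ℝ) (hQ : 0 ≤ Q) (hα : 0 < α) (hP : 0 ≤ P)
    (hH : ∀ s, 0 < s → HasDerivAt H (P * s + Q * s ^ (-α)) s) (s t : ℝ) (hs : 1 ≤ s) (hst : s ≤ t)
    (htK : t ≤ K) :
    H t - H s ≤ (P * K + Q) * (t - s) := by
  have hd : ∀ x, 0 < x → HasDerivAt (fun x => (P * K + Q) * x - H x)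
      ((P * K + Q) - (P * x + Q * x ^ (-α))) x := fun x hx => by
    refine HasDerivAt.sub ?_ (hH x hx)
    simpa using (hasDerivAt_id x).const_mul (P * K + Q)
  have hm : MonotoneOn (fun x => (P * K + Q) * x - H x) (Set.Icc s t) := by
    refine monotoneOn_of_deriv_nonneg (convex_Icc s t) ?_ ?_ ?_
    · exact fun x hx => (hd x (by linarith [hx.1])).continuousAt.continuousWithinAt
    · intro x hx
      rw [interior_Icc] at hx
      exact (hd x (by linarith [hx.1])).differentiableAt.differentiableWithinAt
    · intro x hx
      rw [interior_Icc] at hx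
      have hx1 : 1 ≤ x := by linarith [hx.1]
      rw [(hd x (by linarith)).deriv]
      have h1 : x ^ (-α) ≤ 1 := Real.rpow_le_one_of_one_le_of_nonpos hx1 (by linarith)
      have h2 : P * x ≤ P * K := mul_le_mul_of_nonneg_left (hx.2.le.trans htK) hP
      nlinarith
  have := hm (Set.left_mem_Icc.2 hst) (Set.right_mem_Icc.2 hst) hst
  simp only at this
  linarith

lemma pt_abs (ζ e w s0 δ κ Λ D : ℝ) (hκ : 0 ≤ κ) (hΛ : 0 ≤ Λ) (hδ0 : 0 ≤ δ) (hδ : δ ≤ 1 / 4)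
    (hs0 : 5 / 4 ≤ s0) (h1 : ζ ≤ 1) (h2 : -1 ≤ ζ) (hw : |w - e| ≤ δ)
    (e1 : 0 ≤ ζ → ζ / 2 ≤ s0 - e) (e2 : ζ ≤ 0 → -ζ / 2 ≤ e - s0)
    (a1 : w ≤ s0 → κ * (s0 - w) ≤ -D) (a2 : s0 ≤ w → κ * (w - s0) ≤ D)
    (a3 : s0 ≤ w → D ≤ Λ * (w - s0)) (a4 : 1 ≤ w → w ≤ s0 → -D ≤ Λ * (s0 - w)) :
    ζ * D ≤ -κ * ζ ^ 2 / 2 + (κ + Λ) * δ := by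
  obtain ⟨w1, w2⟩ := abs_le.1 hw
  have hκδ : 0 ≤ κ * δ := by positivity
  have hΛδ : 0 ≤ Λ * δ := by positivity
  rcases le_total 0 ζ with hz | hz
  · have e1 := e1 hz
    rcases le_total w s0 with hws | hws
    · have h3 := a1 hws
      have h4 : κ * (ζ / 2 - δ) ≤ -D := le_trans (mul_le_mul_of_nonneg_left (by linarith) hκ) h3
      have h5 := mul_le_mul_of_nonneg_left h4 hz
      have h6 : ζ * (κ * δ) ≤ 1 * (κ * δ) := by gcongr
      nlinarith
    · have h3 := a3 hws
      have h4 : D ≤ Λ * δ := h3.trans (by gcongr; linarith)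
      have h5 : ζ * D ≤ ζ * (Λ * δ) := mul_le_mul_of_nonneg_left h4 hz
      have h6 : ζ * (Λ * δ) ≤ 1 * (Λ * δ) := by gcongr
      have h7 : κ * (ζ * (ζ / 2)) ≤ κ * (1 * δ) := by
        gcongr
        linarith
      nlinarith
  · have e2 := e2 hz
    rcases le_total s0 w with hws | hws
    · have h3 := a2 hws
      have h4 : κ * (-ζ / 2 - δ) ≤ D := le_trans (mul_le_mul_of_nonneg_left (by linarith) hκ) h3
      have h5 := mul_le_mul_of_nonneg_left h4 (neg_nonneg.2 hz)
      have h6 : -ζ * (κ * δ) ≤ 1 * (κ * δ) := by gcongr; linarith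
      nlinarith
    · have h3 := a4 (by linarith) hws
      have h4 : -D ≤ Λ * δ := h3.trans (by gcongr; linarith)
      have h5 : -ζ * -D ≤ -ζ * (Λ * δ) := mul_le_mul_of_nonneg_left h4 (neg_nonneg.2 hz)
      have h6 : -ζ * (Λ * δ) ≤ 1 * (Λ * δ) := by gcongr; linarith
      have h7 : κ * (-ζ * (-ζ / 2)) ≤ κ * (1 * δ) := by
        have : 0 ≤ -ζ := by linarith
        gcongr
        · linarith
        · linarith
      nlinarith

lemma sqrt2_ge : 5 / 4 ≤ √2 := by
  apply Real.le_sqrt_of_sq_le; norm_num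

lemma sqrt2_le : √2 ≤ 2 := by
  apply Real.sqrt_le_iff.2; norm_num

lemma s0_bounds (k : ℕ) (hk : 1 ≤ k) : 5 / 4 ≤ √2 ^ k ∧ √2 ^ k ≤ 2 ^ k := by
  have h1 := sqrt2_ge
  have h2 := sqrt2_le
  constructor
  · exact h1.trans (le_self_pow₀ (by linarith) (by omega))
  · gcongr

lemma e_lower (k : ℕ) (hk : 1 ≤ k) (d : ℝ) (hd0 : 0 ≤ d) (hd2 : d ≤ 2) :
    (0 ≤ 1 - d ^ 2 / 2 → (1 - d ^ 2 / 2) / 2 ≤ √2 ^ k - d ^ k) ∧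
    (1 - d ^ 2 / 2 ≤ 0 → -(1 - d ^ 2 / 2) / 2 ≤ d ^ k - √2 ^ k) := by
  obtain ⟨j, rfl⟩ : ∃ j, k = j + 1 := ⟨k - 1, by omega⟩
  have h1 := sqrt2_ge
  have h2 := sqrt2_le
  have hsq : √2 ^ 2 = 2 := Real.sq_sqrt (by norm_num)
  have hone : 1 ≤ √2 ^ j := one_le_pow₀ (by linarith)
  constructor
  · intro h
    have hd : d ≤ √2 := Real.le_sqrt_of_sq_le (by linarith)
    have h3 : d ^ j ≤ √2 ^ j := by gcongr
    have h4 : d ^ j * d ≤ √2 ^ j * d := by gcongr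
    have h5 : 0 ≤ (√2 ^ j - 1) * (√2 - d) := mul_nonneg (by linarith) (by linarith)
    rw [pow_succ _ j, pow_succ _ j]
    nlinarith [mul_nonneg (sub_nonneg.2 hd) (by linarith : 0 ≤ 4 - √2 - d)]
  · intro h
    have hd : √2 ≤ d := Real.sqrt_le_iff.2 ⟨hd0, by linarith⟩
    have h3 : √2 ^ j ≤ d ^ j := by gcongr
    have h4 : √2 ^ j * d ≤ d ^ j * d := by gcongr
    have h5 : 0 ≤ (√2 ^ j - 1) * (d - √2) := mul_nonneg (by linarith) (by linarith)
    rw [pow_succ _ j, pow_succ _ j]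
    nlinarith [mul_nonneg (sub_nonneg.2 hd) (by linarith : 0 ≤ 4 - √2 - d)]

lemma pt_bound (k : ℕ) (hk : 1 ≤ k) (H : ℝ → ℝ) (P Q α : ℝ) (hQ : 0 ≤ Q) (hα : 0 < α) (hP : 0 ≤ P)
    (hH : ∀ s, 0 < s → HasDerivAt H (P * s + Q * s ^ (-α)) s) (d w δ : ℝ) (hd0 : 0 ≤ d)
    (hd2 : d ≤ 2) (hw0 : 0 < w) (hwK : w ≤ 2 ^ k) (hδ : δ ≤ 1 / 4) (hw : |w - d ^ k| ≤ δ) :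
    (1 - d ^ 2 / 2) * (H w - H (√2 ^ k)) ≤
      -(P / 2 + Q * (2 ^ k : ℝ) ^ (-α)) * (1 - d ^ 2 / 2) ^ 2 / 2 +
      ((P / 2 + Q * (2 ^ k : ℝ) ^ (-α)) + (P * 2 ^ k + Q)) * δ := by
  obtain ⟨b1, b2⟩ := s0_bounds k hk
  obtain ⟨e1, e2⟩ := e_lower k hk d hd0 hd2
  refine pt_abs (1 - d ^ 2 / 2) (d ^ k) w (√2 ^ k) δ _ _ _ (by positivity) (by positivity)
    ((abs_nonneg _).trans hw) hδ b1 (by nlinarith) (by nlinarith) hw e1 e2 ?_ ?_ ?_ ?_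
  · intro h
    have := H_lower H P Q α _ hQ hα hP hH w _ hw0 h b2 (by linarith)
    linarith
  · intro h
    exact H_lower H P Q α _ hQ hα hP hH _ w (by linarith) h hwK (by linarith)
  · intro h
    exact H_upper H P Q α _ hQ hα hP hH _ w (by linarith) h hwK
  · intro h1 h
    have := H_upper H P Q α _ hQ hα hP hH w _ h1 h b2
    linarith

end Sph14
namespace Sph14
variable {n : ℕ}

/-- integrals of powers of the chordal distance against a continuous density -/
lemma cd_int (hn : 3 ≤ n) (q : EE n → ℝ) (hq : Continuous q) (C : ℝ)
    (hqC : ∀ y, |q y| ≤ C * rho y ^ (2 * n)) (x : EE n) (j : ℕ) :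
    Integrable fun y => cd x y ^ j * q y := by
  refine integrable_of_bound (j := 2 * n) (by omega)
    (((cd_cont x).pow j).mul hq).aestronglyMeasurable (2 ^ j * C) fun y => ?_
  rw [abs_mul, abs_of_nonneg (pow_nonneg (cd_nonneg x y) j), mul_assoc]
  have := cd_nonneg x y
  have h2 := cd_le_two x y
  gcongr
  exact hqC y

lemma v_eq (k : ℕ) (γ : ℝ) (g : ℝ → ℝ) (u : EE n → ℝ)
    (hu : ∀ x, u x = γ * ∫ y, ‖x - y‖ ^ k * (rho y ^ (2 * n + k) * g (rho y ^ k * u y)))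
    (x : EE n) :
    rho x ^ k * u x = γ * ∫ y, cd x y ^ k * (rho y ^ (2 * n) * g (rho y ^ k * u y)) := by
  conv_lhs => rw [hu x]
  rw [mul_left_comm, ← integral_const_mul]
  congr 2; ext y
  unfold cd
  rw [mul_pow, mul_pow, pow_add]; ring

lemma pow_diff (k : ℕ) (a b : ℝ) (ha : 0 ≤ a) (hb : 0 ≤ b) (ha2 : a ≤ 2) (hb2 : b ≤ 2) :
    |a ^ k - b ^ k| ≤ (k * 2 ^ (k - 1)) * |a - b| := by
  have h := abs_pow_sub_pow_le a b k
  rw [abs_of_nonneg ha, abs_of_nonneg hb] at h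
  refine h.trans ?_
  have : max a b ^ (k - 1) ≤ 2 ^ (k - 1) := by
    gcongr
    exact max_le ha2 hb2
  calc |a - b| * k * max a b ^ (k - 1) ≤ |a - b| * k * 2 ^ (k - 1) := by gcongr
    _ = _ := by ring

lemma conc (hn : 3 ≤ n) (k : ℕ) (γ : ℝ) (hγ : 0 < γ) (q : EE n → ℝ) (hq : Continuous q)
    (hq0 : ∀ y, 0 ≤ q y) (C : ℝ) (hqC : ∀ y, |q y| ≤ C * rho y ^ (2 * n)) (x x0 : EE n) :
    |γ * (∫ y, cd x y ^ k * q y) - cd x x0 ^ k * (γ * ∫ y, q y)| ≤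
      (k * 2 ^ (k - 1)) * (γ * ∫ y, cd x0 y * q y) := by
  have iq : Integrable q := by simpa using cd_int hn q hq C hqC x 0
  have i1 := cd_int hn q hq C hqC x k
  have i2 : Integrable fun y => cd x0 y * q y := by simpa using cd_int hn q hq C hqC x0 1
  have e : γ * (∫ y, cd x y ^ k * q y) - cd x x0 ^ k * (γ * ∫ y, q y) =
      γ * ∫ y, (cd x y ^ k * q y - cd x x0 ^ k * q y) := by
    rw [integral_sub i1 (iq.const_mul _), integral_const_mul]; ring
  rw [e, abs_mul, abs_of_pos hγ, mul_left_comm]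
  gcongr
  rw [← integral_const_mul, ← Real.norm_eq_abs]
  refine (norm_integral_le_integral_norm _).trans ?_
  refine integral_mono (i1.sub (iq.const_mul _)).norm (i2.const_mul _) fun y => ?_
  simp only [Real.norm_eq_abs]
  rw [← sub_mul, abs_mul, abs_of_nonneg (hq0 y), ← mul_assoc]
  refine mul_le_mul_of_nonneg_right ?_ (hq0 y)
  refine (pow_diff k _ _ (cd_nonneg _ _) (cd_nonneg _ _) (cd_le_two _ _) (cd_le_two _ _)).trans ?_
  gcongr
  exact cd_tri x y x0

lemma lower_of_spread (hn : 3 ≤ n) (k : ℕ) (hk : 1 ≤ k) (γ : ℝ) (hγ : 0 < γ) (q : EE n → ℝ)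
    (hq : Continuous q)
    (hq0 : ∀ y, 0 ≤ q y) (C : ℝ) (hqC : ∀ y, |q y| ≤ C * rho y ^ (2 * n)) (x : EE n)
    (s : ℝ) (hs : 0 < s) (hsp : s * (γ * ∫ y, q y) ≤ γ * ∫ y, cd x y * q y) :
    (s / 2) ^ k * (γ * ∫ y, q y) ≤ γ * ∫ y, cd x y ^ k * q y := by
  have iq : Integrable q := by simpa using cd_int hn q hq C hqC x 0
  have i1 := cd_int hn q hq C hqC x k
  have i2 : Integrable fun y => cd x y * q y := by simpa using cd_int hn q hq C hqC x 1
  have hk1 : (s / 2) ^ k = (s / 2) ^ (k - 1) * (s / 2) := by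
    rw [← pow_succ]; congr 1; omega
  have hpt : ∀ d : ℝ, 0 ≤ d → (s / 2) ^ (k - 1) * d ≤ (s / 2) ^ k + d ^ k := by
    intro d hd
    rcases le_total d (s / 2) with h | h
    · have : (s / 2) ^ (k - 1) * d ≤ (s / 2) ^ k := by rw [hk1]; gcongr
      have := pow_nonneg hd k
      linarith
    · have h2 : d ^ k = d ^ (k - 1) * d := by rw [← pow_succ]; congr 1; omega
      have : (s / 2) ^ (k - 1) * d ≤ d ^ k := by rw [h2]; gcongr
      have : 0 ≤ (s / 2) ^ k := by positivity
      linarith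
  have hI : (s / 2) ^ (k - 1) * ∫ y, cd x y * q y ≤
      (s / 2) ^ k * (∫ y, q y) + ∫ y, cd x y ^ k * q y := by
    rw [← integral_const_mul, ← integral_const_mul, ← integral_add (iq.const_mul _) i1]
    refine integral_mono (i2.const_mul _) ((iq.const_mul _).add i1) fun y => ?_
    simp only
    have := mul_le_mul_of_nonneg_right (hpt _ (cd_nonneg x y)) (hq0 y)
    linarith
  have h3 := mul_le_mul_of_nonneg_left hI hγ.le
  have h4 := mul_le_mul_of_nonneg_left hsp (by positivity : 0 ≤ (s / 2) ^ (k - 1))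
  rw [hk1] at h3 ⊢
  linarith

lemma emb_coeff (x0 : EE n) : ‖rho x0 ^ 2 • x0‖ ^ 2 + (rho x0 ^ 2 - 1) ^ 2 = 1 := by
  rw [norm_smul, Real.norm_eq_abs, abs_of_pos (pow_pos (rho_pos x0) 2)]
  have := rho_sq_mul x0
  linear_combination rho x0 ^ 2 * this

/-- spreading constant -/
noncomputable def tauS (n k : ℕ) (α : ℝ) : ℝ :=
  1 / (4 * (n + 1) * (k * 2 ^ (k - 1)) * (1 + (2 * 2 ^ k + (2 ^ k : ℝ) ^ α)))

lemma tauS_pos (n k : ℕ) (hk : 1 ≤ k) (α : ℝ) : 0 < tauS n k α := by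
  unfold tauS
  have : (0 : ℝ) < k := by exact_mod_cast hk
  positivity

set_option maxHeartbeats 1600000 in
lemma spread (hn : 3 ≤ n) (k : ℕ) (hk : 1 ≤ k) (γ : ℝ) (hγ : 0 < γ) (α : ℝ) (hα : 0 < α)
    (hB : 0 ≤ (n : ℝ) + k / 2 - α * k / 2) (ε : ℝ) (hε : 0 ≤ ε)
    (hor : 0 < ε ∨ 0 < (n : ℝ) + k / 2 - α * k / 2)
    (u : EE n → ℝ) (hud : ContDiff ℝ 1 u) (lo hi : ℝ) (hlo : 0 < lo)
    (hb : ∀ x, lo ≤ rho x ^ k * u x ∧ rho x ^ k * u x ≤ hi)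
    (hu : ∀ x, u x = γ * ∫ y, ‖x - y‖ ^ k * (rho y ^ (2 * n + k) *
      (fun t => ε * t + t ^ (-α)) (rho y ^ k * u y)))
    (q : EE n → ℝ) (hqdef : q = fun y => rho y ^ (2 * n) *
      (fun t : ℝ => ε * t + t ^ (-α)) (rho y ^ k * u y)) (hq : Continuous q) (C : ℝ)
    (hqC : ∀ y, |q y| ≤ C * rho y ^ (2 * n)) (hq0 : ∀ y, 0 ≤ q y)
    (hM : 0 < γ * ∫ y, q y)
    (x0 : EE n) :
    tauS n k α * (γ * ∫ y, q y) ≤ γ * ∫ y, cd x0 y * q y := by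
  set M := γ * ∫ y, q y with hMd
  set T := γ * ∫ y, cd x0 y * q y with hT
  set B := (n : ℝ) + k / 2 - α * k / 2 with hBd
  set g : ℝ → ℝ := fun t => ε * t + t ^ (-α) with hg
  by_contra! hcon
  have hkR : (1 : ℝ) ≤ k := by exact_mod_cast hk
  obtain ⟨Φ, hΦ⟩ := exists_prim α
  set G : ℝ → ℝ := fun t => ε * t ^ 2 / 2 + Φ t with hGd
  have hG : ∀ t, 0 < t → HasDerivAt G (g t) t := fun t ht => by
    have h1 := (((hasDerivAt_pow 2 t).const_mul ε).div_const 2).add (hΦ t ht)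
    have h2 : ε * (((2 : ℕ) : ℝ) * t ^ (2 - 1)) / 2 + t ^ (-α) = g t := by
      simp only [hg]; norm_num; ring
    rw [h2] at h1
    exact h1
  have hgd : ∀ t, 0 < t → HasDerivAt g (ε - α * t ^ (-α - 1)) t := fun t ht => by
    have h1 := ((hasDerivAt_id t).const_mul ε).add
      (Real.hasDerivAt_rpow_const (x := t) (p := -α) (Or.inl ht.ne'))
    have h2 : ε * 1 + -α * t ^ (-α - 1) = ε - α * t ^ (-α - 1) := by ring
    rw [h2] at h1
    exact h1
  have hgc : ContinuousOn g (Set.Ioi 0) := fun t ht => (hgd t ht).continuousAt.continuousWithinAt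
  set h : ℝ → ℝ := fun t => n * G t + k / 2 * t * g t with hhd
  have hh : ∀ t, 0 < t → HasDerivAt h ((n + k) * ε * t + B * t ^ (-α)) t := fun t ht => by
    have h1 := ((hG t ht).const_mul (n : ℝ)).add
      (((hasDerivAt_id t).const_mul ((k : ℝ) / 2)).mul (hgd t ht))
    have h3 : t ^ (-α) = t ^ (-α - 1) * t := by
      rw [Real.rpow_sub_one ht.ne', div_mul_cancel₀ _ ht.ne']
    have h2 : (n : ℝ) * g t + ((k : ℝ) / 2 * 1 * g t + (k : ℝ) / 2 * id t * (ε - α * t ^ (-α - 1))) =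
        (n + k) * ε * t + B * t ^ (-α) := by
      simp only [hg, hBd, id, h3]; ring
    rw [h2] at h1
    exact h1
  set P := (n + k) * ε * M ^ 2 with hP
  set Q := B * (M * M ^ (-α)) with hQ
  have hP0 : 0 ≤ P := by positivity
  have hQ0 : 0 ≤ Q := by positivity
  set H : ℝ → ℝ := fun s => h (M * s) with hHd
  have hH : ∀ s, 0 < s → HasDerivAt H (P * s + Q * s ^ (-α)) s := fun s hs => by
    have h1 := (hh (M * s) (by positivity)).comp s ((hasDerivAt_id s).const_mul M)
    have h2 : ((n + k) * ε * (M * s) + B * (M * s) ^ (-α)) * (M * 1) = P * s + Q * s ^ (-α) := by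
      rw [Real.mul_rpow hM.le hs.le]; simp only [hP, hQ]; ring
    rw [h2] at h1
    exact h1
  -- the point
  set a : EE n := rho x0 ^ 2 • x0 with ha
  set b : ℝ := rho x0 ^ 2 - 1 with hbd
  have hz : ∀ x, zet a b x = 1 - cd x x0 ^ 2 / 2 := zet_eq_cd x0
  have poh := pohozaev_v hn k hk γ g G hgc hG u hud lo hi hlo hb hu a b
  have zi := zet_integral hn a b
  have zs := zet_sq_integral hn a b (emb_coeff x0)
  have hveq := v_eq k γ g u hu
  set v : EE n → ℝ := fun x => rho x ^ k * u x with hv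
  have hq' : ∀ x, v x = γ * ∫ y, cd x y ^ k * q y := fun x => by
    rw [hqdef]; exact hveq x
  have hv0 : ∀ x, 0 < v x := fun x => hlo.trans_le (hb x).1
  have hvI : ∀ x, v x ∈ Set.Icc lo hi := fun x => hb x
  have hρ := rho_cont (n := n)
  have hvc : Continuous v := (hρ.pow k).mul hud.continuous
  have hsub : Set.Icc lo hi ⊆ Set.Ioi 0 := fun t ht => hlo.trans_le ht.1
  have hhc : ContinuousOn h (Set.Ioi 0) := fun t ht => (hh t ht).continuousAt.continuousWithinAt
  have hhv : Continuous fun x => h (v x) := hhc.comp_continuous hvc hv0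
  obtain ⟨Ch, hCh⟩ := isCompact_Icc.exists_bound_of_continuousOn (hhc.mono hsub)
  have hCh0 : 0 ≤ Ch := (norm_nonneg _).trans (hCh _ (hvI 0))
  have hζ := zet_cont a b
  have poh' : ∫ x, zet a b x * rho x ^ (2 * n) * h (v x) = 0 := poh
  have i1 : Integrable fun x => zet a b x * rho x ^ (2 * n) * h (v x) := by
    refine integrable_of_bound (j := 2 * n) (by omega)
      ((hζ.mul (hρ.pow _)).mul hhv).aestronglyMeasurable
      ((‖a‖ + |b|) * Ch) fun x => ?_
    have h0 := rho_pos x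
    rw [abs_mul, abs_mul, abs_of_pos (by positivity : 0 < rho x ^ (2 * n))]
    calc _ ≤ (‖a‖ + |b|) * rho x ^ (2 * n) * Ch := by
          gcongr
          · exact zet_bound a b x
          · exact hCh _ (hvI x)
      _ = _ := by ring
  have i2 : Integrable fun x => zet a b x * rho x ^ (2 * n) := by
    refine integrable_of_bound (j := 2 * n) (by omega)
      (hζ.mul (hρ.pow _)).aestronglyMeasurable (‖a‖ + |b|) fun x => ?_
    have h0 := rho_pos x
    rw [abs_mul, abs_of_pos (by positivity : 0 < rho x ^ (2 * n))]
    gcongr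
    exact zet_bound a b x
  have i3 : Integrable fun x : EE n => rho x ^ (2 * n) := rho_pow_integrable (by omega)
  have i4 : Integrable fun x => rho x ^ (2 * n) * zet a b x ^ 2 := by
    refine integrable_of_bound (j := 2 * n) (by omega)
      ((hρ.pow _).mul (hζ.pow 2)).aestronglyMeasurable ((‖a‖ + |b|) ^ 2) fun x => ?_
    have h0 := rho_pos x
    have := zet_bound a b x
    rw [abs_mul, abs_of_pos (by positivity), abs_pow, mul_comm]
    gcongr
  set κ := P / 2 + Q * (2 ^ k : ℝ) ^ (-α) with hκ
  set Λ := P * 2 ^ k + Q with hΛ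
  set L : ℝ := k * 2 ^ (k - 1) with hL
  have hL1 : 0 < L := by positivity
  set δ := L * (T / M) with hδ
  set C0 : ℝ := 2 * 2 ^ k + (2 ^ k : ℝ) ^ α with hC0
  have hC0p : 0 < C0 := by positivity
  have hτ : tauS n k α = 1 / (4 * (n + 1) * L * (1 + C0)) := rfl
  have hTM : T / M < tauS n k α := by rw [div_lt_iff₀ hM]; exact hcon
  have hδlt : δ < 1 / (4 * (n + 1) * (1 + C0)) := by
    have h1 : δ < L * tauS n k α := mul_lt_mul_of_pos_left hTM hL1
    rw [hτ] at h1
    refine h1.trans_le (le_of_eq ?_)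
    field_simp
  have hδ4 : δ ≤ 1 / 4 := by
    refine hδlt.le.trans ?_
    apply one_div_le_one_div_of_le (by norm_num)
    have : (0 : ℝ) ≤ n := by positivity
    nlinarith [mul_nonneg this hC0p.le]
  have hpt : ∀ x, zet a b x * rho x ^ (2 * n) * h (v x) -
      H (√2 ^ k) * (zet a b x * rho x ^ (2 * n)) ≤
      (-κ / 2) * (rho x ^ (2 * n) * zet a b x ^ 2) + (κ + Λ) * δ * rho x ^ (2 * n) := fun x => by
    have hw0 : 0 < v x / M := div_pos (hv0 x) hM
    have hcc := conc hn k γ hγ q hq hq0 C hqC x x0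
    rw [← hq' x] at hcc
    have hw : |v x / M - cd x x0 ^ k| ≤ δ := by
      have e : v x / M - cd x x0 ^ k = (v x - cd x x0 ^ k * M) / M := by field_simp
      rw [e, abs_div, abs_of_pos hM, hδ, mul_div_assoc']
      exact div_le_div_of_nonneg_right hcc hM.le
    have hwK : v x / M ≤ 2 ^ k := by
      rw [div_le_iff₀ hM, hq' x, hMd, mul_left_comm]
      refine mul_le_mul_of_nonneg_left ?_ hγ.le
      rw [← integral_const_mul]
      refine integral_mono (cd_int hn q hq C hqC x k) ?_ fun y => ?_
      · have : Integrable q := by simpa using cd_int hn q hq C hqC x 0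
        exact this.const_mul _
      · have h1 := cd_nonneg x y
        have h2 := cd_le_two x y
        have h3 := hq0 y
        simp only
        gcongr
    have key := pt_bound k hk H P Q α hQ0 hα hP0 hH (cd x x0) (v x / M) δ (cd_nonneg _ _)
      (cd_le_two _ _) hw0 hwK hδ4 hw
    have eH : H (v x / M) = h (v x) := by
      simp only [hHd]; congr 1; field_simp
    rw [← hz x, eH, ← hκ, ← hΛ] at key
    have := mul_le_mul_of_nonneg_left key (pow_nonneg (rho_pos x).le (2 * n))
    refine le_trans (le_of_eq (by ring)) (this.trans (le_of_eq (by ring)))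
  have hint := integral_mono (i1.sub (i2.const_mul (H (√2 ^ k))))
    ((i4.const_mul (-κ / 2)).add (i3.const_mul ((κ + Λ) * δ))) hpt
  have hI1 := integral_sub i1 (i2.const_mul (H (√2 ^ k)))
  have hI2 := integral_add (i4.const_mul (-κ / 2)) (i3.const_mul ((κ + Λ) * δ))
  rw [integral_const_mul, poh', zi] at hI1
  rw [integral_const_mul, integral_const_mul] at hI2
  have hint' : (0 : ℝ) ≤ (-κ / 2) * (∫ x, rho x ^ (2 * n) * zet a b x ^ 2) +
      (κ + Λ) * δ * ∫ x : EE n, rho x ^ (2 * n) := by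
    have e1 : (0 : ℝ) = 0 - H (√2 ^ k) * 0 := by ring
    rw [e1, ← hI1, ← hI2]
    exact hint
  set Z := ∫ x, rho x ^ (2 * n) * zet a b x ^ 2 with hZ
  rw [← zs] at hint'
  have hN : 0 < ∫ x : EE n, rho x ^ (2 * n) := by
    rw [integral_pos_iff_support_of_nonneg (fun x => pow_nonneg (rho_pos x).le _) i3]
    have : Function.support (fun x : EE n => rho x ^ (2 * n)) = Set.univ := by
      ext x; simp [(rho_pos x).ne']
    rw [this]
    exact Measure.measure_univ_pos.2 (NeZero.ne _)
  rw [← zs] at hN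
  have hn1 : (0 : ℝ) < n + 1 := by positivity
  have hZ0 : 0 < Z := pos_of_mul_pos_right hN hn1.le
  have hκ0 : 0 < κ := by
    have hK : (0 : ℝ) < (2 ^ k : ℝ) ^ (-α) := by positivity
    have hn0 : (0 : ℝ) < n + k := by positivity
    rcases hor with ho | ho
    · have : 0 < P := by positivity
      have : 0 ≤ Q * (2 ^ k : ℝ) ^ (-α) := by positivity
      linarith
    · have : 0 < Q := by positivity
      have : 0 < Q * (2 ^ k : ℝ) ^ (-α) := by positivity
      linarith
  have hΛκ : Λ ≤ C0 * κ := by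
    have e : (2 ^ k : ℝ) ^ α * (2 ^ k : ℝ) ^ (-α) = 1 := by
      rw [← Real.rpow_add (by positivity)]; simp
    have e2 : C0 * κ = Λ + (2 ^ k : ℝ) ^ α * (P / 2) + 2 * 2 ^ k * (Q * (2 ^ k : ℝ) ^ (-α)) := by
      simp only [hC0, hκ, hΛ]
      linear_combination Q * e
    rw [e2]
    have h1 : 0 ≤ (2 ^ k : ℝ) ^ α * (P / 2) := by positivity
    have h2 : 0 ≤ 2 * 2 ^ k * (Q * (2 ^ k : ℝ) ^ (-α)) := by positivity
    linarith
  have hδ0 : 0 ≤ δ := by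
    have : 0 ≤ T := mul_nonneg hγ.le (integral_nonneg fun y => mul_nonneg (cd_nonneg _ _) (hq0 y))
    positivity
  have f1 : κ / 2 ≤ (κ + Λ) * δ * (n + 1) := by
    have : 0 ≤ Z * ((κ + Λ) * δ * (n + 1) - κ / 2) := by linarith
    have := nonneg_of_mul_nonneg_right this hZ0
    linarith
  have f2 : (κ + Λ) * δ * (n + 1) ≤ (κ * (1 + C0)) * δ * (n + 1) := by
    gcongr; linarith
  have f3 : κ * (1 + C0) * δ * (n + 1) ≤ κ * (1 / 4) := by
    have h1 : (1 + C0) * δ * (n + 1) ≤ 1 / 4 := by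
      have : δ * (4 * (n + 1) * (1 + C0)) < 1 := by
        rwa [lt_div_iff₀ (by positivity)] at hδlt
      linarith
    have := mul_le_mul_of_nonneg_left h1 hκ0.le
    linarith
  linarith

end Sph14
namespace Sph14
variable {n : ℕ}

/-- the uniform upper bound -/
noncomputable def UU (n k : ℕ) (α εs : ℝ) : ℝ :=
  2 ^ k * (1 / (1 - εs)) / (tauS n k α / 2) ^ k

lemma UU_pos (n k : ℕ) (hk : 1 ≤ k) (α εs : ℝ) (h : εs < 1) : 0 < UU n k α εs := by
  unfold UU
  have := tauS_pos n k hk α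
  have : 0 < 1 - εs := by linarith
  positivity

set_option maxHeartbeats 800000 in
lemma core (hn : 3 ≤ n) (k : ℕ) (hk : 1 ≤ k) (γ : ℝ) (hγ : 0 < γ) (α : ℝ) (hα : 0 < α)
    (hB : 0 ≤ (n : ℝ) + k / 2 - α * k / 2) (ε εs : ℝ) (hε : 0 ≤ ε) (hes : ε < εs) (hεs : εs < 1)
    (hor : 0 < ε ∨ 0 < (n : ℝ) + k / 2 - α * k / 2)
    (hγ1 : ∀ x : EE n, γ * ∫ y, cd x y ^ k * rho y ^ (2 * n) = 1)
    (u : EE n → ℝ) (hud : ContDiff ℝ 1 u) (lo hi : ℝ) (hlo : 0 < lo)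
    (hb : ∀ x, lo ≤ rho x ^ k * u x ∧ rho x ^ k * u x ≤ hi)
    (hu : ∀ x, u x = γ * ∫ y, ‖x - y‖ ^ k * (rho y ^ (2 * n + k) *
      (fun t => ε * t + t ^ (-α)) (rho y ^ k * u y))) (x : EE n) :
    UU n k α εs ^ (-α) ≤ rho x ^ k * u x ∧ rho x ^ k * u x ≤ UU n k α εs := by
  have hveq := v_eq k γ (fun t => ε * t + t ^ (-α)) u hu
  set v : EE n → ℝ := fun x => rho x ^ k * u x with hv
  have hv0 : ∀ x, 0 < v x := fun x => hlo.trans_le (hb x).1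
  have hρ := rho_cont (n := n)
  have hvc : Continuous v := (hρ.pow k).mul hud.continuous
  have hlohi : 0 < hi := hlo.trans_le ((hb 0).1.trans (hb 0).2)
  set q : EE n → ℝ := fun y => rho y ^ (2 * n) * (ε * v y + v y ^ (-α)) with hqd
  have hq : Continuous q :=
    (hρ.pow _).mul ((continuous_const.mul hvc).add
      (hvc.rpow_const fun y => Or.inl (hv0 y).ne'))
  have hg0 : ∀ y, 0 < ε * v y + v y ^ (-α) := fun y => by
    have := hv0 y
    have h1 := Real.rpow_pos_of_pos (hv0 y) (-α)
    have : 0 ≤ ε * v y := by positivity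
    linarith
  have hq0 : ∀ y, 0 ≤ q y := fun y =>
    mul_nonneg (pow_nonneg (rho_pos y).le _) (hg0 y).le
  have hqC : ∀ y, |q y| ≤ (ε * hi + lo ^ (-α)) * rho y ^ (2 * n) := fun y => by
    rw [abs_of_nonneg (hq0 y), mul_comm]
    have := rho_pos y
    have h1 : v y ^ (-α) ≤ lo ^ (-α) :=
      Real.rpow_le_rpow_of_nonpos hlo (hb y).1 (by linarith)
    have h2 : ε * v y ≤ ε * hi := mul_le_mul_of_nonneg_left (hb y).2 hε
    exact mul_le_mul_of_nonneg_left (add_le_add h2 h1) (by positivity)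
  have hq' : ∀ x, v x = γ * ∫ y, cd x y ^ k * q y := hveq
  have iq : Integrable q := by simpa using cd_int hn q hq _ hqC 0 0
  set M := γ * ∫ y, q y with hM
  have hvM : ∀ x, v x ≤ 2 ^ k * M := fun x => by
    rw [hq' x, hM, mul_left_comm]
    refine mul_le_mul_of_nonneg_left ?_ hγ.le
    rw [← integral_const_mul]
    refine integral_mono (cd_int hn q hq _ hqC x k) (iq.const_mul _) fun y => ?_
    have h1 := cd_nonneg x y
    have h2 := cd_le_two x y
    have h3 := hq0 y
    simp only
    gcongr
  have hM0 : 0 < M := pos_of_mul_pos_right ((hv0 0).trans_le (hvM 0)) (by positivity)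
  have hτ0 := tauS_pos n k hk α
  set c0 := (tauS n k α / 2) ^ k with hc0
  have hc0p : 0 < c0 := by positivity
  have hlow : ∀ x, c0 * M ≤ v x := fun x => by
    rw [hq' x]
    refine lower_of_spread hn k hk γ hγ q hq hq0 _ hqC x _ hτ0 ?_
    exact spread hn k hk γ hγ α hα hB ε hε hor u hud lo hi hlo hb hu q rfl hq _ hqC hq0 hM0 x
  -- the sup estimate
  have irho : ∀ x : EE n, Integrable fun y => cd x y ^ k * rho y ^ (2 * n) := fun x =>
    cd_int hn (fun y => rho y ^ (2 * n)) (hρ.pow _) 1 (fun y => by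
      rw [one_mul, abs_of_pos (pow_pos (rho_pos y) _)]) x k
  set z := c0 * M with hz
  have hz0 : 0 < z := by positivity
  have hbdd : BddAbove (Set.range v) := ⟨hi, by rintro _ ⟨y, rfl⟩; exact (hb y).2⟩
  set S := ⨆ y, v y with hS
  have hvS : ∀ y, v y ≤ S := fun y => le_ciSup hbdd y
  have hupper : ∀ x, v x ≤ ε * S + z ^ (-α) := fun x => by
    have : γ * ∫ y, cd x y ^ k * q y ≤
        γ * ∫ y, (ε * S + z ^ (-α)) * (cd x y ^ k * rho y ^ (2 * n)) := by
      refine mul_le_mul_of_nonneg_left ?_ hγ.le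
      refine integral_mono (cd_int hn q hq _ hqC x k) ((irho x).const_mul _) fun y => ?_
      have h1 := cd_nonneg x y
      have h3 := rho_pos y
      have h4 : v y ^ (-α) ≤ z ^ (-α) :=
        Real.rpow_le_rpow_of_nonpos hz0 (hlow y) (by linarith)
      have h5 : ε * v y ≤ ε * S := mul_le_mul_of_nonneg_left (hvS y) hε
      have h6 : cd x y ^ k * rho y ^ (2 * n) * (ε * v y + v y ^ (-α)) ≤
          cd x y ^ k * rho y ^ (2 * n) * (ε * S + z ^ (-α)) :=
        mul_le_mul_of_nonneg_left (by linarith) (by positivity)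
      simp only [hqd]
      linarith
    rw [← hq' x, integral_const_mul, mul_left_comm, hγ1 x, mul_one] at this
    exact this
  have hS1 : S ≤ ε * S + z ^ (-α) := ciSup_le hupper
  have hzS : z ≤ S := (hlow 0).trans (hvS 0)
  have hε1 : 0 < 1 - εs := by linarith
  have hzle : z ≤ 1 / (1 - εs) := by
    by_contra! hcon
    have h1 : 1 < z * (1 - εs) := by rwa [div_lt_iff₀ hε1] at hcon
    have hz1 : 1 ≤ z := by
      have : 0 < εs := by linarith
      nlinarith
    have h2 : z ^ (-α) ≤ 1 := Real.rpow_le_one_of_one_le_of_nonpos hz1 (by linarith)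
    have h3 : z * (1 - εs) ≤ S * (1 - ε) := by
      have : 0 ≤ S := by linarith
      gcongr
    linarith
  have hUU : UU n k α εs = 2 ^ k * (1 / (1 - εs)) / c0 := rfl
  have hU0 := UU_pos n k hk α εs hεs
  have hvU : ∀ x, v x ≤ UU n k α εs := fun x => by
    refine (hvM x).trans ?_
    rw [hUU, le_div_iff₀ hc0p]
    calc 2 ^ k * M * c0 = 2 ^ k * z := by rw [hz]; ring
      _ ≤ _ := by gcongr
  refine ⟨?_, hvU x⟩
  have : γ * ∫ y, UU n k α εs ^ (-α) * (cd x y ^ k * rho y ^ (2 * n)) ≤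
      γ * ∫ y, cd x y ^ k * q y := by
    refine mul_le_mul_of_nonneg_left ?_ hγ.le
    refine integral_mono ((irho x).const_mul _) (cd_int hn q hq _ hqC x k) fun y => ?_
    have h1 := cd_nonneg x y
    have h3 := rho_pos y
    have h4 : UU n k α εs ^ (-α) ≤ v y ^ (-α) :=
      Real.rpow_le_rpow_of_nonpos (hv0 y) (hvU y) (by linarith)
    have h5 : 0 ≤ ε * v y := mul_nonneg hε (hv0 y).le
    have h6 : cd x y ^ k * rho y ^ (2 * n) * (UU n k α εs ^ (-α)) ≤
        cd x y ^ k * rho y ^ (2 * n) * (ε * v y + v y ^ (-α)) :=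
      mul_le_mul_of_nonneg_left (by linarith) (by positivity)
    simp only [hqd]
    linarith
  rw [← hq' x, integral_const_mul, mul_left_comm, hγ1 x, mul_one] at this
  exact this

lemma rho_sq_rpow (x : EE n) (r : ℝ) : (2 / (1 + ‖x‖ ^ 2)) ^ r = rho x ^ (2 * r) := by
  rw [← rho_sq, ← Real.rpow_natCast, ← Real.rpow_mul (rho_pos x).le]
  norm_num

lemma sphF_eq (m k : ℕ) (hk : 2 * m = n + k) (ε α : ℝ) (u : EE n → ℝ) (hu : ∀ x, 0 < u x)
    (x : EE n) :
    sphF n m ε α u x = rho x ^ (2 * n + k) *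
      (fun t : ℝ => ε * t + t ^ (-α)) (rho x ^ k * u x) := by
  have hp := rho_pos x
  have hkR : 2 * (m : ℝ) = n + k := by exact_mod_cast hk
  unfold sphF
  simp only
  rw [rho_sq_rpow, ← rho_sq, Real.mul_rpow (by positivity) (hu x).le, hk,
    ← Real.rpow_natCast (rho x) k, ← Real.rpow_mul hp.le]
  have e1 : rho x ^ (2 * (((n : ℝ) + 2 * m) / 2 + α * ((n : ℝ) - 2 * m) / 2)) =
      rho x ^ (2 * n + k) * rho x ^ ((k : ℝ) * -α) := by
    rw [← Real.rpow_natCast, ← Real.rpow_add hp]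
    congr 1
    push_cast
    rw [hkR]; ring
  rw [e1, Real.rpow_natCast]
  ring

lemma rho_D (x : EE n) (k : ℕ) :
    rho x ^ k * (1 + ‖x‖ ^ 2) ^ ((k : ℝ) / 2) = 2 ^ ((k : ℝ) / 2) := by
  have h := Real.mul_rpow (z := (k : ℝ) / 2) (by positivity : 0 ≤ rho x ^ 2)
    (by positivity : 0 ≤ 1 + ‖x‖ ^ 2)
  rw [rho_sq_mul x] at h
  rw [h]
  congr 1
  rw [← Real.rpow_natCast (rho x) 2, ← Real.rpow_mul (rho_pos x).le, ← Real.rpow_natCast]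
  congr 1
  push_cast; ring

lemma half_D (x : EE n) (k : ℕ) : ((1 + ‖x‖ ^ 2) / 2) ^ ((k : ℝ) / 2) = (rho x ^ k)⁻¹ := by
  have h := rho_D x k
  rw [Real.div_rpow (by positivity) (by norm_num), ← h]
  have h1 : (0 : ℝ) < (1 + ‖x‖ ^ 2) ^ ((k : ℝ) / 2) := by positivity
  have h2 := rho_pos x
  field_simp

lemma full (m : ℕ) (hn : 3 ≤ n) (hmn : n < 2 * m) (εs : ℝ) (hεs1 : εs < 1)
    (α : ℝ) (hα0 : 0 < α) (hαc : α ≤ (2 * (m : ℝ) + n) / (2 * (m : ℝ) - n))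
    (γ : ℝ) (hγ : 0 < γ)
    (hγeq : ∀ x : EuclideanSpace ℝ (Fin n),
      ((1 + ‖x‖ ^ 2) / 2) ^ ((2 * (m : ℝ) - n) / 2) =
        γ * ∫ y, ‖x - y‖ ^ (2 * m - n) * (2 / (1 + ‖y‖ ^ 2)) ^ (((n : ℝ) + 2 * m) / 2)) :
    ∃ C : ℝ, 0 < C ∧
      (∀ ε : ℝ, 0 ≤ ε → ε < εs → (0 < ε ∨ α < (2 * (m : ℝ) + n) / (2 * (m : ℝ) - n)) →
        ∀ u : EuclideanSpace ℝ (Fin n) → ℝ, ContDiff ℝ (⊤ : ℕ∞) u → (∀ x, 0 < u x) →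
        (∃ c : ℝ, 0 < c ∧ ∀ x,
          c⁻¹ * (1 + ‖x‖ ^ 2) ^ ((2 * (m : ℝ) - n) / 2) ≤ u x ∧
            u x ≤ c * (1 + ‖x‖ ^ 2) ^ ((2 * (m : ℝ) - n) / 2)) →
        (∀ x, u x = γ * ∫ y, ‖x - y‖ ^ (2 * m - n) * sphF n m ε α u y) →
        ∀ x : EuclideanSpace ℝ (Fin n),
          C⁻¹ * (1 + ‖x‖ ^ 2) ^ ((2 * (m : ℝ) - n) / 2) ≤ u x ∧
            u x ≤ C * (1 + ‖x‖ ^ 2) ^ ((2 * (m : ℝ) - n) / 2)) := by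
  obtain ⟨k, hk⟩ : ∃ k, 2 * m = n + k := ⟨2 * m - n, by omega⟩
  have hk1 : 1 ≤ k := by omega
  have hkn : 2 * m - n = k := by omega
  have hkR : 2 * (m : ℝ) = n + k := by exact_mod_cast hk
  have hkd : 2 * (m : ℝ) - n = k := by linarith
  have hk0 : (0 : ℝ) < k := by exact_mod_cast hk1
  rw [hkd] at hαc hγeq ⊢
  rw [hkn] at hγeq ⊢
  have hγ1 : ∀ x : EE n, γ * ∫ y, cd x y ^ k * rho y ^ (2 * n) = 1 := fun x => by
    have h := v_eq (n := n) k γ (fun _ => 1) (fun x => (rho x ^ k)⁻¹) (fun x => by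
      rw [← half_D, hγeq x]
      congr 2; ext y
      rw [rho_sq_rpow, mul_one, ← Real.rpow_natCast (rho y)]
      congr 2
      push_cast; rw [hkR]; ring) x
    simp only [mul_one] at h
    rw [← h, mul_inv_cancel₀ (pow_pos (rho_pos x) k).ne']
  set U := UU n k α εs with hUd
  have hU : 0 < U := UU_pos n k hk1 α εs hεs1
  set s : ℝ := 2 ^ ((k : ℝ) / 2) with hs
  have hs1 : 1 ≤ s := Real.one_le_rpow (by norm_num) (by positivity)
  have hs0 : 0 < s := by linarith
  have hUα : 0 < U ^ α := by positivity
  refine ⟨s * U ^ α + U, by positivity, ?_⟩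
  intro ε hε hes hor u hud hu0 ⟨c, hc, hcb⟩ hu x
  have hB : 0 ≤ (n : ℝ) + k / 2 - α * k / 2 := by
    rw [le_div_iff₀ hk0, hkR] at hαc
    linarith
  have hor' : 0 < ε ∨ 0 < (n : ℝ) + k / 2 - α * k / 2 := by
    rcases hor with h | h
    · exact Or.inl h
    · right
      rw [lt_div_iff₀ hk0, hkR] at h
      linarith
  have hb : ∀ x, c⁻¹ * s ≤ rho x ^ k * u x ∧ rho x ^ k * u x ≤ c * s := fun x => by
    have hp : 0 < rho x ^ k := pow_pos (rho_pos x) k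
    have h1 := mul_le_mul_of_nonneg_left (hcb x).1 hp.le
    have h2 := mul_le_mul_of_nonneg_left (hcb x).2 hp.le
    rw [mul_left_comm, rho_D] at h1 h2
    exact ⟨h1, h2⟩
  have hu' : ∀ x, u x = γ * ∫ y, ‖x - y‖ ^ k * (rho y ^ (2 * n + k) *
      (fun t : ℝ => ε * t + t ^ (-α)) (rho y ^ k * u y)) := fun x => by
    rw [hu x]
    congr 2; ext y
    rw [sphF_eq m k hk ε α u hu0 y]
  obtain ⟨h1, h2⟩ := core hn k hk1 γ hγ α hα0 hB ε εs hε hes hεs1 hor' hγ1 u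
    (hud.of_le (by exact_mod_cast le_top)) (c⁻¹ * s) (c * s) (by positivity) hb hu' x
  have hp : 0 < rho x ^ k := pow_pos (rho_pos x) k
  have hD := rho_D x k
  constructor
  · refine le_of_mul_le_mul_left ?_ hp
    rw [mul_left_comm, hD]
    refine le_trans ?_ h1
    rw [Real.rpow_neg hU.le, inv_mul_le_iff₀ (by positivity), ← div_eq_mul_inv,
      le_div_iff₀ hUα]
    linarith
  · refine le_of_mul_le_mul_left ?_ hp
    rw [mul_left_comm, hD]
    refine h2.trans ?_
    have : 0 ≤ s * U ^ α * s := by positivity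
    nlinarith

end Sph14
/-- Compactness: for fixed `ε^* ∈ (0,1)` and `α ∈ (0,(2m+n)/(2m−n)]` there is a
constant `C > 0` such that any positive smooth solution of
`u(x) = γ ∫ |x−y|^{2m−n} F_{ε,u}(y) dy` with `ε ∈ (0, ε^*)` (or `ε ∈ [0, ε^*)` if
`α` is subcritical) and growth `u ≍ (1+|x|²)^{(2m−n)/2}` satisfies the uniform
bounds `C⁻¹(1+|x|²)^{(2m−n)/2} ≤ u ≤ C(1+|x|²)^{(2m−n)/2}`. -/
theorem stmt14 (n m : ℕ) (hn : 3 ≤ n) (hodd : Odd n) (hmn : n < 2 * m)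
    (εs : ℝ) (hεs0 : 0 < εs) (hεs1 : εs < 1)
    (α : ℝ) (hα0 : 0 < α) (hαc : α ≤ (2 * (m : ℝ) + n) / (2 * (m : ℝ) - n))
    (γ : ℝ) (hγ : 0 < γ)
    (hγeq : ∀ x : EuclideanSpace ℝ (Fin n),
      ((1 + ‖x‖ ^ 2) / 2) ^ ((2 * (m : ℝ) - n) / 2) =
        γ * ∫ y, ‖x - y‖ ^ (2 * m - n) * (2 / (1 + ‖y‖ ^ 2)) ^ (((n : ℝ) + 2 * m) / 2)) :
    ∃ C : ℝ, 0 < C ∧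
      (∀ ε : ℝ, 0 < ε → ε < εs →
        ∀ u : EuclideanSpace ℝ (Fin n) → ℝ, ContDiff ℝ (⊤ : ℕ∞) u → (∀ x, 0 < u x) →
        (∃ c : ℝ, 0 < c ∧ ∀ x,
          c⁻¹ * (1 + ‖x‖ ^ 2) ^ ((2 * (m : ℝ) - n) / 2) ≤ u x ∧
            u x ≤ c * (1 + ‖x‖ ^ 2) ^ ((2 * (m : ℝ) - n) / 2)) →
        (∀ x, u x = γ * ∫ y, ‖x - y‖ ^ (2 * m - n) * sphF n m ε α u y) →
        ∀ x : EuclideanSpace ℝ (Fin n),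
          C⁻¹ * (1 + ‖x‖ ^ 2) ^ ((2 * (m : ℝ) - n) / 2) ≤ u x ∧
            u x ≤ C * (1 + ‖x‖ ^ 2) ^ ((2 * (m : ℝ) - n) / 2)) ∧
      (α < (2 * (m : ℝ) + n) / (2 * (m : ℝ) - n) →
        ∀ ε : ℝ, 0 ≤ ε → ε < εs →
        ∀ u : EuclideanSpace ℝ (Fin n) → ℝ, ContDiff ℝ (⊤ : ℕ∞) u → (∀ x, 0 < u x) →
        (∃ c : ℝ, 0 < c ∧ ∀ x,
          c⁻¹ * (1 + ‖x‖ ^ 2) ^ ((2 * (m : ℝ) - n) / 2) ≤ u x ∧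
            u x ≤ c * (1 + ‖x‖ ^ 2) ^ ((2 * (m : ℝ) - n) / 2)) →
        (∀ x, u x = γ * ∫ y, ‖x - y‖ ^ (2 * m - n) * sphF n m ε α u y) →
        ∀ x : EuclideanSpace ℝ (Fin n),
          C⁻¹ * (1 + ‖x‖ ^ 2) ^ ((2 * (m : ℝ) - n) / 2) ≤ u x ∧
            u x ≤ C * (1 + ‖x‖ ^ 2) ^ ((2 * (m : ℝ) - n) / 2)) := by
  obtain ⟨C, hC, h⟩ := Sph14.full m hn hmn εs hεs1 α hα0 hαc γ hγ hγeq
  exact ⟨C, hC, fun ε h0 h1 => h ε h0.le h1 (Or.inl h0), fun hs ε h0 h1 => h ε h0 h1 (Or.inr hs)⟩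
end
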